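/- Let t ∈ ℤ with t ∉ {−8, −3, 0, 5}. The solutions (x,y) ∈ ℤ × ℤ of the equation F_t^{(6)}(x,y) = ±1 are exactly (±1,0), (0,±1), (1,−1), (−1,1). -/

import Mathlib

/-!
Write `D = t² + 3t + 9`, `λ = t + 3 + 3ω ∈ ℤ[ω]`, a factor of `D = λ λ̄`, and let
`A = x³ - t x² y - (t + 3) x y² - y³`, `B = xy(x + y)`. Then `F_t(x, y) = A² - D B²` and
`A + λ B = (x + y + yω)³` (`F6_eq`, `F6_forces`). The value `-1` is impossible modulo `4`. For the value
`1`, the pair `(A, B)` solves a Pell equation and `δ = A + λ B` is a cube in `ℤ[ω]`; the solutions with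
`B = 0` are the trivial ones. By the symmetry `t ↦ -3 - t` it remains to show for `t ≥ -1`,
`t ≠ 0, 5`, that such a cube forces `B = 0`; this is `NoCube t`.

*Hypergeometric method.* If `δ = β³`, then for `η = β̄²` the coefficient of `ω` in `λ η³` is `3`
(`im_pow`), so `η` points almost in the direction of a cube root of `λ̄`. The polynomials
`P_r(x, y) = ∑ binom(r + 1/3, i) binom(r - 1/3, j) x^i y^j` provide at `(λ̄, λ)` a dense family of
approximations to the same direction: the remainder is an integral (`intJ_eq`), the values are
Eisenstein integers with a large common factor `content r` (`padeP_content`, `content_growth_dvd`), and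
two consecutive ones are never both proportional to `η` (`pade_nonvanish`). Comparison with `η` gives
`main_ineq`. For `t ≥ 61` this excludes all `η` (`uniform_no`).

*Small parameters.* For `-1 ≤ t ≤ 60` let `b` be the fundamental solution of the Pell equation, so
`δ` belongs to `± b^k`. A sieve modulo primes shows that `k` is divisible by some `K` (`sieveK_spec`).
For 46 parameters the exponents `k ≠ 0` are then excluded by cubic residue symbols: modulo the first
coordinate of `b^(2^i c)` the element `δ(b^k)` agrees up to sign with `δ(b^c)` for suitable `c`, and by
cubic reciprocity, proved here with Jacobi and Gauss sums (`Cubic.recip`, `exists_symbol`), an explicit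
integer would have trivial symbol modulo `δ(b^c)` (`two_power`). For the other 14 parameters `K` is so
large that `η` has enormous norm, and the hypergeometric method applies with `λ` replaced by
`ξ = w λ / σ³` (or its conjugate) with `ξ` close to the real axis (`arch`). The finite checks are
evaluated by the kernel.
-/

/-- The simplest sextic binary form
`F_t^{(6)}(x,y) = x^6 - 2t x^5 y - (5t+15) x^4 y^2 - 20 x^3 y^3 + 5t x^2 y^4 + (2t+6) x y^5 + y^6`. -/
def F6 {R : Type*} [CommRing R] (t : ℤ) (x y : R) : R :=
  x ^ 6 - 2 * (t : R) * x ^ 5 * y - (5 * (t : R) + 15) * x ^ 4 * y ^ 2 - 20 * x ^ 3 * y ^ 3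
    + 5 * (t : R) * x ^ 2 * y ^ 4 + (2 * (t : R) + 6) * x * y ^ 5 + y ^ 6

section

open Finset

/-! ### Padé polynomials and their recurrence -/

/-- `∏_{m=1}^n (m + 1/3)`. -/
def gProd (K : Type*) [Field K] (n : ℕ) : K := ∏ m ∈ range n, ((m : K) + 1 + 1 / 3)

/-- `∏_{m=1}^n (m - 1/3)`. -/
def hProd (K : Type*) [Field K] (n : ℕ) : K := ∏ m ∈ range n, ((m : K) + 1 - 1 / 3)

/-- The Padé-type polynomial
`P_r(x, y) = ∑_{i+j=r} binom(r + 1/3, i) binom(r - 1/3, j) x^i y^j`, written with products. -/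
def padeP {K : Type*} [Field K] (x y : K) (r : ℕ) : K :=
  ∑ p ∈ antidiagonal r, gProd K r * hProd K r /
    (gProd K p.2 * hProd K p.1 * (p.1.factorial : K) * (p.2.factorial : K)) * x ^ p.1 * y ^ p.2

section
variable {K : Type*} [Field K] [CharZero K]
set_option linter.unusedSectionVars false

lemma gProd_succ (n : ℕ) : gProd K (n + 1) = gProd K n * ((n : K) + 1 + 1 / 3) := by
  simp [gProd, prod_range_succ]

lemma hProd_succ (n : ℕ) : hProd K (n + 1) = hProd K n * ((n : K) + 1 - 1 / 3) := by
  simp [hProd, prod_range_succ]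

lemma g_factor_ne (n : ℕ) : ((n : K) + 1 + 1 / 3) ≠ 0 := by
  have : ((3 * n + 4 : ℕ) : K) ≠ 0 := Nat.cast_ne_zero.2 (by omega)
  intro h
  apply this
  push_cast
  linear_combination 3 * h

lemma h_factor_ne (n : ℕ) : ((n : K) + 1 - 1 / 3) ≠ 0 := by
  have : ((3 * n + 2 : ℕ) : K) ≠ 0 := Nat.cast_ne_zero.2 (by omega)
  intro h
  apply this
  push_cast
  linear_combination 3 * h

lemma gProd_ne (n : ℕ) : gProd K n ≠ 0 := prod_ne_zero_iff.2 fun m _ => g_factor_ne m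
lemma hProd_ne (n : ℕ) : hProd K n ≠ 0 := prod_ne_zero_iff.2 fun m _ => h_factor_ne m

/-- The normalised sum `P_r / (∏ (m + 1/3) (m - 1/3))`. -/
def sSum {K : Type*} [Field K] (x y : K) (r : ℕ) : K :=
  ∑ p ∈ antidiagonal r, (x ^ p.1 / (hProd K p.1 * (p.1.factorial : K))) *
    (y ^ p.2 / (gProd K p.2 * (p.2.factorial : K)))

lemma padeP_eq (x y : K) (r : ℕ) : padeP x y r = gProd K r * hProd K r * sSum x y r := by
  unfold padeP sSum
  rw [mul_sum]
  refine sum_congr rfl fun p _ => ?_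
  have := gProd_ne (K := K) p.2
  have := hProd_ne (K := K) p.1
  have : (p.1.factorial : K) ≠ 0 := by exact_mod_cast p.1.factorial_ne_zero
  have : (p.2.factorial : K) ≠ 0 := by exact_mod_cast p.2.factorial_ne_zero
  field_simp

/-- In a convolution `∑ u_i v_j` the weight `i (i - 1/3)`, matching the recursion of `u`, amounts to
a factor `x` and a shift of the index; `w` is a further weight. -/
lemma conv_shift_left (u v : ℕ → K) (x : K) (w : ℕ → ℕ → K)
    (hu : ∀ i : ℕ, ((i : K) + 1) * ((i : K) + 1 - 1 / 3) * u (i + 1) = x * u i) (r : ℕ) :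
    ∑ p ∈ antidiagonal (r + 1), (p.1 : K) * ((p.1 : K) - 1 / 3) * w p.1 p.2 * (u p.1 * v p.2) =
      x * ∑ p ∈ antidiagonal r, w (p.1 + 1) p.2 * (u p.1 * v p.2) := by
  rw [Nat.sum_antidiagonal_succ, mul_sum]
  simp only [Nat.cast_zero, zero_mul, zero_add]
  refine sum_congr rfl fun p _ => ?_
  push_cast
  linear_combination w (p.1 + 1) p.2 * v p.2 * hu p.1

lemma conv_shift_right (u v : ℕ → K) (y : K) (w : ℕ → ℕ → K)
    (hv : ∀ i : ℕ, ((i : K) + 1) * ((i : K) + 1 + 1 / 3) * v (i + 1) = y * v i) (r : ℕ) :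
    ∑ p ∈ antidiagonal (r + 1), (p.2 : K) * ((p.2 : K) + 1 / 3) * w p.1 p.2 * (u p.1 * v p.2) =
      y * ∑ p ∈ antidiagonal r, w p.1 (p.2 + 1) * (u p.1 * v p.2) := by
  rw [Nat.sum_antidiagonal_succ', mul_sum]
  simp only [Nat.cast_zero, zero_mul, add_zero, zero_add]
  refine sum_congr rfl fun p _ => ?_
  push_cast
  linear_combination w p.1 (p.2 + 1) * u p.1 * hv p.2

/-- The three-term recurrence of the normalised sums. Multiplication by `x` or `y` is a weighted index
shift, so the claim becomes a polynomial identity in the indices for each single term. -/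
lemma sSum_rec (x y : K) (r : ℕ) :
    ((r : K) + 2) * (r + 1) * ((r + 2) ^ 2 - 1 / 9) * sSum x y (r + 2) =
      (2 * r + 3) * (r + 1) * (x + y) * sSum x y (r + 1) - (x - y) ^ 2 * sSum x y r := by
  set u : ℕ → K := fun i => x ^ i / (hProd K i * (i.factorial : K)) with hu
  set v : ℕ → K := fun i => y ^ i / (gProd K i * (i.factorial : K)) with hv
  have hS : ∀ n, sSum x y n = ∑ p ∈ antidiagonal n, u p.1 * v p.2 := fun n => rfl
  have Hu : ∀ i : ℕ, ((i : K) + 1) * ((i : K) + 1 - 1 / 3) * u (i + 1) = x * u i := by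
    intro i
    have h1 := hProd_ne (K := K) i
    have h2 : (i.factorial : K) ≠ 0 := by exact_mod_cast i.factorial_ne_zero
    have h3 : ((i : K) + 1) ≠ 0 := by exact_mod_cast i.succ_ne_zero
    have h4 := h_factor_ne (K := K) i
    simp only [hu, hProd_succ, Nat.factorial_succ]
    push_cast
    rw [mul_div_assoc', mul_div_assoc', div_eq_div_iff
      (mul_ne_zero (mul_ne_zero h1 h4) (mul_ne_zero h3 h2)) (mul_ne_zero h1 h2)]
    ring
  have Hv : ∀ i : ℕ, ((i : K) + 1) * ((i : K) + 1 + 1 / 3) * v (i + 1) = y * v i := by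
    intro i
    have h1 := gProd_ne (K := K) i
    have h2 : (i.factorial : K) ≠ 0 := by exact_mod_cast i.factorial_ne_zero
    have h3 : ((i : K) + 1) ≠ 0 := by exact_mod_cast i.succ_ne_zero
    have h4 := g_factor_ne (K := K) i
    simp only [hv, gProd_succ, Nat.factorial_succ]
    push_cast
    rw [mul_div_assoc', mul_div_assoc', div_eq_div_iff
      (mul_ne_zero (mul_ne_zero h1 h4) (mul_ne_zero h3 h2)) (mul_ne_zero h1 h2)]
    ring
  have ex := conv_shift_left u v x (fun _ _ => 1) Hu (r + 1)
  have ey := conv_shift_right u v y (fun _ _ => 1) Hv (r + 1)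
  have exx := conv_shift_left u v x (fun i _ => ((i : K) - 1) * ((i : K) - 1 - 1 / 3)) Hu (r + 1)
  have exx' := conv_shift_left u v x (fun _ _ => 1) Hu r
  have eyy := conv_shift_right u v y (fun _ i => ((i : K) - 1) * ((i : K) - 1 + 1 / 3)) Hv (r + 1)
  have eyy' := conv_shift_right u v y (fun _ _ => 1) Hv r
  have exy := conv_shift_left u v x (fun _ j => (j : K) * ((j : K) + 1 / 3)) Hu (r + 1)
  simp only [one_mul, mul_one, Nat.cast_add, Nat.cast_one, add_sub_cancel_right]
    at ex ey exx exx' eyy eyy' exy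
  rw [exx'] at exx
  rw [eyy'] at eyy exy
  rw [← hS] at ex ey exx eyy exy
  have key : ∑ p ∈ antidiagonal (r + 1 + 1),
      (((r : K) + 2) * (r + 1) * ((r + 2) ^ 2 - 1 / 9) -
        (2 * r + 3) * (r + 1) * ((p.1 : K) * ((p.1 : K) - 1 / 3) + (p.2 : K) * ((p.2 : K) + 1 / 3))
        + (p.1 : K) * ((p.1 : K) - 1 / 3) * (((p.1 : K) - 1) * ((p.1 : K) - 1 - 1 / 3))
        + (p.2 : K) * ((p.2 : K) + 1 / 3) * (((p.2 : K) - 1) * ((p.2 : K) - 1 + 1 / 3))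
        - 2 * ((p.1 : K) * ((p.1 : K) - 1 / 3) * ((p.2 : K) * ((p.2 : K) + 1 / 3))))
      * (u p.1 * v p.2) = 0 := by
    refine sum_eq_zero fun p hp => ?_
    have hp' : (p.1 : K) + p.2 = r + 2 := by
      have := mem_antidiagonal.1 hp
      have h2 : ((p.1 + p.2 : ℕ) : K) = ((r + 1 + 1 : ℕ) : K) := by rw [this]
      push_cast at h2
      linear_combination h2
    have hr : (r : K) = p.1 + p.2 - 2 := by linear_combination -hp'
    rw [hr]
    ring
  have split : ∀ (c d : K) (a b e f g T : ℕ × ℕ → K),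
      ∑ p ∈ antidiagonal (r + 1 + 1), (c - d * (a p + b p) + e p + f p - 2 * g p) * T p =
      c * ∑ p ∈ antidiagonal (r + 1 + 1), T p - d * (∑ p ∈ antidiagonal (r + 1 + 1), a p * T p +
        ∑ p ∈ antidiagonal (r + 1 + 1), b p * T p) + ∑ p ∈ antidiagonal (r + 1 + 1), e p * T p +
        ∑ p ∈ antidiagonal (r + 1 + 1), f p * T p
        - 2 * ∑ p ∈ antidiagonal (r + 1 + 1), g p * T p := by
    intro c d a b e f g T
    simp only [mul_sum, ← sum_add_distrib, ← sum_sub_distrib]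
    exact sum_congr rfl fun p _ => by ring
  rw [split, ex, ey, exx, eyy, exy] at key
  rw [hS (r + 2)]
  linear_combination key

end

/-! ### Binomial form of the Padé polynomials -/

section
variable {K : Type*} [Field K] [CharZero K]
set_option linter.unusedSectionVars false

lemma factorial_mul_choose (a : K) (i : ℕ) :
    (i.factorial : K) * Ring.choose a i = ∏ m ∈ range i, (a - m) := by
  rw [Ring.choose_eq_smul, smul_eq_mul, mul_inv_cancel_left₀
    (by exact_mod_cast i.factorial_ne_zero)]
  induction i with
  | zero => simp
  | succ n ih =>
    rw [prod_range_succ, ← ih, descPochhammer_succ_right, Polynomial.smeval_mul]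
    simp [Polynomial.smeval_sub, Polynomial.smeval_natCast]

lemma gProd_mul_prod (i j : ℕ) :
    gProd K j * ∏ m ∈ range i, (((i + j : ℕ) : K) + 1 / 3 - m) = gProd K (i + j) := by
  induction i with
  | zero => simp
  | succ n ih =>
    rw [prod_range_succ', show n + 1 + j = (n + j) + 1 by ring, gProd_succ, ← ih]
    have : ∀ m ∈ range n, (((n + j + 1 : ℕ) : K) + 1 / 3 - (m + 1 : ℕ)) =
        ((n + j : ℕ) : K) + 1 / 3 - m := fun m _ => by push_cast; ring
    rw [prod_congr rfl this]
    push_cast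
    ring

lemma hProd_mul_prod (i j : ℕ) :
    hProd K i * ∏ m ∈ range j, (((i + j : ℕ) : K) - 1 / 3 - m) = hProd K (i + j) := by
  induction j with
  | zero => simp
  | succ n ih =>
    rw [prod_range_succ', show i + (n + 1) = (i + n) + 1 by ring, hProd_succ, ← ih]
    have : ∀ m ∈ range n, (((i + n + 1 : ℕ) : K) - 1 / 3 - (m + 1 : ℕ)) =
        ((i + n : ℕ) : K) - 1 / 3 - m := fun m _ => by push_cast; ring
    rw [prod_congr rfl this]
    push_cast
    ring

lemma padeP_eq_choose (x y : K) (r : ℕ) : padeP x y r =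
    ∑ p ∈ antidiagonal r, Ring.choose ((r : K) + 1 / 3) p.1 * Ring.choose ((r : K) - 1 / 3) p.2 *
      x ^ p.1 * y ^ p.2 := by
  unfold padeP
  refine sum_congr rfl fun p hp => ?_
  have hp := mem_antidiagonal.1 hp
  congr 2
  have h1 := factorial_mul_choose ((r : K) + 1 / 3) p.1
  have h2 := factorial_mul_choose ((r : K) - 1 / 3) p.2
  have h3 := gProd_mul_prod (K := K) p.1 p.2
  have h4 := hProd_mul_prod (K := K) p.1 p.2
  rw [hp] at h3 h4
  rw [← h1] at h3
  rw [← h2] at h4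
  have h5 := gProd_ne (K := K) p.2
  have h6 := hProd_ne (K := K) p.1
  have h7 : (p.1.factorial : K) ≠ 0 := by exact_mod_cast p.1.factorial_ne_zero
  have h8 : (p.2.factorial : K) ≠ 0 := by exact_mod_cast p.2.factorial_ne_zero
  rw [div_eq_iff (by simp [h5, h6, h7, h8]), ← h3, ← h4]
  ring

/-- Expansion of `P_r(x, x + h)` in powers of `h`, by Vandermonde's identity. -/
lemma padeP_expand (x h : K) (r : ℕ) : padeP x (x + h) r =
    ∑ p ∈ antidiagonal r, Ring.choose ((r : K) - 1 / 3) p.1 * ((r + p.2).choose p.2 : K) *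
      h ^ p.1 * x ^ p.2 := by
  rw [padeP_eq_choose]
  have e1 : ∀ p ∈ antidiagonal r, Ring.choose ((r : K) + 1 / 3) p.1 *
      Ring.choose ((r : K) - 1 / 3) p.2 * x ^ p.1 * (x + h) ^ p.2 =
      ∑ q ∈ antidiagonal p.2, Ring.choose ((r : K) + 1 / 3) p.1 *
        (Ring.choose ((r : K) - 1 / 3) q.1 * Ring.choose ((r : K) - 1 / 3 - q.1) q.2) *
        h ^ q.1 * x ^ (p.1 + q.2) := by
    intro p _
    rw [add_comm x h, (Commute.all h x).add_pow', mul_sum]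
    refine sum_congr rfl fun q hq => ?_
    have hq := mem_antidiagonal.1 hq
    have := Ring.choose_smul_choose ((r : K) - 1 / 3) (n := p.2) (k := q.1) (by omega)
    rw [show p.2 - q.1 = q.2 by omega] at this
    rw [← this, nsmul_eq_mul, nsmul_eq_mul]
    ring
  have e2 : ∀ p ∈ antidiagonal r, Ring.choose ((r : K) - 1 / 3) p.1 *
      ((r + p.2).choose p.2 : K) * h ^ p.1 * x ^ p.2 =
      ∑ q ∈ antidiagonal p.2, Ring.choose ((r : K) + 1 / 3) q.1 *
        (Ring.choose ((r : K) - 1 / 3) p.1 * Ring.choose ((r : K) - 1 / 3 - p.1) q.2) *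
        h ^ p.1 * x ^ (q.1 + q.2) := by
    intro p hp
    have hp := mem_antidiagonal.1 hp
    have hv := Ring.add_choose_eq (r := (r : K) + 1 / 3) (s := (r : K) - 1 / 3 - p.1) p.2
      (Commute.all _ _)
    have : (r : K) + 1 / 3 + ((r : K) - 1 / 3 - p.1) = ((r + p.2 : ℕ) : K) := by
      have : (r : K) = p.1 + p.2 := by rw [← hp]; push_cast; ring
      push_cast
      linear_combination this
    rw [this, Ring.choose_natCast] at hv
    rw [hv, mul_sum, sum_mul, sum_mul]
    refine sum_congr rfl fun q hq => ?_
    rw [mem_antidiagonal.1 hq]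
    ring
  rw [sum_congr rfl e1, sum_congr rfl e2, sum_sigma', sum_sigma']
  refine sum_nbij' (fun s => ⟨(s.2.1, s.1.1 + s.2.2), (s.1.1, s.2.2)⟩)
    (fun s => ⟨(s.2.1, s.1.1 + s.2.2), (s.1.1, s.2.2)⟩) ?_ ?_ ?_ ?_ ?_
  · rintro ⟨⟨a, b⟩, c, d⟩ hs
    simp only [mem_sigma, HasAntidiagonal.mem_antidiagonal] at hs ⊢
    exact ⟨by omega, trivial⟩
  · rintro ⟨⟨a, b⟩, c, d⟩ hs
    simp only [mem_sigma, HasAntidiagonal.mem_antidiagonal] at hs ⊢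
    exact ⟨by omega, trivial⟩
  · rintro ⟨⟨a, b⟩, c, d⟩ hs
    simp only [mem_sigma, HasAntidiagonal.mem_antidiagonal] at hs ⊢
    obtain ⟨h1, h2⟩ := hs
    subst h2
    rfl
  · rintro ⟨⟨a, b⟩, c, d⟩ hs
    simp only [mem_sigma, HasAntidiagonal.mem_antidiagonal] at hs ⊢
    obtain ⟨h1, h2⟩ := hs
    subst h2
    rfl
  · rintro ⟨⟨a, b⟩, c, d⟩ hs
    rfl

lemma padeP_one (r : ℕ) : padeP (1 : K) 1 r = ((2 * r).choose r : K) := by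
  have := padeP_expand (1 : K) 0 r
  rw [add_zero] at this
  rw [this, sum_eq_single (0, r)]
  · simp [two_mul]
  · rintro ⟨a, b⟩ hp hne
    have hp := mem_antidiagonal.1 hp
    have : a ≠ 0 := by
      rintro rfl
      apply hne
      simp at hp
      simp [hp]
    simp [this]
  · simp
end

/-! ### Eisenstein integers -/

/-- The Eisenstein integers `ℤ[ω]`, `ω² = -1 - ω`; `⟨a, b⟩` stands for `a + b ω`. -/
abbrev Eis : Type := QuadraticAlgebra ℤ (-1) (-1)

namespace Eis

@[simp] lemma one_re : (1 : Eis).re = 1 := rfl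
@[simp] lemma one_im : (1 : Eis).im = 0 := rfl
@[simp] lemma zero_re : (0 : Eis).re = 0 := rfl
@[simp] lemma zero_im : (0 : Eis).im = 0 := rfl

/-- The cube root of unity `ω`. -/
def om : Eis := ⟨0, 1⟩

/-- The square root `1 + 2ω` of `-3`. -/
def th : Eis := ⟨1, 2⟩

lemma om_sq : om * om = -1 - om := by
  ext <;> rfl

lemma om_cube : om ^ 3 = 1 := by
  have := om_sq
  linear_combination (om - 1) * this

lemma th_sq : th ^ 2 = -3 := by
  have : th * th = -3 := by ext <;> rfl
  rw [sq, this]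

lemma eq_mk (z : Eis) : z = (z.re : Eis) + (z.im : Eis) * om := by
  ext <;> simp [om]

/-- The norm `a² - ab + b²`. -/
abbrev nm : Eis →* ℤ := QuadraticAlgebra.norm

lemma normDef (z : Eis) : nm z = z.re ^ 2 - z.re * z.im + z.im ^ 2 := by
  rw [nm, QuadraticAlgebra.norm_def]; ring

lemma mul_star_self (z : Eis) : z * star z = ((nm z : ℤ) : Eis) := by
  rw [normDef]
  ext
  · rw [QuadraticAlgebra.re_intCast]; simp; ring
  · rw [QuadraticAlgebra.im_intCast]; simp; ring

lemma norm_nonneg (z : Eis) : 0 ≤ nm z := by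
  rw [normDef]; nlinarith [sq_nonneg (z.re - z.im), sq_nonneg (z.re + z.im)]

lemma norm_eq_zero {z : Eis} (h : nm z = 0) : z = 0 := by
  rw [normDef] at h
  have h1 : z.re = 0 := by nlinarith [sq_nonneg (z.re - z.im), sq_nonneg (z.re + z.im), sq_nonneg (z.re - 2 * z.im)]
  have h2 : z.im = 0 := by rw [h1] at h; simpa using h
  ext <;> simp [h1, h2]

instance : IsDomain Eis := by
  have : NoZeroDivisors Eis := ⟨by
    intro a b h
    have : nm a * nm b = 0 := by
      rw [← map_mul, h, QuadraticAlgebra.norm_zero]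
    rcases mul_eq_zero.1 this with h | h
    · exact Or.inl (norm_eq_zero h)
    · exact Or.inr (norm_eq_zero h)⟩
  exact NoZeroDivisors.to_isDomain _

/-- The ring homomorphism `ℤ[ω] → A` given by a root `u` of `u² = -1 - u`. -/
def hom {A : Type*} [CommRing A] (u : A) (hu : u * u = -1 - u) : Eis →+* A where
  toFun z := (z.re : A) + (z.im : A) * u
  map_one' := by simp
  map_zero' := by simp only [zero_re, zero_im]; simp
  map_add' x y := by simp; ring
  map_mul' x y := by
    simp
    linear_combination (-(x.im : A) * y.im) * hu

lemma hom_apply {A : Type*} [CommRing A] (u : A) (hu : u * u = -1 - u) (z : Eis) :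
    hom u hu z = (z.re : A) + (z.im : A) * u := rfl

lemma map_eq {A : Type*} [CommRing A] (f : Eis →+* A) (z : Eis) :
    f z = (z.re : A) + (z.im : A) * f om := by
  conv_lhs => rw [eq_mk z]
  simp

lemma star_eq (z : Eis) : star z = (z.re : Eis) + (z.im : Eis) * om ^ 2 := by
  rw [sq, om_sq]
  ext <;> simp [om]

lemma dvd_int_iff (n : ℤ) (z : Eis) : (n : Eis) ∣ z ↔ n ∣ z.re ∧ n ∣ z.im := by
  constructor
  · rintro ⟨w, rfl⟩
    simp
  · rintro ⟨⟨a, ha⟩, b, hb⟩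
    exact ⟨⟨a, b⟩, by ext <;> simp [ha, hb]⟩

/-- The complex cube root of unity `(-1 + √-3)/2`. -/
noncomputable def cw : ℂ := ⟨-1 / 2, Real.sqrt 3 / 2⟩

lemma cw_sq : cw * cw = -1 - cw := by
  have h := Real.mul_self_sqrt (show (0 : ℝ) ≤ 3 by norm_num)
  apply Complex.ext
  · simp [cw]; linarith
  · simp [cw]; ring

/-- The standard embedding `ℤ[ω] → ℂ`. -/
noncomputable def toC : Eis →+* ℂ := hom cw cw_sq

lemma toC_re (z : Eis) : (toC z).re = z.re - z.im / 2 := by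
  simp [toC, hom_apply, cw]; ring

lemma toC_im (z : Eis) : (toC z).im = z.im * (Real.sqrt 3 / 2) := by
  simp [toC, hom_apply, cw]

lemma toC_injective : Function.Injective toC := by
  intro a b h
  have h3 : (0 : ℝ) < Real.sqrt 3 := by positivity
  have h2 := congrArg Complex.im h
  have h1 := congrArg Complex.re h
  rw [toC_im, toC_im] at h2
  rw [toC_re, toC_re] at h1
  have e2 : (a.im : ℝ) = b.im := by
    have : Real.sqrt 3 / 2 ≠ 0 := by positivity
    exact mul_right_cancel₀ this h2
  have e1 : (a.re : ℝ) = b.re := by rw [e2] at h1; linarith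
  ext
  · exact_mod_cast e1
  · exact_mod_cast e2

lemma toC_star (z : Eis) : toC (star z) = (starRingEnd ℂ) (toC z) := by
  apply Complex.ext
  · rw [Complex.conj_re, toC_re, toC_re]; simp; ring
  · rw [Complex.conj_im, toC_im, toC_im]; simp

lemma toC_normSq (z : Eis) : Complex.normSq (toC z) = (nm z : ℤ) := by
  have h := Real.mul_self_sqrt (show (0 : ℝ) ≤ 3 by norm_num)
  rw [Complex.normSq_apply, toC_re, toC_im, normDef]
  push_cast
  linear_combination ((z.im : ℝ) ^ 2 / 4) * h

end Eis

/-! ### The content of the Padé polynomials -/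

/-- `∏_{m=1}^n (3m + 1)`. -/
def gN (n : ℕ) : ℕ := ∏ m ∈ range n, (3 * m + 4)

/-- `∏_{m=1}^n (3m - 1)`. -/
def hN (n : ℕ) : ℕ := ∏ m ∈ range n, (3 * m + 2)

/-- The residue of `-1/3` modulo `q`, for `q` prime to `3`. -/
def thirdRes (q : ℕ) : ℕ := if q % 3 = 1 then (q - 1) / 3 else (2 * q - 1) / 3

/-- The exponent of the prime `p ≠ 3` in the content of `P_r`. -/
def contExp (p r : ℕ) : ℕ := #{i ∈ Ico 1 (3 * r + 5) | 2 * p ^ i ≤ 3 * (r % p ^ i) + 1}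

/-- An integer dividing all coefficients of `P_r` away from the prime `3`. -/
def content (r : ℕ) : ℕ :=
  ∏ p ∈ (range (2 * r + 2)).filter (fun p => p.Prime ∧ p ≠ 3), p ^ contExp p r

lemma gN_ne (n : ℕ) : gN n ≠ 0 := prod_ne_zero_iff.2 fun _ _ => by omega
lemma hN_ne (n : ℕ) : hN n ≠ 0 := prod_ne_zero_iff.2 fun _ _ => by omega

lemma thirdRes_spec {q : ℕ} (hq : q % 3 ≠ 0) :
    (3 * thirdRes q + 1 = q ∨ 3 * thirdRes q + 1 = 2 * q) ∧ thirdRes q < q := by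
  unfold thirdRes
  split_ifs <;> omega

lemma dvd_three_mul {q n : ℕ} (hq : q % 3 ≠ 0) : q ∣ 3 * n ↔ q ∣ n := by
  have : Nat.Coprime q 3 := ((Nat.Prime.coprime_iff_not_dvd Nat.prime_three).2 (by omega)).symm
  exact this.dvd_mul_left

lemma pow_mod_three {p : ℕ} (hp : p.Prime) (h3 : p ≠ 3) (i : ℕ) : p ^ i % 3 ≠ 0 := by
  intro h
  have := Nat.prime_three.dvd_of_dvd_pow (Nat.dvd_of_mod_eq_zero h)
  exact h3 ((Nat.prime_dvd_prime_iff_eq Nat.prime_three hp).1 this).symm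

lemma fact_gN {p : ℕ} (hp : p.Prime) (h3 : p ≠ 3) (b : ℕ) : ∀ n, 3 * n + 1 < p ^ b →
    (gN n).factorization p = ∑ i ∈ Ico 1 b, (n + (p ^ i - thirdRes (p ^ i))) / p ^ i
  | 0, _ => by
    symm
    simp only [gN, range_zero, prod_empty, Nat.factorization_one, Finsupp.coe_zero, Pi.zero_apply]
    refine sum_eq_zero fun i hi => Nat.div_eq_of_lt ?_
    have hq := thirdRes_spec (pow_mod_three hp h3 i)
    have : 1 < p ^ i := Nat.one_lt_pow (by simp at hi; omega) hp.one_lt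
    omega
  | n + 1, hb => by
    have ih := fact_gN hp h3 b n (by omega)
    have e : gN (n + 1) = gN n * (3 * n + 4) := by simp [gN, prod_range_succ]
    rw [e, Nat.factorization_mul (gN_ne n) (by omega), Finsupp.add_apply, ih,
      Nat.factorization_eq_card_pow_dvd_of_lt hp (by omega) (show 3 * n + 4 < p ^ b by omega),
      card_filter, ← sum_add_distrib]
    refine sum_congr rfl fun i _ => ?_
    have hq3 := pow_mod_three hp h3 i
    have hq := thirdRes_spec hq3
    rw [show n + 1 + (p ^ i - thirdRes (p ^ i)) = (n + (p ^ i - thirdRes (p ^ i))) + 1 by omega,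
      Nat.succ_div]
    congr 1
    have : p ^ i ∣ 3 * n + 4 ↔ p ^ i ∣ n + (p ^ i - thirdRes (p ^ i)) + 1 := by
      rw [← dvd_three_mul (n := n + (p ^ i - thirdRes (p ^ i)) + 1) hq3]
      obtain ⟨h | h, hlt⟩ := hq
      · have : 3 * (n + (p ^ i - thirdRes (p ^ i)) + 1) = 3 * n + 4 + p ^ i * 2 := by omega
        rw [this]
        exact (Nat.dvd_add_left (Dvd.intro _ rfl)).symm
      · have : 3 * (n + (p ^ i - thirdRes (p ^ i)) + 1) = 3 * n + 4 + p ^ i * 1 := by omega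
        rw [this]
        exact (Nat.dvd_add_left (Dvd.intro _ rfl)).symm
    simp only [this]

lemma fact_hN {p : ℕ} (hp : p.Prime) (h3 : p ≠ 3) (b : ℕ) : ∀ n, 3 * n < p ^ b →
    (hN n).factorization p = ∑ i ∈ Ico 1 b, (n + thirdRes (p ^ i)) / p ^ i
  | 0, _ => by
    symm
    simp only [hN, range_zero, prod_empty, Nat.factorization_one, Finsupp.coe_zero, Pi.zero_apply]
    refine sum_eq_zero fun i hi => Nat.div_eq_of_lt ?_
    have hq := thirdRes_spec (pow_mod_three hp h3 i)
    omega
  | n + 1, hb => by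
    have ih := fact_hN hp h3 b n (by omega)
    have e : hN (n + 1) = hN n * (3 * n + 2) := by simp [hN, prod_range_succ]
    rw [e, Nat.factorization_mul (hN_ne n) (by omega), Finsupp.add_apply, ih,
      Nat.factorization_eq_card_pow_dvd_of_lt hp (by omega) (show 3 * n + 2 < p ^ b by omega),
      card_filter, ← sum_add_distrib]
    refine sum_congr rfl fun i _ => ?_
    have hq3 := pow_mod_three hp h3 i
    have hq := thirdRes_spec hq3
    rw [show n + 1 + thirdRes (p ^ i) = (n + thirdRes (p ^ i)) + 1 by omega, Nat.succ_div]
    congr 1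
    have : p ^ i ∣ 3 * n + 2 ↔ p ^ i ∣ n + thirdRes (p ^ i) + 1 := by
      rw [← dvd_three_mul (n := n + thirdRes (p ^ i) + 1) hq3]
      obtain ⟨h | h, hlt⟩ := hq
      · have : 3 * (n + thirdRes (p ^ i) + 1) = 3 * n + 2 + p ^ i * 1 := by omega
        rw [this]
        exact (Nat.dvd_add_left (Dvd.intro _ rfl)).symm
      · have : 3 * (n + thirdRes (p ^ i) + 1) = 3 * n + 2 + p ^ i * 2 := by omega
        rw [this]
        exact (Nat.dvd_add_left (Dvd.intro _ rfl)).symm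
    simp only [this]

lemma div_small {q x : ℕ} (_ : 0 < q) (hx : x < 3 * q) :
    (x < q ∧ x / q = 0) ∨ (q ≤ x ∧ x < 2 * q ∧ x / q = 1) ∨ (2 * q ≤ x ∧ x / q = 2) := by
  rcases lt_or_ge x q with h | h
  · exact Or.inl ⟨h, Nat.div_eq_of_lt h⟩
  rcases lt_or_ge x (2 * q) with h2 | h2
  · exact Or.inr (Or.inl ⟨h, h2, Nat.div_eq_of_lt_le (by omega) (by omega)⟩)
  · exact Or.inr (Or.inr ⟨h2, Nat.div_eq_of_lt_le (by omega) (by omega)⟩)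

/-- The local count at a prime power `q`: each coefficient of `P_r` picks up a factor when
`r mod q` is at least about `2q/3`. -/
lemma local_count {q : ℕ} (hq1 : 1 < q) (hq3 : q % 3 ≠ 0) (i j : ℕ) :
    (if 2 * q ≤ 3 * ((i + j) % q) + 1 then 1 else 0) + (j + (q - thirdRes q)) / q +
      (i + thirdRes q) / q + i / q + j / q ≤
      (i + j + (q - thirdRes q)) / q + (i + j + thirdRes q) / q := by
  obtain ⟨hs, hlt⟩ := thirdRes_spec hq3
  set ρ := thirdRes q
  have hq0 : 0 < q := by omega
  have hi := Nat.div_add_mod i q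
  have hj := Nat.div_add_mod j q
  have hi' := Nat.mod_lt i hq0
  have hj' := Nat.mod_lt j hq0
  set a := i / q
  set b := j / q
  set i0 := i % q
  set j0 := j % q
  have e1 : (j + (q - ρ)) / q = (j0 + (q - ρ)) / q + b := by
    rw [← Nat.add_mul_div_right _ _ hq0]; congr 1; rw [← hj]; ring
  have e2 : (i + ρ) / q = (i0 + ρ) / q + a := by
    rw [← Nat.add_mul_div_right _ _ hq0]; congr 1; rw [← hi]; ring
  have e3 : (i + j + (q - ρ)) / q = (i0 + j0 + (q - ρ)) / q + (a + b) := by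
    rw [← Nat.add_mul_div_right _ _ hq0]; congr 1; rw [← hi, ← hj]; ring
  have e4 : (i + j + ρ) / q = (i0 + j0 + ρ) / q + (a + b) := by
    rw [← Nat.add_mul_div_right _ _ hq0]; congr 1; rw [← hi, ← hj]; ring
  have e5 : (i + j) % q = (i0 + j0) % q := by rw [Nat.add_mod]
  rw [e1, e2, e3, e4, e5]
  have e6 : (i0 + j0 < q ∧ (i0 + j0) % q = i0 + j0) ∨
      (q ≤ i0 + j0 ∧ (i0 + j0) % q = i0 + j0 - q) := by
    rcases lt_or_ge (i0 + j0) q with h | h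
    · exact Or.inl ⟨h, Nat.mod_eq_of_lt h⟩
    · exact Or.inr ⟨h, by rw [Nat.mod_eq_sub_mod h, Nat.mod_eq_of_lt (by omega)]⟩
  have d1 := div_small hq0 (x := j0 + (q - ρ)) (by omega)
  have d2 := div_small hq0 (x := i0 + ρ) (by omega)
  have d3 := div_small hq0 (x := i0 + j0 + (q - ρ)) (by omega)
  have d4 := div_small hq0 (x := i0 + j0 + ρ) (by omega)
  clear_value ρ a b i0 j0
  clear hi hj e1 e2 e3 e4 e5
  generalize (j0 + (q - ρ)) / q = x1 at *
  generalize (i0 + ρ) / q = x2 at *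
  generalize (i0 + j0 + (q - ρ)) / q = x3 at *
  generalize (i0 + j0 + ρ) / q = x4 at *
  generalize (i0 + j0) % q = x5 at *
  split_ifs <;> omega

lemma content_ne (r : ℕ) : content r ≠ 0 := by
  refine prod_ne_zero_iff.2 fun p hp => pow_ne_zero _ ?_
  simp only [mem_filter] at hp
  exact hp.2.1.ne_zero

lemma fact_content {p : ℕ} (hp : p.Prime) (r : ℕ) :
    (content r).factorization p = if p ≠ 3 then contExp p r else 0 := by
  unfold content
  rw [Nat.factorization_prod_apply (fun x hx => by
    simp only [mem_filter] at hx; exact pow_ne_zero _ hx.2.1.ne_zero)]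
  by_cases h3 : p = 3
  · subst h3
    simp only [ne_eq, not_true_eq_false, if_false]
    refine sum_eq_zero fun x hx => ?_
    simp only [mem_filter] at hx
    rw [hx.2.1.factorization_pow, Finsupp.single_apply, if_neg hx.2.2]
  · rw [if_pos h3]
    by_cases hm : p < 2 * r + 2
    · rw [sum_eq_single p]
      · simp [hp.factorization_pow]
      · intro x hx hne
        simp only [mem_filter] at hx
        rw [hx.2.1.factorization_pow, Finsupp.single_apply, if_neg hne]
      · intro h
        exact absurd (by simp [hm, hp, h3]) h
    · rw [sum_eq_zero]
      · symm
        unfold contExp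
        rw [card_eq_zero, filter_eq_empty_iff]
        intro i hi
        have h1 : p ≤ p ^ i := Nat.le_self_pow (by simp at hi; omega) p
        have h2 : r % p ^ i ≤ r := Nat.mod_le _ _
        omega
      · intro x hx
        simp only [mem_filter, mem_range] at hx
        rw [hx.2.1.factorization_pow, Finsupp.single_apply, if_neg (by rintro rfl; omega)]

lemma three_pow_fact (i : ℕ) : (i.factorial).factorization 3 ≤ i / 2 := by
  simpa using Nat.factorization_factorial_le_div_pred Nat.prime_three i

/-- The content divides every coefficient of `P_r` up to powers of `3`. -/
lemma content_dvd (i j : ℕ) :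
    content (i + j) * (gN j * hN i * i.factorial * j.factorial) ∣
      3 ^ (i + j) * (gN (i + j) * hN (i + j)) := by
  have n1 := content_ne (i + j)
  have n2 := gN_ne j
  have n3 := hN_ne i
  have n4 := i.factorial_ne_zero
  have n5 := j.factorial_ne_zero
  have n6 := gN_ne (i + j)
  have n7 := hN_ne (i + j)
  have n8 : (3 : ℕ) ^ (i + j) ≠ 0 := by positivity
  rw [← Nat.factorization_prime_le_iff_dvd (by simp [*]) (by simp [*])]
  intro p hp
  rw [Nat.factorization_mul n1 (by simp [*]), Nat.factorization_mul (by simp [*]) n5,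
    Nat.factorization_mul (by simp [*]) n4, Nat.factorization_mul n2 n3,
    Nat.factorization_mul n8 (by simp [*]), Nat.factorization_mul n6 n7]
  simp only [Finsupp.add_apply]
  rw [fact_content hp]
  by_cases h3 : p = 3
  · subst h3
    have z : ∀ n, (gN n).factorization 3 = 0 ∧ (hN n).factorization 3 = 0 := by
      intro n
      constructor
      · apply Nat.factorization_eq_zero_of_not_dvd
        unfold gN
        rw [Nat.prime_three.prime.dvd_finsetProd_iff]
        rintro ⟨m, _, hm⟩
        omega
      · apply Nat.factorization_eq_zero_of_not_dvd
        unfold hN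
        rw [Nat.prime_three.prime.dvd_finsetProd_iff]
        rintro ⟨m, _, hm⟩
        omega
    rw [(z j).1, (z i).2, Nat.prime_three.factorization_pow]
    have := three_pow_fact i
    have := three_pow_fact j
    simp
    omega
  · rw [if_pos h3]
    set b := 3 * (i + j) + 5 with hb
    have hlt : b < p ^ b := Nat.lt_pow_self hp.one_lt
    have hlog : ∀ n, n ≤ i + j → Nat.log p n < b := fun n hn =>
      Nat.log_lt_of_lt_pow' (by omega) (by omega)
    rw [fact_gN hp h3 b j (by omega), fact_hN hp h3 b i (by omega),
      fact_gN hp h3 b (i + j) (by omega), fact_hN hp h3 b (i + j) (by omega),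
      Nat.factorization_factorial hp (hlog i (by omega)),
      Nat.factorization_factorial hp (hlog j (by omega)), contExp, card_filter, ← hb]
    simp only [← sum_add_distrib, ← add_assoc]
    refine le_trans (sum_le_sum (g := fun k => (i + j + (p ^ k - thirdRes (p ^ k))) / p ^ k +
      (i + j + thirdRes (p ^ k)) / p ^ k) ?_) ?_
    · intro k hk
      exact local_count (Nat.one_lt_pow (by simp at hk; omega) hp.one_lt) (pow_mod_three hp h3 k) i j
    · rw [sum_add_distrib]
      exact Nat.le_add_left _ _

/-! ### Integrality of the Padé values -/

lemma gProd_eq_gN (n : ℕ) : gProd ℂ n = gN n / 3 ^ n := by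
  induction n with
  | zero => simp [gProd, gN]
  | succ n ih =>
    rw [gProd_succ, ih, gN, gN, prod_range_succ]
    push_cast
    field_simp
    ring

lemma hProd_eq_hN (n : ℕ) : hProd ℂ n = hN n / 3 ^ n := by
  induction n with
  | zero => simp [hProd, hN]
  | succ n ih =>
    rw [hProd_succ, ih, hN, hN, prod_range_succ]
    push_cast
    field_simp
    ring

/-- The content divides `P_r(x, y)` in `ℤ[ω]` after the denominators, powers of `3`, are cleared. -/
lemma content_mul (x y : Eis) (r : ℕ) : ∃ α : Eis,
    (3 : ℂ) ^ (2 * r) * padeP (Eis.toC x) (Eis.toC y) r = content r * Eis.toC α := by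
  have : ∀ p ∈ antidiagonal r, ∃ k : ℕ, (3 : ℂ) ^ (2 * r) * (gProd ℂ r * hProd ℂ r /
    (gProd ℂ p.2 * hProd ℂ p.1 * (p.1.factorial : ℂ) * (p.2.factorial : ℂ))) = content r * k := by
    intro p hp
    have hp := mem_antidiagonal.1 hp
    obtain ⟨k, hk⟩ := content_dvd p.1 p.2
    refine ⟨k, ?_⟩
    rw [hp] at hk
    have hk' : (3 : ℂ) ^ r * (gN r * hN r) =
        content r * (gN p.2 * hN p.1 * p.1.factorial * p.2.factorial) * k := by
      exact_mod_cast hk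
    have n2 : (gN p.2 : ℂ) ≠ 0 := by exact_mod_cast gN_ne p.2
    have n3 : (hN p.1 : ℂ) ≠ 0 := by exact_mod_cast hN_ne p.1
    have n4 : (p.1.factorial : ℂ) ≠ 0 := by exact_mod_cast p.1.factorial_ne_zero
    have n5 : (p.2.factorial : ℂ) ≠ 0 := by exact_mod_cast p.2.factorial_ne_zero
    rw [gProd_eq_gN, gProd_eq_gN, hProd_eq_hN, hProd_eq_hN]
    have e : (3 : ℂ) ^ r = 3 ^ p.1 * 3 ^ p.2 := by rw [← pow_add, hp]
    have h3 : (3 : ℂ) ^ r ≠ 0 := pow_ne_zero _ (by norm_num)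
    have h31 : (3 : ℂ) ^ p.1 ≠ 0 := pow_ne_zero _ (by norm_num)
    have h32 : (3 : ℂ) ^ p.2 ≠ 0 := pow_ne_zero _ (by norm_num)
    rw [mul_div_assoc', div_eq_iff (by simp [n2, n3, n4, n5])]
    rw [two_mul, pow_add]
    field_simp
    linear_combination hk' - (gN r : ℂ) * hN r * e
  choose! k hk using this
  refine ⟨∑ p ∈ antidiagonal r, (k p : Eis) * x ^ p.1 * y ^ p.2, ?_⟩
  unfold padeP
  rw [map_sum, mul_sum, mul_sum]
  refine sum_congr rfl fun p hp => ?_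
  simp only [map_mul, map_pow, map_natCast]
  linear_combination (Eis.toC x ^ p.1 * Eis.toC y ^ p.2) * hk p hp

/-- The power of `√-3` gained from `y - x` makes up for the powers of `3` in `i!`. -/
lemma th_pow_div (i r : ℕ) (hi : i ≤ r) : ∃ α : Eis,
    ((r.factorial / 3 ^ (r.factorial.factorization 3) : ℕ) : Eis) * Eis.th ^ i
      = (i.factorial : Eis) * α := by
  obtain ⟨c, hc⟩ := Nat.ordCompl_dvd_ordCompl_of_dvd (Nat.factorial_dvd_factorial hi) 3
  have hv := three_pow_fact i
  set v := i.factorial.factorization 3 with hvd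
  have h1 := Nat.ordProj_mul_ordCompl_eq_self i.factorial 3
  rw [hc]
  set m := i.factorial / 3 ^ v
  refine ⟨(-1) ^ v * (c : Eis) * Eis.th ^ (i - 2 * v), ?_⟩
  have e : Eis.th ^ i = Eis.th ^ (2 * v) * Eis.th ^ (i - 2 * v) := by
    rw [← pow_add]; congr 1; omega
  rw [e, pow_mul, Eis.th_sq, ← h1, neg_pow]
  push_cast
  ring

/-- `P_r(x, x + 3M√-3)` is integral away from the denominators prime to `3`, by the expansion
`padeP_expand` in powers of the difference. -/
lemma padeP_int (x : Eis) (M : ℤ) (r : ℕ) : ∃ α : Eis,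
    ((r.factorial / 3 ^ (r.factorial.factorization 3) : ℕ) : ℂ) *
      padeP (Eis.toC x) (Eis.toC (x + 3 * M * Eis.th)) r = Eis.toC α := by
  set m := (r.factorial / 3 ^ (r.factorial.factorization 3))
  have : ∀ p ∈ antidiagonal r, ∃ α : Eis, (m : ℂ) * (Ring.choose ((r : ℂ) - 1 / 3) p.1 *
      Eis.toC (3 * M * Eis.th) ^ p.1) = Eis.toC α := by
    intro p hp
    have hp := mem_antidiagonal.1 hp
    obtain ⟨α, hα⟩ := th_pow_div p.1 r (by omega)
    have hα' := congrArg Eis.toC hα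
    simp only [map_mul, map_natCast, map_pow] at hα'
    have hc := factorial_mul_choose ((r : ℂ) - 1 / 3) p.1
    refine ⟨(∏ l ∈ range p.1, (3 * r - 1 - 3 * l : Eis)) * (M : Eis) ^ p.1 * α, ?_⟩
    have e3 : (∏ l ∈ range p.1, (3 * r - 1 - 3 * l : ℂ)) =
        3 ^ p.1 * ∏ l ∈ range p.1, ((r : ℂ) - 1 / 3 - l) := by
      have : (3 : ℂ) ^ p.1 = ∏ l ∈ range p.1, (3 : ℂ) := by simp
      rw [this, ← prod_mul_distrib]
      exact prod_congr rfl fun l _ => by ring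
    have h3 : Eis.toC 3 = 3 := map_ofNat Eis.toC 3
    simp only [map_mul, map_prod, map_sub, map_natCast, map_one, map_intCast, map_pow, h3]
    rw [e3, ← hc]
    linear_combination (3 ^ p.1 * (M : ℂ) ^ p.1 * Ring.choose ((r : ℂ) - 1 / 3) p.1) * hα'
  choose! k hk using this
  refine ⟨∑ p ∈ antidiagonal r, (k p : Eis) * ((r + p.2).choose p.2 : Eis) * x ^ p.2, ?_⟩
  rw [map_add, padeP_expand, map_sum, mul_sum]
  refine sum_congr rfl fun p hp => ?_
  simp only [map_mul, map_pow, map_natCast] at hk ⊢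
  linear_combination (((r + p.2).choose p.2 : ℂ) * Eis.toC x ^ p.2) * hk p hp

lemma content_coprime (r : ℕ) : Nat.Coprime (content r) 3 := by
  refine Nat.Coprime.symm ((Nat.Prime.coprime_iff_not_dvd Nat.prime_three).2 fun h => ?_)
  have := (Nat.prime_three.dvd_iff_one_le_factorization (content_ne r)).1 h
  rw [fact_content Nat.prime_three] at this
  simp at this

/-- For `y - x = 3 M √-3`, the value `P_r(x, y)` is an Eisenstein integer divisible by the
content. -/
theorem padeP_content (x : Eis) (M : ℤ) (r : ℕ) : ∃ π : Eis,
    padeP (Eis.toC x) (Eis.toC (x + 3 * M * Eis.th)) r = content r * Eis.toC π := by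
  obtain ⟨α, hα⟩ := content_mul x (x + 3 * M * Eis.th) r
  obtain ⟨β, hβ⟩ := padeP_int x M r
  set P := padeP (Eis.toC x) (Eis.toC (x + 3 * M * Eis.th)) r
  set m := (r.factorial / 3 ^ (r.factorial.factorization 3)) with hm
  have hcop : Nat.Coprime m (3 ^ (2 * r)) := by
    refine Nat.Coprime.pow_right _ (Nat.Coprime.symm ?_)
    exact Nat.coprime_ordCompl Nat.prime_three r.factorial_ne_zero
  have hb := Nat.isCoprime_iff_coprime.2 hcop
  obtain ⟨a, b, hab⟩ := hb
  have hP : P = Eis.toC (a * β + b * content r * α) := by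
    have : (a : ℂ) * m + b * 3 ^ (2 * r) = 1 := by exact_mod_cast hab
    simp only [map_add, map_mul, map_intCast, map_natCast]
    linear_combination (-P) * this + a * hβ + b * hα
  set π0 : Eis := a * β + b * content r * α
  have h1 : ((3 ^ (2 * r) : ℤ) : Eis) * π0 = ((content r : ℤ) : Eis) * α := by
    apply Eis.toC_injective
    simp only [map_mul, map_intCast]
    push_cast
    rw [← hP, hα]
  have h2 : ((content r : ℤ) : Eis) ∣ ((3 ^ (2 * r) : ℤ) : Eis) * π0 := ⟨α, h1⟩
  have hc : IsCoprime (content r : ℤ) (3 ^ (2 * r)) := by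
    have := Nat.isCoprime_iff_coprime.2 (content_coprime r)
    exact IsCoprime.pow_right (by exact_mod_cast this)
  have h3 : ((content r : ℤ) : Eis) ∣ π0 := by
    rw [Eis.dvd_int_iff] at h2 ⊢
    simp only [QuadraticAlgebra.re_mul, QuadraticAlgebra.im_mul, QuadraticAlgebra.re_intCast, QuadraticAlgebra.im_intCast, zero_mul, mul_zero, add_zero, Int.cast_id] at h2
    exact ⟨hc.dvd_of_dvd_mul_left h2.1, hc.dvd_of_dvd_mul_left h2.2⟩
  obtain ⟨π, hπ⟩ := h3
  refine ⟨π, ?_⟩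
  rw [hP, hπ, map_mul, map_intCast, Int.cast_natCast]

/-! ### The remainder as an integral -/

/-- The function `2Λ(cos ψ - cos φ)`. -/
noncomputable def fJ (L φ ψ : ℝ) : ℝ := 2 * L * (Real.cos ψ - Real.cos φ)

/-- The integral that represents the remainder of the Padé approximation. -/
noncomputable def intJ (L φ : ℝ) (r : ℕ) : ℝ := ∫ ψ in (-φ)..φ, fJ L φ ψ ^ r * Real.cos (ψ / 3)

lemma fJ_cont (L φ : ℝ) : Continuous (fJ L φ) := by unfold fJ; fun_prop

lemma hasDerivAt_fJ (L φ ψ : ℝ) : HasDerivAt (fJ L φ) (-(2 * L * Real.sin ψ)) ψ := by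
  unfold fJ
  have := ((Real.hasDerivAt_cos ψ).sub_const (Real.cos φ)).const_mul (2 * L)
  exact this.congr_deriv (by ring)

lemma fJ_edge (L φ : ℝ) : fJ L φ φ = 0 ∧ fJ L φ (-φ) = 0 := by simp [fJ]

lemma integ (L φ : ℝ) (r : ℕ) :
    IntervalIntegrable (fun ψ => fJ L φ ψ ^ r * Real.cos (ψ / 3)) MeasureTheory.volume (-φ) φ := by
  apply Continuous.intervalIntegrable
  have := fJ_cont L φ
  fun_prop

/-- The three-term recurrence of the integrals, from two integrations by parts. -/
lemma intJ_rec (L φ : ℝ) (r : ℕ) :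
    (((r : ℝ) + 2) ^ 2 - 1 / 9) * intJ L φ (r + 2) =
      (r + 2) * (r + 1) * (2 * L * Real.sin φ) ^ 2 * intJ L φ r
      - (r + 2) * (2 * r + 3) * (2 * L * Real.cos φ) * intJ L φ (r + 1) := by
  set s := 2 * L * Real.cos φ with hs
  have hd : ∀ ψ ∈ Set.uIcc (-φ) φ, HasDerivAt (fun ψ =>
      ((r : ℝ) + 2) * fJ L φ ψ ^ (r + 1) * (-(2 * L * Real.sin ψ)) * Real.cos (ψ / 3)
        + fJ L φ ψ ^ (r + 2) * (Real.sin (ψ / 3) / 3))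
      (-(((r : ℝ) + 2) ^ 2 - 1 / 9) * (fJ L φ ψ ^ (r + 2) * Real.cos (ψ / 3))
        + (r + 2) * (r + 1) * (2 * L * Real.sin φ) ^ 2 * (fJ L φ ψ ^ r * Real.cos (ψ / 3))
        - (r + 2) * (2 * r + 3) * s * (fJ L φ ψ ^ (r + 1) * Real.cos (ψ / 3))) ψ := by
    intro ψ _
    have hf := hasDerivAt_fJ L φ ψ
    have h1 : HasDerivAt (fun ψ : ℝ => ψ / 3) (1 / 3) ψ := (hasDerivAt_id ψ).div_const 3
    have hc := (Real.hasDerivAt_cos (ψ / 3)).comp ψ h1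
    have hsn := (Real.hasDerivAt_sin (ψ / 3)).comp ψ h1
    have hs2 := ((Real.hasDerivAt_sin ψ).const_mul (2 * L)).neg
    have := ((((hf.pow (r + 1)).const_mul ((r : ℝ) + 2)).mul hs2).mul hc).add
      ((hf.pow (r + 2)).mul (hsn.div_const 3))
    refine this.congr_deriv ?_
    have hcos : 2 * L * Real.cos ψ = fJ L φ ψ + s := by rw [fJ, hs]; ring
    have hsin : (2 * L * Real.sin ψ) ^ 2 =
        (2 * L * Real.sin φ) ^ 2 - 2 * s * fJ L φ ψ - fJ L φ ψ ^ 2 := by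
      have e1 := Real.sin_sq_add_cos_sq ψ
      have e2 := Real.sin_sq_add_cos_sq φ
      rw [fJ, hs]
      linear_combination 4 * L ^ 2 * (e1 - e2)
    simp only [Function.comp, Pi.pow_apply, Pi.neg_apply, Pi.mul_apply]
    push_cast
    set f := fJ L φ ψ
    set S := Real.sin ψ
    set C := Real.cos ψ
    set c := Real.cos (ψ / 3)
    linear_combination (-((r : ℝ) + 2) * f ^ (r + 1) * c) * hcos
      + ((r : ℝ) + 2) * (r + 1) * f ^ r * c * hsin
  have hI := intervalIntegral.integral_eq_sub_of_hasDerivAt hd (by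
    apply Continuous.intervalIntegrable
    have := fJ_cont L φ
    fun_prop)
  rw [(fJ_edge L φ).1, (fJ_edge L φ).2] at hI
  rw [intervalIntegral.integral_sub, intervalIntegral.integral_add,
    intervalIntegral.integral_const_mul, intervalIntegral.integral_const_mul,
    intervalIntegral.integral_const_mul] at hI
  · simp only [← intJ.eq_def] at hI
    simp at hI
    linear_combination (-1 : ℝ) * hI
  · exact (integ L φ _).const_mul _
  · exact (integ L φ _).const_mul _
  · exact ((integ L φ _).const_mul _).add ((integ L φ _).const_mul _)
  · exact (integ L φ _).const_mul _

lemma intJ_zero (L φ : ℝ) : intJ L φ 0 = 6 * Real.sin (φ / 3) := by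
  have hd : ∀ ψ ∈ Set.uIcc (-φ) φ, HasDerivAt (fun ψ => 3 * Real.sin (ψ / 3))
      (fJ L φ ψ ^ 0 * Real.cos (ψ / 3)) ψ := by
    intro ψ _
    have h1 : HasDerivAt (fun ψ : ℝ => ψ / 3) (1 / 3) ψ := (hasDerivAt_id ψ).div_const 3
    have hsn := ((Real.hasDerivAt_sin (ψ / 3)).comp ψ h1).const_mul 3
    refine hsn.congr_deriv ?_
    rw [pow_zero]
    ring
  have hI := intervalIntegral.integral_eq_sub_of_hasDerivAt hd (integ L φ 0)
  rw [intJ, hI, neg_div, Real.sin_neg]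
  ring

lemma intJ_one (L φ : ℝ) : intJ L φ 1 =
    L * (9 * Real.sin (2 * φ / 3) - 9 / 2 * Real.sin (4 * φ / 3)) := by
  -- the integrand is `Λ (cos (4ψ/3) + cos (2ψ/3)) - 2 Λ cos φ cos (ψ/3)`
  have hd : ∀ ψ ∈ Set.uIcc (-φ) φ, HasDerivAt (fun ψ => L * (3 / 4 * Real.sin (4 * ψ / 3)
      + 3 / 2 * Real.sin (2 * ψ / 3)) - 2 * L * Real.cos φ * (3 * Real.sin (ψ / 3)))
      (fJ L φ ψ ^ 1 * Real.cos (ψ / 3)) ψ := by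
    intro ψ _
    have h1 : HasDerivAt (fun ψ : ℝ => ψ / 3) (1 / 3) ψ := (hasDerivAt_id ψ).div_const 3
    have h2 : HasDerivAt (fun ψ : ℝ => 2 * ψ / 3) (2 * 1 / 3) ψ :=
      ((hasDerivAt_id ψ).const_mul 2).div_const 3
    have h4 : HasDerivAt (fun ψ : ℝ => 4 * ψ / 3) (4 * 1 / 3) ψ :=
      ((hasDerivAt_id ψ).const_mul 4).div_const 3
    have k1 := ((Real.hasDerivAt_sin (ψ / 3)).comp ψ h1).const_mul 3
    have k2 := ((Real.hasDerivAt_sin (2 * ψ / 3)).comp ψ h2).const_mul (3 / 2)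
    have k4 := ((Real.hasDerivAt_sin (4 * ψ / 3)).comp ψ h4).const_mul (3 / 4)
    refine (((k4.add k2).const_mul L).sub (k1.const_mul (2 * L * Real.cos φ))).congr_deriv ?_
    have e := Real.cos_add_cos (4 * ψ / 3) (2 * ψ / 3)
    rw [show (4 * ψ / 3 + 2 * ψ / 3) / 2 = ψ by ring,
      show (4 * ψ / 3 - 2 * ψ / 3) / 2 = ψ / 3 by ring] at e
    rw [fJ]
    linear_combination L * e
  have hI := intervalIntegral.integral_eq_sub_of_hasDerivAt hd (integ L φ 1)
  have e := Real.sin_sub_sin (4 * φ / 3) (- (2 * φ / 3))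
  rw [show (4 * φ / 3 - -(2 * φ / 3)) / 2 = φ by ring,
    show (4 * φ / 3 + -(2 * φ / 3)) / 2 = φ / 3 by ring, Real.sin_neg] at e
  have e' := Real.sin_sub_sin (4 * φ / 3) (2 * φ / 3)
  rw [show (4 * φ / 3 - 2 * φ / 3) / 2 = φ / 3 by ring,
    show (4 * φ / 3 + 2 * φ / 3) / 2 = φ by ring] at e'
  rw [intJ, hI, neg_div, Real.sin_neg, mul_neg, mul_neg, neg_div, neg_div, Real.sin_neg,
    Real.sin_neg]
  linear_combination 6 * L * e'

lemma sSum_zero {K : Type*} [Field K] (x y : K) : sSum x y 0 = 1 := by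
  simp [sSum, gProd, hProd]

lemma sSum_one (x y : ℂ) : sSum x y 1 = 3 / 2 * x + 3 / 4 * y := by
  rw [sSum, Nat.antidiagonal_succ]
  simp [gProd, hProd]
  norm_num
  ring

lemma fJ_bound {L φ ψ : ℝ} (hL : 0 ≤ L) (hφ : φ ≤ Real.pi) (hψ : ψ ∈ Set.Icc (-φ) φ) :
    0 ≤ fJ L φ ψ ∧ fJ L φ ψ ≤ 2 * L - 2 * L * Real.cos φ := by
  have h1 : Real.cos φ ≤ Real.cos ψ := by
    rw [← Real.cos_abs ψ]
    exact Real.cos_le_cos_of_nonneg_of_le_pi (abs_nonneg _) hφ (abs_le.2 hψ)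
  have h2 := Real.cos_le_one ψ
  constructor
  · unfold fJ
    exact mul_nonneg (by positivity) (by linarith)
  · unfold fJ
    nlinarith

lemma intJ_bound {L φ : ℝ} (hL : 0 ≤ L) (h0 : 0 ≤ φ) (hφ : φ ≤ Real.pi) (r : ℕ) :
    |intJ L φ r| ≤ 2 * φ * (2 * L - 2 * L * Real.cos φ) ^ r := by
  have := intervalIntegral.norm_integral_le_of_norm_le_const (a := -φ) (b := φ)
    (f := fun ψ => fJ L φ ψ ^ r * Real.cos (ψ / 3)) (C := (2 * L - 2 * L * Real.cos φ) ^ r) (by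
      intro ψ hψ
      rw [Set.uIoc_of_le (by linarith)] at hψ
      have hb := fJ_bound hL hφ (Set.Ioc_subset_Icc_self hψ)
      rw [norm_mul, norm_pow, Real.norm_eq_abs, Real.norm_eq_abs, abs_of_nonneg hb.1]
      calc _ ≤ (2 * L - 2 * L * Real.cos φ) ^ r * 1 :=
            mul_le_mul (pow_le_pow_left₀ hb.1 hb.2 r) (Real.abs_cos_le_one _) (abs_nonneg _)
              (pow_nonneg (hb.1.trans hb.2) _)
        _ = _ := mul_one _)
  rw [Real.norm_eq_abs, abs_of_nonneg (show (0 : ℝ) ≤ φ - -φ by linarith)] at this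
  rw [intJ]
  linarith

/-- The cube root `e^{iφ/3}` of the direction of `ξ`. -/
noncomputable def uRoot (φ : ℝ) : ℂ := Complex.exp ((φ / 3 : ℝ) * Complex.I)

/-- The point `Λ e^{iφ}`. -/
noncomputable def polar (L φ : ℝ) : ℂ := L * Complex.exp (φ * Complex.I)

lemma polar_re (L φ : ℝ) : (polar L φ).re = L * Real.cos φ := by
  rw [polar, Complex.re_ofReal_mul, Complex.exp_ofReal_mul_I_re]
lemma polar_im (L φ : ℝ) : (polar L φ).im = L * Real.sin φ := by
  rw [polar, Complex.im_ofReal_mul, Complex.exp_ofReal_mul_I_im]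

lemma polar_conj (L φ : ℝ) : polar L (-φ) = (starRingEnd ℂ) (polar L φ) := by
  apply Complex.ext
  · rw [Complex.conj_re, polar_re, polar_re, Real.cos_neg]
  · rw [Complex.conj_im, polar_im, polar_im, Real.sin_neg]; ring

/-- The sum and the square of the difference of `Λ e^{±iφ}` are real. -/
lemma polar_add (L φ : ℝ) : polar L (-φ) + polar L φ = ((2 * L * Real.cos φ : ℝ) : ℂ) := by
  apply Complex.ext
  · rw [Complex.add_re, polar_re, polar_re, Real.cos_neg, Complex.ofReal_re]; ring
  · rw [Complex.add_im, polar_im, polar_im, Real.sin_neg, Complex.ofReal_im]; ring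

lemma polar_sub_sq (L φ : ℝ) :
    (polar L (-φ) - polar L φ) ^ 2 = ((-(2 * L * Real.sin φ) ^ 2 : ℝ) : ℂ) := by
  have : polar L (-φ) - polar L φ = ((-(2 * L * Real.sin φ) : ℝ) : ℂ) * Complex.I := by
    apply Complex.ext
    · rw [Complex.sub_re, polar_re, polar_re, Real.cos_neg]; simp
    · rw [Complex.sub_im, polar_im, polar_im, Real.sin_neg, Complex.im_ofReal_mul]; simp; ring
  rw [this, mul_pow, Complex.I_sq]
  push_cast
  ring

/-- The recurrence for the imaginary parts. -/
lemma im_sSum_rec (L φ : ℝ) (w : ℂ) (r : ℕ) :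
    ((r : ℝ) + 2) * (r + 1) * ((r + 2) ^ 2 - 1 / 9) *
        (sSum (polar L (-φ)) (polar L φ) (r + 2) * w).im =
      (2 * r + 3) * (r + 1) * (2 * L * Real.cos φ) * (sSum (polar L (-φ)) (polar L φ) (r + 1) * w).im
      + (2 * L * Real.sin φ) ^ 2 * (sSum (polar L (-φ)) (polar L φ) r * w).im := by
  have h := sSum_rec (polar L (-φ)) (polar L φ) r
  rw [polar_add, polar_sub_sq] at h
  have h' : ((((r : ℝ) + 2) * (r + 1) * ((r + 2) ^ 2 - 1 / 9) : ℝ) : ℂ) *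
        (sSum (polar L (-φ)) (polar L φ) (r + 2) * w) =
      (((2 * r + 3) * (r + 1) * (2 * L * Real.cos φ) : ℝ) : ℂ) *
        (sSum (polar L (-φ)) (polar L φ) (r + 1) * w)
      + (((2 * L * Real.sin φ) ^ 2 : ℝ) : ℂ) * (sSum (polar L (-φ)) (polar L φ) r * w) := by
    push_cast at h ⊢
    linear_combination w * h
  have := congrArg Complex.im h'
  rwa [Complex.add_im, Complex.im_ofReal_mul, Complex.im_ofReal_mul, Complex.im_ofReal_mul] at this

/-- The integral equals, up to an explicit factor, the imaginary part of `P_r · u`: both sides satisfy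
the same three-term recurrence and agree for `r = 0, 1`. -/
lemma intJ_eq (L φ : ℝ) : ∀ r : ℕ, intJ L φ r = 6 * (-1) ^ r * (r.factorial : ℝ) ^ 2 *
    (sSum (polar L (-φ)) (polar L φ) r * uRoot φ).im := by
  intro r
  induction r using Nat.twoStepInduction with
  | zero =>
    rw [intJ_zero, sSum_zero, one_mul, uRoot, Complex.exp_ofReal_mul_I_im]; simp
  | one =>
    rw [intJ_one, sSum_one]
    have e1 : (3 / 2 * polar L (-φ) + 3 / 4 * polar L φ) * uRoot φ =
        ((3 / 2 * L : ℝ) : ℂ) * Complex.exp ((-(2 * φ / 3) : ℝ) * Complex.I) +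
        ((3 / 4 * L : ℝ) : ℂ) * Complex.exp ((4 * φ / 3 : ℝ) * Complex.I) := by
      have a1 : Complex.exp (((-(2 * φ / 3) : ℝ) : ℂ) * Complex.I) =
          Complex.exp (((-φ : ℝ) : ℂ) * Complex.I) * Complex.exp ((φ / 3 : ℝ) * Complex.I) := by
        rw [← Complex.exp_add]; congr 1; push_cast; ring
      have a2 : Complex.exp ((4 * φ / 3 : ℝ) * Complex.I) =
          Complex.exp (φ * Complex.I) * Complex.exp ((φ / 3 : ℝ) * Complex.I) := by
        rw [← Complex.exp_add]; congr 1; push_cast; ring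
      rw [a1, a2, uRoot, polar, polar]
      push_cast
      ring
    rw [e1, Complex.add_im, Complex.im_ofReal_mul, Complex.im_ofReal_mul,
      Complex.exp_ofReal_mul_I_im, Complex.exp_ofReal_mul_I_im, Real.sin_neg]
    simp
    ring
  | more r ih0 ih1 =>
    have h1 := intJ_rec L φ r
    have h2 := im_sSum_rec L φ (uRoot φ) r
    rw [ih0, ih1] at h1
    have hne : (((r : ℝ) + 2) ^ 2 - 1 / 9) ≠ 0 := by
      have : (0 : ℝ) ≤ r := by positivity
      nlinarith
    have hf1 : ((r + 1).factorial : ℝ) = (r + 1) * r.factorial := by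
      rw [Nat.factorial_succ]; push_cast; ring
    have hf2 : ((r + 2).factorial : ℝ) = (r + 2) * ((r + 1) * r.factorial) := by
      rw [Nat.factorial_succ, Nat.factorial_succ]; push_cast; ring
    rw [hf1] at h1
    apply mul_left_cancel₀ hne
    rw [h1, hf2, pow_succ, pow_succ]
    linear_combination (-6 * (-1) ^ r * (r.factorial : ℝ) ^ 2 * (r + 2) * (r + 1)) * h2

lemma gh_le (r : ℕ) : 0 ≤ gProd ℝ r * hProd ℝ r ∧ gProd ℝ r * hProd ℝ r ≤ (r.factorial : ℝ) ^ 2 := by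
  induction r with
  | zero => simp [gProd, hProd]
  | succ r ih =>
    have hr : (0 : ℝ) ≤ r := by positivity
    rw [gProd_succ, hProd_succ, Nat.factorial_succ]
    have e : gProd ℝ r * ((r : ℝ) + 1 + 1 / 3) * (hProd ℝ r * ((r : ℝ) + 1 - 1 / 3)) =
      (gProd ℝ r * hProd ℝ r) * (((r : ℝ) + 1) ^ 2 - 1 / 9) := by ring
    have h9 : 0 ≤ ((r : ℝ) + 1) ^ 2 - 1 / 9 := by nlinarith
    rw [e]
    refine ⟨mul_nonneg ih.1 h9, ?_⟩
    push_cast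
    rw [mul_pow, mul_comm (((r : ℝ) + 1) ^ 2)]
    exact mul_le_mul ih.2 (by linarith) h9 (by positivity)

lemma gProd_ofReal (r : ℕ) : gProd ℂ r = ((gProd ℝ r : ℝ) : ℂ) := by
  simp [gProd]
lemma hProd_ofReal (r : ℕ) : hProd ℂ r = ((hProd ℝ r : ℝ) : ℂ) := by
  simp [hProd]

lemma im_pade_eq (L φ : ℝ) (w : ℂ) (r : ℕ) : (padeP (polar L (-φ)) (polar L φ) r * w).im =
    gProd ℝ r * hProd ℝ r * (sSum (polar L (-φ)) (polar L φ) r * w).im := by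
  rw [padeP_eq, gProd_ofReal, hProd_ofReal, ← Complex.ofReal_mul, mul_assoc, Complex.im_ofReal_mul]

/-- `P_r` times the cube root of the direction is nearly real: the remainder of the approximation. -/
lemma im_pade_bound {L φ : ℝ} (hL : 0 ≤ L) (h0 : 0 ≤ φ) (hφ : φ ≤ Real.pi) (r : ℕ) :
    |(padeP (polar L (-φ)) (polar L φ) r * uRoot φ).im| ≤
      φ / 3 * (2 * L - 2 * L * Real.cos φ) ^ r := by
  have h1 := intJ_bound hL h0 hφ r
  rw [intJ_eq, abs_mul, abs_mul, abs_mul, abs_pow, abs_neg, abs_one, one_pow, abs_pow,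
    Nat.abs_cast] at h1
  rw [im_pade_eq, abs_mul, abs_of_nonneg (gh_le r).1]
  have h2 := mul_le_mul_of_nonneg_right (gh_le r).2
    (abs_nonneg (sSum (polar L (-φ)) (polar L φ) r * uRoot φ).im)
  rw [show |(6 : ℝ)| = 6 by norm_num] at h1
  linarith

/-- The coefficients of `P_r` are positive, so on `‖x‖ = ‖y‖ = L` it is bounded by its value at
`(L, L)`. -/
lemma norm_pade_le {x y : ℂ} {L : ℝ} (hx : ‖x‖ = L) (hy : ‖y‖ = L) (r : ℕ) :
    ‖padeP x y r‖ ≤ ((2 * r).choose r : ℝ) * L ^ r := by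
  have hg : ∀ n, 0 < gProd ℝ n := fun n => prod_pos fun m _ => by positivity
  have hh : ∀ n, 0 < hProd ℝ n := fun n => prod_pos fun m _ => by
    have : (0 : ℝ) ≤ m := by positivity
    linarith
  rw [← padeP_one, padeP, padeP, sum_mul]
  refine (norm_sum_le _ _).trans (le_of_eq (sum_congr rfl fun p hp => ?_))
  have hp := mem_antidiagonal.1 hp
  simp only [gProd_ofReal, hProd_ofReal, norm_mul, norm_div, norm_pow, hx, hy, Complex.norm_real,
    Real.norm_eq_abs, abs_of_pos (hg _), abs_of_pos (hh _), Complex.norm_natCast, one_pow, mul_one]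
  rw [mul_assoc, ← pow_add, hp]

/-- Two consecutive approximations are not both proportional to `η`. -/
lemma pade_nonvanish {L φ : ℝ} (hL : 0 < L) (h0 : 0 < φ) (hφ : φ < Real.pi) {w : ℂ} (hw : w ≠ 0) :
    ∀ r : ℕ, (sSum (polar L (-φ)) (polar L φ) r * w).im ≠ 0 ∨
      (sSum (polar L (-φ)) (polar L φ) (r + 1) * w).im ≠ 0 := by
  have hs : 0 < 2 * L * Real.sin φ := by have := Real.sin_pos_of_pos_of_lt_pi h0 hφ; positivity
  intro r
  induction r with
  | zero =>
    by_contra! h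
    obtain ⟨h1, h2⟩ := h
    rw [sSum_zero, one_mul] at h1
    rw [zero_add, sSum_one] at h2
    have e : 3 / 2 * polar L (-φ) + 3 / 4 * polar L φ =
        ((3 / 2 : ℝ) : ℂ) * polar L (-φ) + ((3 / 4 : ℝ) : ℂ) * polar L φ := by push_cast; ring
    rw [e, Complex.mul_im, h1, mul_zero, zero_add, Complex.add_im, Complex.im_ofReal_mul,
      Complex.im_ofReal_mul, polar_im, polar_im, Real.sin_neg] at h2
    rcases mul_eq_zero.1 h2 with h | h
    · linarith
    · exact hw (Complex.ext h h1)
  | succ r ih =>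
    by_contra! h
    have := im_sSum_rec L φ w r
    rw [show r + 1 + 1 = r + 2 by ring] at h
    rw [h.1, h.2] at this
    have h3 : (sSum (polar L (-φ)) (polar L φ) r * w).im = 0 := by
      have h4 : (2 * L * Real.sin φ) ^ 2 * (sSum (polar L (-φ)) (polar L φ) r * w).im = 0 := by
        linarith
      exact (mul_eq_zero.1 h4).resolve_left (by positivity)
    rcases ih with ih | ih
    · exact ih h3
    · exact ih h.1

/-! ### The approximation inequality -/

/-- The three rotations of `z` by cube roots of unity have imaginary parts with product `-Im(z³)/4`. -/
lemma im_rot_prod (z : ℂ) : z.im * (Eis.cw * z).im * (Eis.cw ^ 2 * z).im = -(z ^ 3).im / 4 := by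
  have h := Real.mul_self_sqrt (show (0 : ℝ) ≤ 3 by norm_num)
  have h2 : Eis.cw ^ 2 = -1 - Eis.cw := by rw [sq, Eis.cw_sq]
  rw [h2]
  simp [Eis.cw, pow_succ]
  linear_combination (-z.im * z.re ^ 2 / 4) * h

lemma im_cube (z : ℂ) : (z ^ 3).im = z.im * (3 * ‖z‖ ^ 2 - 4 * z.im ^ 2) := by
  rw [Complex.sq_norm, Complex.normSq_apply]
  simp [pow_succ]
  ring

/-- If `z³` is nearly real, some rotation `ω^j z` is nearly real. -/
lemma exists_rot (z : ℂ) (hz : z ≠ 0) (h : |(z ^ 3).im| ≤ ‖z‖ ^ 3 / 100) : ∃ j : ℕ,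
    |(Eis.cw ^ j * z).im| ≤ |(z ^ 3).im| / (2999 / 1000 * ‖z‖ ^ 2) := by
  have hz0 : 0 < ‖z‖ := norm_pos_iff.2 hz
  have hcw : ‖Eis.cw‖ = 1 := by
    have h1 : ‖Eis.cw‖ ^ 2 = 1 := by
      rw [Complex.sq_norm, Complex.normSq_apply]
      have h := Real.mul_self_sqrt (show (0 : ℝ) ≤ 3 by norm_num)
      simp [Eis.cw]; linarith
    nlinarith [norm_nonneg Eis.cw]
  have hc3 : Eis.cw ^ 3 = 1 := by linear_combination (Eis.cw - 1) * Eis.cw_sq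
  have h1 : ∃ j : ℕ, |(Eis.cw ^ j * z).im| ≤ ‖z‖ / 2 := by
    by_contra! hc
    have e := congrArg abs (im_rot_prod z)
    rw [abs_mul, abs_mul] at e
    have a0 := hc 0
    have a1 := hc 1
    have a2 := hc 2
    rw [pow_zero, one_mul] at a0
    rw [pow_one] at a1
    have m1 : ‖z‖ / 2 * (‖z‖ / 2) ≤ |z.im| * |(Eis.cw * z).im| :=
      mul_le_mul a0.le a1.le (by positivity) (by positivity)
    have m2 : ‖z‖ / 2 * (‖z‖ / 2) * (‖z‖ / 2) ≤ |z.im| * |(Eis.cw * z).im| * |(Eis.cw ^ 2 * z).im| :=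
      mul_le_mul m1 a2.le (by positivity) (by positivity)
    rw [e, abs_div, abs_neg, show |(4 : ℝ)| = 4 by norm_num] at m2
    have : 0 < ‖z‖ ^ 3 := by positivity
    nlinarith
  obtain ⟨j, hj⟩ := h1
  refine ⟨j, ?_⟩
  set v := Eis.cw ^ j * z with hv
  have hvn : ‖v‖ = ‖z‖ := by rw [hv, norm_mul, norm_pow, hcw]; simp
  have hv3 : v ^ 3 = z ^ 3 := by
    rw [hv, mul_pow, ← pow_mul, mul_comm j 3, pow_mul, hc3]; simp
  have hi := im_cube v
  rw [hv3, hvn] at hi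
  have hy2 : v.im ^ 2 ≤ (‖z‖ / 2) ^ 2 := by rw [← sq_abs]; exact pow_le_pow_left₀ (abs_nonneg _) hj 2
  have hi' : |(z ^ 3).im| = |v.im| * (3 * ‖z‖ ^ 2 - 4 * v.im ^ 2) := by
    rw [hi, abs_mul]; congr 1; exact abs_of_nonneg (by nlinarith)
  have b1 : |v.im| * (2 * ‖z‖ ^ 2) ≤ |(z ^ 3).im| := by
    rw [hi']; exact mul_le_mul_of_nonneg_left (by nlinarith) (abs_nonneg _)
  have b2 : |v.im| ≤ ‖z‖ / 200 := by
    have : 0 < ‖z‖ ^ 2 := by positivity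
    have : |v.im| * (2 * ‖z‖ ^ 2) ≤ (‖z‖ / 200) * (2 * ‖z‖ ^ 2) := by nlinarith
    exact le_of_mul_le_mul_right this (by positivity)
  have b3 : v.im ^ 2 ≤ (‖z‖ / 200) ^ 2 := by
    rw [← sq_abs]; exact pow_le_pow_left₀ (abs_nonneg _) b2 2
  rw [le_div_iff₀ (by positivity), hi']
  exact mul_le_mul_of_nonneg_left (by nlinarith) (abs_nonneg _)

lemma uRoot_cube (φ : ℝ) : uRoot φ ^ 3 = Complex.exp (φ * Complex.I) := by
  rw [uRoot, ← Complex.exp_nat_mul]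
  congr 1
  push_cast
  ring

lemma norm_uRoot (φ : ℝ) : ‖uRoot φ‖ = 1 := Complex.norm_exp_ofReal_mul_I _

/-- The main inequality: a good approximation `η` to the cube root of the direction of `ξ̄` is
compared with one of two consecutive Padé approximants. -/
theorem main_ineq (ξ η : Eis) (M W : ℤ) (hM : 0 < M) (hξ : ξ.im = 3 * M)
    (hs : 0 < 2 * ξ.re - 3 * M) (hη : η ≠ 0) (hW : |(ξ * η ^ 3).im| ≤ 3 * W)
    (hbig : 260 * (W : ℝ) ≤ ‖Eis.toC ξ‖ * ‖Eis.toC η‖ ^ 3) (r : ℕ) :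
    ∃ ρ : ℕ, (ρ = r ∨ ρ = r + 1) ∧ (content ρ : ℝ) ≤
      2 * M / (2 * ξ.re - 3 * M) * (27 * M ^ 2 / (2 * (2 * ξ.re - 3 * M))) ^ ρ * ‖Eis.toC η‖ +
      (1001 / 1000) * ((2 * ρ).choose ρ * ‖Eis.toC ξ‖ ^ ρ * W) / (‖Eis.toC ξ‖ * ‖Eis.toC η‖ ^ 2) := by
  have h3 := Real.mul_self_sqrt (show (0 : ℝ) ≤ 3 by norm_num)
  have h3p : 0 < Real.sqrt 3 := by positivity
  have h3b : Real.sqrt 3 ≤ 1.7321 := Real.sqrt_le_iff.2 ⟨by norm_num, by norm_num⟩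
  set s : ℝ := 2 * ξ.re - 3 * M with hsd
  have hs' : 0 < s := by rw [hsd]; exact_mod_cast hs
  have hM' : (0 : ℝ) < M := by exact_mod_cast hM
  have hre : (Eis.toC ξ).re = s / 2 := by rw [Eis.toC_re, hξ, hsd]; push_cast; ring
  have him : (Eis.toC ξ).im = 3 * M * (Real.sqrt 3 / 2) := by rw [Eis.toC_im, hξ]; push_cast; ring
  set L := ‖Eis.toC ξ‖ with hL
  set Y := ‖Eis.toC η‖ with hY
  have hL0 : 0 < L := norm_pos_iff.2 fun h => by rw [h] at hre; simp at hre; linarith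
  have hY0 : 0 < Y := norm_pos_iff.2 fun h => hη (Eis.toC_injective (by rw [h, map_zero]))
  set φ := Complex.arg (Eis.toC ξ) with hφ
  have hpol : Eis.toC ξ = polar L φ := by rw [polar]; exact (Complex.norm_mul_exp_arg_mul_I _).symm
  have hφ2 : φ < Real.pi / 2 :=
    (abs_lt.1 (Complex.abs_arg_lt_pi_div_two_iff.2 (Or.inl (by rw [hre]; positivity)))).2
  have hφ0 : 0 < φ := by
    rcases (Complex.arg_nonneg_iff.2 (show 0 ≤ (Eis.toC ξ).im by rw [him]; positivity)).lt_or_eq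
      with h | h
    · exact h
    · have := (Complex.arg_eq_zero_iff.1 h.symm).2
      rw [him] at this
      have : 0 < 3 * (M : ℝ) * (Real.sqrt 3 / 2) := by positivity
      linarith
  have hφpi : φ < Real.pi := by linarith [Real.pi_pos]
  have hcos : L * Real.cos φ = s / 2 := by rw [← polar_re, ← hpol, hre]
  have hsin : L * Real.sin φ = 3 * M * (Real.sqrt 3 / 2) := by rw [← polar_im, ← hpol, him]
  have hLs : 4 * L ^ 2 = s ^ 2 + 27 * M ^ 2 := by
    have := Real.sin_sq_add_cos_sq φ
    have e1 : (L * Real.sin φ) ^ 2 + (L * Real.cos φ) ^ 2 = L ^ 2 := by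
      linear_combination L ^ 2 * this
    rw [hcos, hsin] at e1
    linear_combination (-4 : ℝ) * e1 + 9 * M ^ 2 * h3
  have hLs2 : s ≤ 2 * L := by nlinarith [sq_nonneg (M : ℝ)]
  have hφb : φ / 3 ≤ Real.sqrt 3 * M / s := by
    have h1 := (Real.lt_tan hφ0 hφ2).le
    rw [hφ, Complex.tan_arg, hre, him, ← hφ] at h1
    have : 3 * M * (Real.sqrt 3 / 2) / (s / 2) = 3 * (Real.sqrt 3 * M / s) := by field_simp
    linarith
  have hdiff : 2 * L - 2 * L * Real.cos φ ≤ 27 * M ^ 2 / (2 * s) := by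
    rw [mul_assoc, hcos, le_div_iff₀ (by positivity)]
    nlinarith
  have hdiff0 : 0 ≤ 2 * L - 2 * L * Real.cos φ := by rw [mul_assoc, hcos]; linarith
  -- rotate `η` by a cube root of unity
  set z := uRoot φ * Eis.toC η with hz
  have hzn : ‖z‖ = Y := by rw [hz, norm_mul, norm_uRoot, one_mul]
  have hz3 : (L : ℂ) * z ^ 3 = Eis.toC (ξ * η ^ 3) := by
    rw [hz, mul_pow, uRoot_cube, map_mul, map_pow, hpol, polar]; ring
  have hz3i : L * |(z ^ 3).im| ≤ 3 * W * (Real.sqrt 3 / 2) := by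
    have e := congrArg Complex.im hz3
    rw [Complex.im_ofReal_mul, Eis.toC_im] at e
    have : L * |(z ^ 3).im| = |((ξ * η ^ 3).im : ℝ)| * (Real.sqrt 3 / 2) := by
      rw [← abs_of_pos hL0, ← abs_mul, e, abs_mul, abs_of_pos (show 0 < Real.sqrt 3 / 2 by positivity)]
    rw [this]
    refine mul_le_mul_of_nonneg_right ?_ (by positivity)
    exact_mod_cast hW
  have hW0 : (0 : ℝ) ≤ W := by
    have : (0 : ℤ) ≤ 3 * W := (abs_nonneg _).trans hW
    exact_mod_cast (by omega : (0 : ℤ) ≤ W)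
  obtain ⟨j, hj⟩ := exists_rot z (by rw [← norm_pos_iff, hzn]; exact hY0) (by
    rw [hzn]
    have : L * |(z ^ 3).im| ≤ L * (Y ^ 3 / 100) := by nlinarith
    exact le_of_mul_le_mul_left this hL0)
  set η' : Eis := Eis.om ^ j * η with hη'
  have hom : Eis.toC Eis.om = Eis.cw := by simp [Eis.toC, Eis.hom_apply, Eis.om]
  have hη'n : ‖Eis.toC η'‖ = Y := by
    have hcw : Eis.cw ^ 3 = 1 := by linear_combination (Eis.cw - 1) * Eis.cw_sq
    have : ‖Eis.cw‖ = 1 := Complex.norm_eq_one_of_pow_eq_one hcw (by norm_num)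
    rw [hη', map_mul, map_pow, hom, norm_mul, norm_pow, this]; simp [hY]
  have hη'0 : η' ≠ 0 := fun h => by rw [h, map_zero, norm_zero] at hη'n; linarith
  set z' := uRoot φ * Eis.toC η' with hz'
  have hz'n : ‖z'‖ = Y := by rw [hz', norm_mul, norm_uRoot, one_mul, hη'n]
  have hzz : Eis.cw ^ j * z = z' := by
    rw [hz', hη', map_mul, map_pow, hom, hz]; ring
  rw [hzz, hzn] at hj
  have hz'i : |z'.im| ≤ (1001 / 1000) * (Real.sqrt 3 / 2) * W / (L * Y ^ 2) := by
    refine hj.trans ?_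
    rw [div_le_div_iff₀ (by positivity) (by positivity)]
    have : L * |(z ^ 3).im| * Y ^ 2 ≤ 3 * W * (Real.sqrt 3 / 2) * Y ^ 2 :=
      mul_le_mul_of_nonneg_right hz3i (by positivity)
    have h0 : 0 ≤ W * Real.sqrt 3 * Y ^ 2 := by positivity
    nlinarith
  -- the two consecutive approximants
  set w := (starRingEnd ℂ) (Eis.toC η') with hw
  have hw0 : w ≠ 0 := by
    rw [hw, Ne, map_eq_zero]
    exact fun h => hη'0 (Eis.toC_injective (by rw [h, map_zero]))
  have hgh : ∀ n, gProd ℝ n * hProd ℝ n ≠ 0 := fun n => mul_ne_zero (gProd_ne n) (hProd_ne n)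
  obtain ⟨ρ, hρ, hne⟩ : ∃ ρ, (ρ = r ∨ ρ = r + 1) ∧
      (padeP (polar L (-φ)) (polar L φ) ρ * w).im ≠ 0 := by
    rcases pade_nonvanish hL0 hφ0 hφpi hw0 r with h | h
    · exact ⟨r, Or.inl rfl, by rw [im_pade_eq]; exact mul_ne_zero (hgh r) h⟩
    · exact ⟨r + 1, Or.inr rfl, by rw [im_pade_eq]; exact mul_ne_zero (hgh _) h⟩
  refine ⟨ρ, hρ, ?_⟩
  obtain ⟨π, hπ⟩ := padeP_content (star ξ) M ρ
  have hst : star ξ + 3 * M * Eis.th = ξ := by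
    have : (3 * M : Eis) = ((3 * M : ℤ) : Eis) := by push_cast; ring
    rw [this, ← hξ]
    ext
    · simp [Eis.th]
    · simp [Eis.th]; ring
  rw [hst, Eis.toC_star, hpol, ← polar_conj] at hπ
  set P := padeP (polar L (-φ)) (polar L φ) ρ with hP
  -- lower bound
  have hPw : P * w = ((content ρ : ℝ) : ℂ) * Eis.toC (π * star η') := by
    rw [hπ, map_mul, Eis.toC_star, hw]; push_cast; ring
  have hlow : content ρ * (Real.sqrt 3 / 2) ≤ |(P * w).im| := by
    rw [hPw, Complex.im_ofReal_mul, Eis.toC_im] at hne ⊢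
    have hk : (π * star η').im ≠ 0 := by
      intro h; rw [h] at hne; simp at hne
    have hk1 : (1 : ℝ) ≤ |((π * star η').im : ℝ)| := by
      exact_mod_cast Int.one_le_abs hk
    rw [abs_mul, abs_mul, Nat.abs_cast, abs_of_pos (show 0 < Real.sqrt 3 / 2 by positivity)]
    have : (0 : ℝ) ≤ content ρ := by positivity
    calc content ρ * (Real.sqrt 3 / 2) = content ρ * (1 * (Real.sqrt 3 / 2)) := by ring
      _ ≤ _ := by gcongr
  -- upper bound
  have hup : |(P * w).im| ≤ |(P * uRoot φ).im| * Y + ‖P‖ * |z'.im| := by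
    have hu : uRoot φ * (starRingEnd ℂ) (uRoot φ) = 1 := by
      rw [Complex.mul_conj, Complex.normSq_eq_norm_sq, norm_uRoot]; simp
    have e : P * w = (P * uRoot φ) * (starRingEnd ℂ) z' := by
      rw [hz', map_mul, hw]; linear_combination (-P * (starRingEnd ℂ) (Eis.toC η')) * hu
    have e2 : (P * w).im = (P * uRoot φ).im * z'.re - (P * uRoot φ).re * z'.im := by
      rw [e, Complex.mul_im]; simp only [Complex.conj_re, Complex.conj_im]; ring
    have b1 : |z'.re| ≤ Y := hz'n ▸ Complex.abs_re_le_norm z'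
    have b2 : |(P * uRoot φ).re| ≤ ‖P‖ := by
      have := Complex.abs_re_le_norm (P * uRoot φ)
      rwa [norm_mul, norm_uRoot, mul_one] at this
    rw [e2]
    refine (abs_sub _ _).trans ?_
    rw [abs_mul, abs_mul]
    gcongr
  have hPn : ‖P‖ ≤ ((2 * ρ).choose ρ : ℝ) * L ^ ρ := by
    apply norm_pade_le
    · rw [polar_conj, RCLike.norm_conj, ← hpol]
    · rw [← hpol]
  have hPu := im_pade_bound hL0.le hφ0.le hφpi.le ρ
  rw [← hP] at hPu
  have hPu2 : |(P * uRoot φ).im| ≤ Real.sqrt 3 * M / s * (27 * M ^ 2 / (2 * s)) ^ ρ := by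
    refine hPu.trans ?_
    gcongr
  have htot : content ρ * (Real.sqrt 3 / 2) ≤
      Real.sqrt 3 * M / s * (27 * M ^ 2 / (2 * s)) ^ ρ * Y +
        ((2 * ρ).choose ρ : ℝ) * L ^ ρ * ((1001 / 1000) * (Real.sqrt 3 / 2) * W / (L * Y ^ 2)) := by
    refine (hlow.trans hup).trans ?_
    gcongr
  have e : Real.sqrt 3 * M / s * (27 * M ^ 2 / (2 * s)) ^ ρ * Y +
        ((2 * ρ).choose ρ : ℝ) * L ^ ρ * ((1001 / 1000) * (Real.sqrt 3 / 2) * W / (L * Y ^ 2)) =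
      (2 * M / s * (27 * M ^ 2 / (2 * s)) ^ ρ * Y +
      (1001 / 1000) * ((2 * ρ).choose ρ * L ^ ρ * W) / (L * Y ^ 2)) * (Real.sqrt 3 / 2) := by
    ring
  rw [e] at htot
  exact le_of_mul_le_mul_right htot (by positivity)

/-! ### Growth of the content -/

/-- The step function `⌊3x/2⌋ + ⌊x/4⌋ - ⌊x⌋ - ⌊3x/4⌋` at `x = r/q`, which is at most `1` and is
positive only if the fractional part of `x` is at least `2/3`. -/
lemma step_fn {q : ℕ} (hq : 0 < q) (r : ℕ) :
    ((3 * r / 2) / q + (r / 4) / q ≤ 1 + r / q + (3 * r / 4) / q) ∧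
    ((3 * r / 2) / q + (r / 4) / q ≤
      (if 2 * q ≤ 3 * (r % q) + 1 then 1 else 0) + r / q + (3 * r / 4) / q) := by
  rw [Nat.div_div_eq_div_mul, Nat.div_div_eq_div_mul, Nat.div_div_eq_div_mul]
  have hd := Nat.div_add_mod r (4 * q)
  have hu := Nat.mod_lt r (show 0 < 4 * q by omega)
  set d := r / (4 * q) with hdd
  set u := r % (4 * q)
  have e1 : 3 * r / (2 * q) = 3 * u / (2 * q) + 6 * d := by
    rw [← Nat.add_mul_div_right _ _ (by omega)]; congr 1; rw [← hd]; ring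
  have e2 : r / q = u / q + 4 * d := by
    rw [← Nat.add_mul_div_right _ _ hq]; congr 1; rw [← hd]; ring
  have e3 : 3 * r / (4 * q) = 3 * u / (4 * q) + 3 * d := by
    rw [← Nat.add_mul_div_right _ _ (by omega)]; congr 1; rw [← hd]; ring
  have e5 : r % q = u % q := by
    rw [← hd]
    simp [Nat.add_mod, mul_assoc, mul_left_comm]
  rw [e1, e2, e3, e5]
  have f1 := Nat.div_add_mod (3 * u) (2 * q)
  have g1 := Nat.mod_lt (3 * u) (show 0 < 2 * q by omega)
  have f2 := Nat.div_add_mod u q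
  have g2 := Nat.mod_lt u hq
  have f3 := Nat.div_add_mod (3 * u) (4 * q)
  have g3 := Nat.mod_lt (3 * u) (show 0 < 4 * q by omega)
  have b1 : 3 * u / (2 * q) < 6 := by rw [Nat.div_lt_iff_lt_mul (by omega)]; omega
  have b2 : u / q < 4 := by rw [Nat.div_lt_iff_lt_mul (by omega)]; omega
  have b3 : 3 * u / (4 * q) < 3 := by rw [Nat.div_lt_iff_lt_mul (by omega)]; omega
  clear e1 e2 e3 e5 hd
  clear_value d u
  generalize 3 * u / (2 * q) = x1 at *
  generalize u / q = x2 at *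
  generalize 3 * u / (4 * q) = x3 at *
  generalize 3 * u % (2 * q) = m1 at *
  generalize u % q = m2 at *
  generalize 3 * u % (4 * q) = m3 at *
  constructor
  · interval_cases x1 <;> interval_cases x2 <;> interval_cases x3 <;> omega
  · interval_cases x1 <;> interval_cases x2 <;> interval_cases x3 <;> split_ifs <;> omega

/-- A factorial ratio dividing the content up to a power of `3`; comparison of the exponents of each
prime through `step_fn`. This gives the growth `(27/4)^(r/4)` of the content. -/
lemma content_growth_dvd (r : ℕ) :
    (3 * r / 2).factorial * (r / 4).factorial ∣
      content r * 3 ^ Nat.log 3 (3 * r / 2) * (r.factorial * (3 * r / 4).factorial) := by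
  have n1 := content_ne r
  have f1 := (3 * r / 2).factorial_ne_zero
  have f2 := (r / 4).factorial_ne_zero
  have f3 := r.factorial_ne_zero
  have f4 := (3 * r / 4).factorial_ne_zero
  have n8 : (3 : ℕ) ^ Nat.log 3 (3 * r / 2) ≠ 0 := by positivity
  rw [← Nat.factorization_prime_le_iff_dvd (by simp [*]) (by simp [*])]
  intro p hp
  rw [Nat.factorization_mul f1 f2, Nat.factorization_mul (by simp [*]) (by simp [*]),
    Nat.factorization_mul n1 n8, Nat.factorization_mul f3 f4]
  simp only [Finsupp.add_apply]
  rw [fact_content hp]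
  set b := 3 * r + 5 with hb
  have hlt : b < p ^ b := Nat.lt_pow_self hp.one_lt
  have hlog : ∀ n, n ≤ 3 * r → Nat.log p n < b := fun n hn =>
    Nat.log_lt_of_lt_pow' (by omega) (by omega)
  rw [Nat.factorization_factorial hp (hlog _ (by omega)),
    Nat.factorization_factorial hp (hlog _ (by omega)),
    Nat.factorization_factorial hp (hlog _ (by omega)),
    Nat.factorization_factorial hp (hlog _ (by omega))]
  by_cases h3 : p = 3
  · subst h3
    rw [if_neg (by simp), Nat.prime_three.factorization_pow, Finsupp.single_eq_same, zero_add]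
    have hl : Nat.log 3 (3 * r / 2) = ∑ i ∈ Ico 1 b, if i ≤ Nat.log 3 (3 * r / 2) then 1 else 0 := by
      rw [← card_filter]
      have : filter (fun i => i ≤ Nat.log 3 (3 * r / 2)) (Ico 1 b) =
          Ico 1 (Nat.log 3 (3 * r / 2) + 1) := by
        ext i
        have := hlog (3 * r / 2) (by omega)
        simp only [mem_filter, mem_Ico]
        omega
      rw [this, Nat.card_Ico]
      omega
    rw [hl, ← sum_add_distrib, ← sum_add_distrib, ← sum_add_distrib]
    refine sum_le_sum fun i hi => ?_
    split_ifs with h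
    · have := (step_fn (q := 3 ^ i) (by positivity) r).1
      omega
    · have : 3 * r / 2 < 3 ^ i := by
        by_contra hc
        exact h (Nat.le_log_of_pow_le (by norm_num) (by omega))
      rw [Nat.div_eq_of_lt this, Nat.div_eq_of_lt (by omega)]
      exact Nat.zero_le _
  · rw [if_pos h3, contExp, card_filter, ← hb, ← sum_add_distrib, ← sum_add_distrib]
    refine le_trans ?_ (Nat.add_le_add_right (Nat.le_add_right _ _) _)
    rw [← sum_add_distrib]
    refine sum_le_sum fun i hi => ?_
    have := (step_fn (q := p ^ i) (pow_pos hp.pos _) r).2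
    omega

/-- The factorial ratio `(6q)! q! / ((4q)! (3q)!)`. -/
noncomputable def facRatio (q : ℕ) : ℝ :=
  ((6 * q).factorial * q.factorial : ℝ) / ((4 * q).factorial * (3 * q).factorial)

lemma facRatio_succ (q : ℕ) : facRatio (q + 1) * ((4 * q + 1) * (4 * q + 2) * (4 * q + 3)) =
    facRatio q * (2 * (6 * q + 1) * (6 * q + 3) * (6 * q + 5)) := by
  have a1 : ((4 * q).factorial : ℝ) ≠ 0 := by exact_mod_cast (4 * q).factorial_ne_zero
  have a2 : ((3 * q).factorial : ℝ) ≠ 0 := by exact_mod_cast (3 * q).factorial_ne_zero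
  unfold facRatio
  rw [show 6 * (q + 1) = 6 * q + 1 + 1 + 1 + 1 + 1 + 1 by ring,
    show 4 * (q + 1) = 4 * q + 1 + 1 + 1 + 1 by ring,
    show 3 * (q + 1) = 3 * q + 1 + 1 + 1 by ring]
  simp only [Nat.factorial_succ]
  push_cast
  field_simp
  ring

lemma facRatio_lower : ∀ q : ℕ, 1 ≤ q → 49 / 100 * (27 / 4 : ℝ) ^ q * (1 + 1 / (q + 1)) ≤ facRatio q := by
  intro q hq
  induction q, hq using Nat.le_induction with
  | base => norm_num [facRatio, Nat.factorial]
  | succ q hq ih =>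
    have hq' : (1 : ℝ) ≤ q := by exact_mod_cast hq
    have h := facRatio_succ q
    have hD : (0 : ℝ) < (4 * q + 1) * (4 * q + 2) * (4 * q + 3) := by positivity
    have hN : (0 : ℝ) < 2 * (6 * q + 1) * (6 * q + 3) * (6 * q + 5) := by positivity
    rw [← mul_le_mul_iff_left₀ hD, h]
    refine le_trans ?_ (mul_le_mul_of_nonneg_right ih hN.le)
    have hp : (0 : ℝ) < 49 / 100 * (27 / 4 : ℝ) ^ q := by positivity
    have key : 27 / 4 * (1 + 1 / ((q : ℝ) + 1 + 1)) * ((4 * q + 1) * (4 * q + 2) * (4 * q + 3)) ≤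
        (1 + 1 / ((q : ℝ) + 1)) * (2 * (6 * q + 1) * (6 * q + 3) * (6 * q + 5)) := by
      rw [show 27 / 4 * (1 + 1 / ((q : ℝ) + 1 + 1)) * ((4 * q + 1) * (4 * q + 2) * (4 * q + 3)) =
          (27 / 4 * (q + 3) * ((4 * q + 1) * (4 * q + 2) * (4 * q + 3))) / (q + 2) by
          field_simp; ring,
        show (1 + 1 / ((q : ℝ) + 1)) * (2 * (6 * q + 1) * (6 * q + 3) * (6 * q + 5)) =
          ((q + 2) * (2 * (6 * q + 1) * (6 * q + 3) * (6 * q + 5))) / (q + 1) by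
          field_simp; ring,
        div_le_div_iff₀ (by positivity) (by positivity)]
      generalize (q : ℝ) = z at hq' ⊢
      obtain ⟨u, hu, rfl⟩ : ∃ u : ℝ, 0 ≤ u ∧ z = u + 1 := ⟨z - 1, by linarith, by ring⟩
      rw [← sub_nonneg]
      ring_nf
      positivity
    have := mul_le_mul_of_nonneg_left key hp.le
    push_cast
    rw [pow_succ]
    linarith

lemma fac_helper {N C a a' b D num den : ℝ} (hC : 0 ≤ C) (hD : 0 ≤ D) (hn : 0 < num) (ha : 0 ≤ a)
    (hb : 0 ≤ b) (haa : a ≤ a') (hden : den ≤ num * b) (h : N * num ≤ C * a * (D * den)) :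
    N ≤ C * a' * b * D := by
  refine le_of_mul_le_mul_right (h.trans ?_) hn
  calc C * a * (D * den) ≤ C * a * (D * (num * b)) := by gcongr
    _ ≤ C * a' * (D * (num * b)) := by gcongr
    _ = _ := by ring


lemma content_lower (q k : ℕ) (hq : 1 ≤ q) (hk : k ≤ 3) :
    32 / 100 * (27 / 4 : ℝ) ^ q ≤ content (4 * q + k) * (4 * q + 3 : ℝ) ^ 2 := by
  set r := 4 * q + k with hr
  have h1 := Nat.le_of_dvd (Nat.pos_of_ne_zero (by
    simp [content_ne, Nat.factorial_ne_zero])) (content_growth_dvd r)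
  have h2 : 3 ^ Nat.log 3 (3 * r / 2) ≤ 3 * r / 2 := Nat.pow_log_le_self 3 (by omega)
  have h3 : (3 * r / 2).factorial * (r / 4).factorial ≤
      content r * (3 * r / 2) * (r.factorial * (3 * r / 4).factorial) :=
    h1.trans (by gcongr)
  have h4 : (((3 * r / 2).factorial * (r / 4).factorial : ℕ) : ℝ) ≤
      content r * (3 * r / 2) * (r.factorial * (3 * r / 4).factorial) := by
    have h5 : ((3 * r / 2 : ℕ) : ℝ) ≤ 3 * r / 2 := by
      have := Nat.cast_div_le (α := ℝ) (m := 3 * r) (n := 2); push_cast at this; exact this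
    calc (((3 * r / 2).factorial * (r / 4).factorial : ℕ) : ℝ)
        ≤ ((content r * (3 * r / 2) * (r.factorial * (3 * r / 4).factorial) : ℕ) : ℝ) := by
          exact_mod_cast h3
      _ = content r * ((3 * r / 2 : ℕ) : ℝ) * (r.factorial * (3 * r / 4).factorial) := by push_cast; ring
      _ ≤ _ := by gcongr
  have hf := facRatio_lower q hq
  have hf2 : 49 / 100 * (27 / 4 : ℝ) ^ q ≤ facRatio q := by
    refine le_trans ?_ hf
    have : (0 : ℝ) ≤ 1 / ((q : ℝ) + 1) := by positivity
    have : (0 : ℝ) < 49 / 100 * (27 / 4 : ℝ) ^ q := by positivity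
    nlinarith
  have a1 : (0 : ℝ) < (4 * q).factorial := by exact_mod_cast (4 * q).factorial_pos
  have a2 : (0 : ℝ) < (3 * q).factorial := by exact_mod_cast (3 * q).factorial_pos
  have a3 : (0 : ℝ) < (6 * q).factorial := by exact_mod_cast (6 * q).factorial_pos
  have a4 : (0 : ℝ) < (q).factorial := by exact_mod_cast (q).factorial_pos
  have hq' : (1 : ℝ) ≤ q := by exact_mod_cast hq
  have hc : (0 : ℝ) ≤ content r := by positivity
  -- the factorial ratio at `4q + k` loses at most a factor `r` against the one at `4q`
  have main : facRatio q ≤ content r * (3 * (4 * q + 3) / 2) * (4 * q + 3) := by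
    rw [facRatio, div_le_iff₀ (by positivity)]
    have hr4 : r / 4 = q := by omega
    rw [hr4] at h4
    interval_cases k
    · have e1 : 3 * r / 2 = 6 * q := by omega
      have e2 : 3 * r / 4 = 3 * q := by omega
      have e3 : r = 4 * q := by omega
      have e4 : (r : ℝ) = 4 * q := by rw [e3]; push_cast; ring
      rw [e1, e2, e4] at h4
      rw [e3] at h4 hc ⊢
      push_cast at h4
      refine fac_helper (a := 3 * (4 * q) / 2) (num := 1) (den := 1) (b := 4 * q + 3) hc (mul_pos a1 a2).le
        (by positivity) (by positivity) (by positivity) (by linarith) (by linarith)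
        (h4.trans' (le_of_eq ?_) |>.trans (le_of_eq ?_)) <;> ring
    · have e1 : 3 * r / 2 = 6 * q + 1 := by omega
      have e2 : 3 * r / 4 = 3 * q := by omega
      have e3 : r = 4 * q + 1 := by omega
      have e4 : (r : ℝ) = 4 * q + 1 := by rw [e3]; push_cast; ring
      rw [e1, e2, e4] at h4
      rw [e3] at h4 hc ⊢
      simp only [Nat.factorial_succ] at h4
      push_cast at h4
      refine fac_helper (a := 3 * (4 * q + 1) / 2) (num := 6 * q + 1) (den := 4 * q + 1) (b := 4 * q + 3) hc (mul_pos a1 a2).le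
        (by positivity) (by positivity) (by positivity) ?_ ?_
        (h4.trans' (le_of_eq ?_) |>.trans (le_of_eq ?_))
      · linarith
      · nlinarith
      · ring
      · ring
    · have e1 : 3 * r / 2 = 6 * q + 3 := by omega
      have e2 : 3 * r / 4 = 3 * q + 1 := by omega
      have e3 : r = 4 * q + 2 := by omega
      have e4 : (r : ℝ) = 4 * q + 2 := by rw [e3]; push_cast; ring
      rw [e1, e2, e4] at h4
      rw [e3] at h4 hc ⊢
      simp only [Nat.factorial_succ] at h4
      push_cast at h4
      refine fac_helper (a := 3 * (4 * q + 2) / 2) (num := (6 * q + 1) * (6 * q + 2) * (6 * q + 3))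
        (den := (4 * q + 1) * (4 * q + 2) * (3 * q + 1)) (b := 4 * q + 3) hc (mul_pos a1 a2).le
        (by positivity) (by positivity) (by positivity) ?_ ?_
        (h4.trans' (le_of_eq ?_) |>.trans (le_of_eq ?_))
      · linarith
      · rw [← sub_nonneg]; ring_nf; positivity
      · ring
      · ring
    · have e1 : 3 * r / 2 = 6 * q + 4 := by omega
      have e2 : 3 * r / 4 = 3 * q + 2 := by omega
      have e3 : r = 4 * q + 3 := by omega
      have e4 : (r : ℝ) = 4 * q + 3 := by rw [e3]; push_cast; ring
      rw [e1, e2, e4] at h4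
      rw [e3] at h4 hc ⊢
      simp only [Nat.factorial_succ] at h4
      push_cast at h4
      refine fac_helper (a := 3 * (4 * q + 3) / 2) (num := (6 * q + 1) * (6 * q + 2) * (6 * q + 3) * (6 * q + 4))
        (den := (4 * q + 1) * (4 * q + 2) * (4 * q + 3) * (3 * q + 1) * (3 * q + 2))
        (b := 4 * q + 3) hc (mul_pos a1 a2).le
        (by positivity) (by positivity) (by positivity) ?_ ?_
        (h4.trans' (le_of_eq ?_) |>.trans (le_of_eq ?_))
      · linarith
      · rw [← sub_nonneg]; ring_nf; positivity
      · ring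
      · ring
  have : 49 / 100 * (27 / 4 : ℝ) ^ q ≤ 3 / 2 * (content r * (4 * q + 3 : ℝ) ^ 2) := by
    refine (hf2.trans main).trans (le_of_eq ?_)
    ring
  have h0 : (0 : ℝ) < (27 / 4 : ℝ) ^ q := by positivity
  linarith

/-- `content r ≥ ρ^r` for all `r ≥ 4 q₀`, once `content_lower` gives it in the first block of four and
the growth dominates from there on. -/
lemma content_ge_pow_aux {ρ : ℝ} (hρ : 1 ≤ ρ) (q₀ : ℕ) (hq₀ : 1 ≤ q₀)
    (h4 : ρ ^ 4 * (4 * q₀ + 7 : ℝ) ^ 2 ≤ 27 / 4 * (4 * q₀ + 3 : ℝ) ^ 2)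
    (hbase : ρ ^ (4 * q₀ + 3) * (4 * q₀ + 3 : ℝ) ^ 2 ≤ 32 / 100 * (27 / 4 : ℝ) ^ q₀) (r : ℕ)
    (hr : 4 * q₀ ≤ r) : ρ ^ r ≤ content r := by
  have h0 : 0 < ρ := by linarith
  have key : ∀ q, q₀ ≤ q → ρ ^ (4 * q + 3) * (4 * q + 3 : ℝ) ^ 2 ≤ 32 / 100 * (27 / 4 : ℝ) ^ q := by
    intro q hq
    induction q, hq using Nat.le_induction with
    | base => exact hbase
    | succ q hq ih =>
      have hq' : (q₀ : ℝ) ≤ q := by exact_mod_cast hq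
      have e : ρ ^ 4 * (4 * q + 7 : ℝ) ^ 2 ≤ 27 / 4 * (4 * q + 3 : ℝ) ^ 2 := by
        have h1 : (4 * q + 7 : ℝ) * (4 * q₀ + 3) ≤ (4 * q₀ + 7) * (4 * q + 3) := by nlinarith
        have h2 : ((4 * q + 7 : ℝ) * (4 * q₀ + 3)) ^ 2 ≤ ((4 * q₀ + 7) * (4 * q + 3)) ^ 2 := by gcongr
        have h3 : (0 : ℝ) < (4 * q₀ + 3) ^ 2 := by positivity
        refine le_of_mul_le_mul_right ?_ h3
        have h5 : (0 : ℝ) ≤ ρ ^ 4 := by positivity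
        have h6 : (0 : ℝ) ≤ (4 * q + 3 : ℝ) ^ 2 := by positivity
        have := mul_le_mul_of_nonneg_left h2 h5
        have := mul_le_mul_of_nonneg_right h4 h6
        linarith
      have hp : (0 : ℝ) ≤ ρ ^ (4 * q + 3) := by positivity
      have e2 := mul_le_mul_of_nonneg_left e hp
      rw [show 4 * (q + 1) + 3 = (4 * q + 3) + 4 by ring, pow_add, pow_succ (27 / 4 : ℝ)]
      push_cast
      rw [show (4 : ℝ) * (q + 1) + 3 = 4 * q + 7 by ring]
      linarith
  have hq : 4 * (r / 4) + r % 4 = r := Nat.div_add_mod r 4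
  have hc := content_lower (r / 4) (r % 4) (by omega) (by omega)
  have hk := key (r / 4) (by omega)
  rw [hq] at hc
  have hpos : (0 : ℝ) < (4 * (r / 4 : ℕ) + 3 : ℝ) ^ 2 := by positivity
  refine le_trans ?_ (le_of_mul_le_mul_right (hk.trans hc) hpos)
  exact pow_le_pow_right₀ hρ (by omega)

lemma content_ge_large (r : ℕ) (hr : 2800 ≤ r) : (8 / 5 : ℝ) ^ r ≤ content r := by
  refine content_ge_pow_aux (by norm_num) 700 (by norm_num) (by norm_num) ?_ r (by omega)
  push_cast
  have h : (8 : ℕ) ^ 2803 * 2803 ^ 2 * 100 * 4 ^ 700 ≤ 32 * 27 ^ 700 * 5 ^ 2803 := by decide +kernel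
  have h' : (8 : ℝ) ^ 2803 * 2803 ^ 2 * 100 * 4 ^ 700 ≤ 32 * 27 ^ 700 * 5 ^ 2803 := by
    exact_mod_cast h
  rw [div_pow, div_pow, show (4 * 700 + 3 : ℝ) = 2803 by norm_num,
    div_mul_eq_mul_div, div_mul_div_comm, div_le_div_iff₀ (by positivity) (by positivity), ← mul_assoc]
  exact h'

lemma content_ge_mid (r : ℕ) (hr : 120 ≤ r) : (29 / 20 : ℝ) ^ r ≤ content r := by
  refine content_ge_pow_aux (by norm_num) 30 (by norm_num) (by norm_num) ?_ r (by omega)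
  norm_num

/-! ### Exclusion of large approximations -/

open Eis

/-- The gap principle behind the proof: if the exclusion inequality of the approximations holds on
each interval `[K g^r, K g^(r+1)]` with `r ≥ r₀`, then `‖η‖` cannot exceed `K g^r₀`. -/
lemma chain (ξ η : Eis) (M W : ℤ) (hM : 0 < M) (hξ : ξ.im = 3 * M) (hs : 0 < 2 * ξ.re - 3 * M)
    (hη : η ≠ 0) (hW : |(ξ * η ^ 3).im| ≤ 3 * W)
    (hbig : 260 * (W : ℝ) ≤ ‖toC ξ‖ * ‖toC η‖ ^ 3) (K g : ℝ) (hK : 0 < K) (hg : 1 < g) (r₀ : ℕ)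
    (h0 : K * g ^ r₀ ≤ ‖toC η‖)
    (hstep : ∀ r, r₀ ≤ r → ∀ ρ, (ρ = r ∨ ρ = r + 1) →
      2 * M / (2 * ξ.re - 3 * M) * (27 * M ^ 2 / (2 * (2 * ξ.re - 3 * M))) ^ ρ * (K * g ^ (r + 1)) +
      1001 / 1000 * ((2 * ρ).choose ρ * ‖toC ξ‖ ^ ρ * W) / (‖toC ξ‖ * (K * g ^ r) ^ 2) <
      content ρ) : False := by
  have hs' : (0 : ℝ) < 2 * ξ.re - 3 * M := by exact_mod_cast hs
  have hM' : (0 : ℝ) < M := by exact_mod_cast hM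
  have hW0 : (0 : ℝ) ≤ W := by
    have : 0 ≤ 3 * W := (abs_nonneg _).trans hW
    exact_mod_cast (by omega : 0 ≤ W)
  have hΛ : 0 < ‖toC ξ‖ := by
    rw [norm_pos_iff]
    intro h
    have := toC_injective (h.trans (map_zero toC).symm)
    rw [this] at hξ
    simp at hξ
    omega
  have key : ∀ r, r₀ ≤ r → K * g ^ r ≤ ‖toC η‖ := by
    intro r hr
    induction r, hr using Nat.le_induction with
    | base => exact h0
    | succ r hr ih =>
      by_contra hc
      push Not at hc
      obtain ⟨ρ, hρ, h⟩ := main_ineq ξ η M W hM hξ hs hη hW hbig r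
      have h2 := hstep r hr ρ hρ
      have hy : 0 < K * g ^ r := by positivity
      refine absurd (h.trans ?_) (not_le.2 h2)
      gcongr
  obtain ⟨n, hn⟩ := ((tendsto_pow_atTop_atTop_of_one_lt hg).const_mul_atTop hK).eventually
    (Filter.eventually_gt_atTop ‖toC η‖) |>.and (Filter.eventually_ge_atTop r₀) |>.exists
  exact absurd (key n hn.2) (not_le.2 hn.1)

/-- The exclusion inequality of `chain` in the range where `content r ≥ τ ^ r`. -/
lemma chain_geo (Λ S M W K g τ : ℝ) (hM : 0 < M) (hS : 0 < S) (hW : 0 ≤ W) (hΛ : 1 ≤ Λ) (hK : 0 < K)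
    (hg : 1 < g) (hτ : 1 ≤ τ) (r₀ : ℕ) (hM2 : 27 * M ^ 2 / (4 * S) ≤ 1)
    (ha : 27 * M ^ 2 / (4 * S) * g ≤ τ) (hb : 4 * Λ / g ^ 2 ≤ τ)
    (h0 : M / S * g * K * (27 * M ^ 2 / (4 * S) * g) ^ r₀ +
      4004 / 1000 * W / K ^ 2 * (4 * Λ / g ^ 2) ^ r₀ < τ ^ r₀)
    (r : ℕ) (hr : r₀ ≤ r) (hc : τ ^ r ≤ content r) (hc' : τ ^ (r + 1) ≤ content (r + 1))
    (ρ : ℕ) (hρ : ρ = r ∨ ρ = r + 1) :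
    M / S * (27 * M ^ 2 / (4 * S)) ^ ρ * (K * g ^ (r + 1)) +
      1001 / 1000 * ((2 * ρ).choose ρ * Λ ^ ρ * W) / (Λ * (K * g ^ r) ^ 2) < content ρ := by
  set α := 27 * M ^ 2 / (4 * S) with hα
  have hα0 : 0 < α := by positivity
  have hg0 : 0 < g := by linarith
  have hΛ0 : 0 < Λ := by linarith
  have hτ0 : 0 < τ := by linarith
  have main : M / S * g * K * (α * g) ^ r + 4004 / 1000 * W / K ^ 2 * (4 * Λ / g ^ 2) ^ r < τ ^ r := by
    obtain ⟨d, rfl⟩ := Nat.exists_eq_add_of_le hr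
    rw [pow_add, pow_add, pow_add]
    have h1 : (α * g) ^ d ≤ τ ^ d := by gcongr
    have h2 : (4 * Λ / g ^ 2) ^ d ≤ τ ^ d := by gcongr
    calc _ ≤ M / S * g * K * ((α * g) ^ r₀ * τ ^ d) +
          4004 / 1000 * W / K ^ 2 * ((4 * Λ / g ^ 2) ^ r₀ * τ ^ d) := by gcongr
      _ = (M / S * g * K * (α * g) ^ r₀ + 4004 / 1000 * W / K ^ 2 * (4 * Λ / g ^ 2) ^ r₀) * τ ^ d := by
          ring
      _ < _ := by gcongr
  have hcb : ∀ n : ℕ, ((2 * n).choose n : ℝ) ≤ 4 ^ n := by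
    intro n
    have : (2 * n).choose n ≤ 4 ^ n := by
      rw [← Nat.centralBinom_eq_two_mul_choose, show (4 : ℕ) = 2 ^ 2 by rfl, ← pow_mul,
        Nat.centralBinom_eq_two_mul_choose]
      exact Nat.choose_le_two_pow _ _
    exact_mod_cast this
  have t1 : M / S * α ^ ρ * (K * g ^ (r + 1)) ≤ M / S * g * K * (α * g) ^ r := by
    have : α ^ ρ ≤ α ^ r := pow_le_pow_of_le_one hα0.le hM2 (by omega)
    calc _ ≤ M / S * α ^ r * (K * g ^ (r + 1)) := by gcongr
      _ = _ := by rw [mul_pow]; ring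
  have t2 : 1001 / 1000 * ((2 * ρ).choose ρ * Λ ^ ρ * W) / (Λ * (K * g ^ r) ^ 2) ≤
      4004 / 1000 * W / K ^ 2 * (4 * Λ / g ^ 2) ^ r := by
    have h1 : ((2 * ρ).choose ρ : ℝ) * Λ ^ ρ ≤ (4 * Λ) ^ (r + 1) := by
      calc _ ≤ 4 ^ ρ * Λ ^ ρ := by gcongr; exact hcb ρ
        _ = (4 * Λ) ^ ρ := by rw [mul_pow]
        _ ≤ _ := pow_le_pow_right₀ (by linarith) (by omega)
    calc _ ≤ 1001 / 1000 * ((4 * Λ) ^ (r + 1) * W) / (Λ * (K * g ^ r) ^ 2) := by gcongr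
      _ = _ := by
        rw [div_pow, pow_succ, mul_pow K, ← pow_mul, ← pow_mul, mul_comm r 2]
        field_simp
        norm_num
        ring
  have t3 : τ ^ r ≤ content ρ := by
    rcases hρ with rfl | rfl
    · exact hc
    · exact le_trans (pow_le_pow_right₀ hτ (by omega)) hc'
  linarith

/-- A divisor of `content r`, quick to evaluate for small `r`. -/
def contLow (r : ℕ) : ℕ :=
  ([2, 5, 7, 11, 13, 17, 19, 23, 29, 31, 37, 41, 43, 47, 53, 59, 61, 67, 71, 73, 79, 83, 89, 97, 101,
    103, 107, 109, 113, 127, 131, 137, 139, 149, 151, 157, 163, 167, 173, 179, 181].map fun p =>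
    p ^ (([1, 2, 3, 4, 5, 6, 7].map fun i => if 2 * p ^ i ≤ 3 * (r % p ^ i) + 1 then 1 else 0).sum)).prod

lemma contExp_ge (p r : ℕ) (hr : 1 ≤ r) :
    ([1, 2, 3, 4, 5, 6, 7].map fun i => if 2 * p ^ i ≤ 3 * (r % p ^ i) + 1 then 1 else 0).sum ≤
      contExp p r := by
  unfold contExp
  rw [card_filter]
  have h : ([1, 2, 3, 4, 5, 6, 7].map fun i =>
      if 2 * p ^ i ≤ 3 * (r % p ^ i) + 1 then 1 else 0).sum =
      ∑ i ∈ Ico 1 8, if 2 * p ^ i ≤ 3 * (r % p ^ i) + 1 then 1 else 0 := by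
    rw [Finset.sum_Ico_eq_sum_range]
    simp only [Finset.sum_range_succ, List.map_cons, List.sum_cons, List.map_nil, List.sum_nil,
      Finset.sum_range_zero]
    norm_num
    ring
  rw [h]
  exact sum_le_sum_of_subset (Ico_subset_Ico_right (by omega))

lemma contLow_le (r : ℕ) : contLow r ≤ content r := by
  rcases Nat.eq_zero_or_pos r with rfl | hr
  · have : contLow 0 = 1 := by decide +kernel
    rw [this]
    exact Nat.pos_of_ne_zero (content_ne 0)
  refine Nat.le_of_dvd (Nat.pos_of_ne_zero (content_ne r)) ?_
  set L := [2, 5, 7, 11, 13, 17, 19, 23, 29, 31, 37, 41, 43, 47, 53, 59, 61, 67, 71, 73, 79, 83, 89,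
    97, 101, 103, 107, 109, 113, 127, 131, 137, 139, 149, 151, 157, 163, 167, 173, 179, 181] with hL
  have hprime : ∀ p ∈ L, p.Prime ∧ p ≠ 3 := by
    rw [hL]; simp only [List.forall_mem_cons]
    norm_num
  have hnd : L.Nodup := by rw [hL]; decide
  have hlist : contLow r ∣ ∏ p ∈ L.toFinset, p ^ contExp p r := by
    rw [List.prod_toFinset _ hnd]
    unfold contLow
    rw [← hL]
    clear_value L
    clear hprime hnd hL
    induction L with
    | nil => simp
    | cons p L ih =>
      simp only [List.map_cons, List.prod_cons]
      exact mul_dvd_mul (pow_dvd_pow _ (contExp_ge p r hr)) ih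
  refine hlist.trans ?_
  rw [← Nat.factorization_prime_le_iff_dvd (prod_ne_zero_iff.2 fun p hp =>
    pow_ne_zero _ (hprime p (by simpa using hp)).1.ne_zero) (content_ne r)]
  intro p hp
  rw [fact_content hp, Nat.factorization_prod fun q hq => pow_ne_zero _ (hprime q (by simpa using hq)).1.ne_zero,
    Finset.sum_apply']
  by_cases h : p ∈ L
  · rw [if_pos (hprime p h).2, sum_eq_single_of_mem p (by simpa using h)]
    · rw [hp.factorization_pow, Finsupp.single_eq_same]
    · intro q hq hne
      rw [(hprime q (by simpa using hq)).1.factorization_pow, Finsupp.single_eq_of_ne (by tauto)]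
  · rw [sum_eq_zero]
    · exact Nat.zero_le _
    · intro q hq
      have : q ≠ p := by rintro rfl; exact h (by simpa using hq)
      rw [(hprime q (by simpa using hq)).1.factorization_pow, Finsupp.single_eq_of_ne (by tauto)]

/-- The exclusion inequality at `S = 125/2`, for the two candidate indices `r` and `r + 1`, with the
content replaced by `contLow`. -/
def chk (r : ℕ) : Bool :=
  decide (2 * (53 / 250) * (27 / 4 * (53 / 250)) ^ r + 1001 / 4000 * ((2 * r).factorial / r.factorial ^ 2) * (10009 / 10000) ^ r /
      (125 / 2 * ((53 / 250) ^ 2 * (125 / 2)) ^ r) < (contLow r : ℚ)) &&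
  decide (2 * (53 / 250) * (27 / 4) * (27 / 4 * (53 / 250)) ^ r / (125 / 2) +
    1001 / 4000 * ((2 * r + 2).factorial / (r + 1).factorial ^ 2) * (10009 / 10000) ^ r / ((53 / 250) ^ 2 * (125 / 2)) ^ r <
      (contLow (r + 1) : ℚ))

lemma chk_all : ∀ r < 120, chk r = true := by decide +kernel

/-- The exclusion inequality for `ξ = λ` and all parameters at once, with `K = 2` and `g = 53 S / 250`:
`chk` covers `r < 120` (the inequality is hardest at the smallest `S`), `chain_geo` the rest. -/
lemma uniform_step (S Λ : ℝ) (hS : 125 / 2 ≤ S) (h1 : S ≤ Λ) (h2 : Λ ≤ 10009 / 10000 * S) (r ρ : ℕ)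
    (hρ : ρ = r ∨ ρ = r + 1) :
    1 / S * (27 * 1 ^ 2 / (4 * S)) ^ ρ * (2 * (53 / 250 * S) ^ (r + 1)) +
      1001 / 1000 * ((2 * ρ).choose ρ * Λ ^ ρ * 1) / (Λ * (2 * (53 / 250 * S) ^ r) ^ 2) <
      content ρ := by
  have hS0 : 0 < S := by linarith
  have hΛ0 : 0 < Λ := by linarith
  rcases Nat.lt_or_ge r 120 with hr | hr
  · have hc := chk_all r hr
    simp only [chk, Bool.and_eq_true, decide_eq_true_eq] at hc
    obtain ⟨c1, c2⟩ := hc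
    have hch : ∀ n : ℕ, ((2 * n).choose n : ℝ) = (2 * n).factorial / n.factorial ^ 2 := by
      intro n
      rw [Nat.cast_choose ℝ (by omega : n ≤ 2 * n), show 2 * n - n = n by omega, sq]
    have hpow : Λ ^ r ≤ (10009 / 10000) ^ r * S ^ r := by
      rw [← mul_pow]; gcongr
    have hα : (27 * 1 ^ 2 / (4 * S)) ^ r * (53 / 250 * S) ^ r = (27 / 4 * (53 / 250)) ^ r := by
      rw [← mul_pow]; congr 1; field_simp
    have hβ : ((53 / 250 * S) ^ r) ^ 2 = ((53 / 250) ^ 2 * S) ^ r * S ^ r := by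
      rw [← mul_pow, ← pow_mul, mul_comm r 2, pow_mul]; congr 1; ring
    rcases hρ with rfl | rfl
    · have c1' := (Rat.cast_lt (K := ℝ)).2 c1
      push_cast at c1'
      refine lt_of_le_of_lt ?_ (c1'.trans_le (by exact_mod_cast contLow_le ρ))
      rw [hch]
      refine add_le_add (le_of_eq ?_) ?_
      · rw [pow_succ (53 / 250 * S), ← hα]
        generalize (27 * 1 ^ 2 / (4 * S)) ^ ρ = z
        field_simp
      · calc _ ≤ 1001 / 1000 * (((2 * ρ).factorial / ρ.factorial ^ 2) *
            ((10009 / 10000) ^ ρ * S ^ ρ) * 1) / (S * (2 * (53 / 250 * S) ^ ρ) ^ 2) := by gcongr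
          _ = 1001 / 4000 * ((2 * ρ).factorial / ρ.factorial ^ 2) * (10009 / 10000) ^ ρ /
              (S * ((53 / 250) ^ 2 * S) ^ ρ) := by
            rw [mul_pow 2, hβ]
            field_simp
            ring
          _ ≤ _ := by gcongr
    · have c2' := (Rat.cast_lt (K := ℝ)).2 c2
      push_cast at c2'
      refine lt_of_le_of_lt ?_ (c2'.trans_le (by exact_mod_cast contLow_le (r + 1)))
      rw [hch, show 2 * (r + 1) = 2 * r + 2 by ring]
      refine add_le_add ?_ ?_
      · calc _ = 2 * (53 / 250) * (27 / 4) * (27 / 4 * (53 / 250)) ^ r / S := by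
              rw [pow_succ, pow_succ, ← hα]
              field_simp
              ring
          _ ≤ _ := by gcongr
      · calc _ ≤ 1001 / 1000 * (((2 * r + 2).factorial / (r + 1).factorial ^ 2) *
            ((10009 / 10000) ^ r * S ^ r * Λ) * 1) / (Λ * (2 * (53 / 250 * S) ^ r) ^ 2) := by
              rw [pow_succ Λ]; gcongr
          _ = 1001 / 4000 * ((2 * r + 2).factorial / (r + 1).factorial ^ 2) * (10009 / 10000) ^ r /
              ((53 / 250) ^ 2 * S) ^ r := by
            rw [mul_pow 2, hβ]
            field_simp
            ring
          _ ≤ _ := by gcongr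
  · refine chain_geo Λ S 1 1 2 (53 / 250 * S) (29 / 20) one_pos hS0 zero_le_one (by linarith) two_pos
      (by linarith) (by norm_num) 120 ?_ ?_ ?_ ?_ r hr (content_ge_mid r hr)
      (content_ge_mid (r + 1) (by omega)) ρ hρ
    · rw [div_le_one (by positivity)]; linarith
    · rw [div_mul_eq_mul_div, div_le_iff₀ (by positivity)]; linarith
    · rw [div_le_iff₀ (by positivity)]; nlinarith
    · have e1 : 27 * (1 : ℝ) ^ 2 / (4 * S) * (53 / 250 * S) = 1431 / 1000 := by field_simp; norm_num
      have e2 : 1 / S * (53 / 250 * S) * 2 = 106 / 250 := by field_simp; norm_num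
      have e3 : 4 * Λ / (53 / 250 * S) ^ 2 ≤ 1426 / 1000 := by
        rw [div_le_iff₀ (by positivity)]; nlinarith
      rw [e1, e2]
      calc _ ≤ 106 / 250 * (1431 / 1000 : ℝ) ^ 120 + 4004 / 1000 * 1 / 2 ^ 2 * (1426 / 1000) ^ 120 := by
            gcongr
        _ < _ := by norm_num

/-! ### The two forms of the hypergeometric method -/

lemma toC_norm_sq (z : Eis) : ‖toC z‖ ^ 2 = (nm z : ℤ) := by
  rw [← toC_normSq, Complex.normSq_eq_norm_sq]

/-- The element `λ = t + 3 + 3ω`, of norm `t² + 3t + 9`. -/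
def lam (t : ℤ) : Eis := ⟨t + 3, 3⟩

/-- For `t ≥ 61` no Eisenstein integer of norm at least `9` makes `λ η³` nearly real. Here the chain of
approximations starts at `r = 0`. -/
theorem uniform_no (t : ℤ) (ht : 61 ≤ t) (η : Eis) (h : |(lam t * η ^ 3).im| ≤ 3) (hn : 9 ≤ nm η) :
    False := by
  have hre : (lam t).re = t + 3 := rfl
  have ht' : (61 : ℝ) ≤ t := by exact_mod_cast ht
  have hΛ : ‖toC (lam t)‖ ^ 2 = (t + 3 / 2 : ℝ) ^ 2 + 27 / 4 := by
    rw [toC_norm_sq, normDef, hre, show (lam t).im = 3 from rfl]; push_cast; ring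
  have hY : 3 ≤ ‖toC η‖ := by
    have := toC_norm_sq η
    have h9 : (9 : ℝ) ≤ (nm η : ℤ) := by exact_mod_cast hn
    nlinarith [norm_nonneg (toC η)]
  have hη : η ≠ 0 := by
    rintro rfl
    simp at hn
  have hΛ0 := _root_.norm_nonneg (toC (lam t))
  have hS1 : (t + 3 / 2 : ℝ) ≤ ‖toC (lam t)‖ := by nlinarith
  have hS2 : ‖toC (lam t)‖ ≤ 10009 / 10000 * (t + 3 / 2 : ℝ) := by
    refine abs_le_of_sq_le_sq' ?_ (by linarith) |>.2
    rw [hΛ]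
    nlinarith
  have hY3 : (27 : ℝ) ≤ ‖toC η‖ ^ 3 := by
    calc (27 : ℝ) = 3 ^ 3 := by norm_num
      _ ≤ _ := by gcongr
  refine chain (lam t) η 1 1 one_pos rfl (by rw [hre]; linarith) hη h ?_ 2 (53 / 250 * (t + 3 / 2))
    two_pos (by linarith) 0 (by simp; linarith) ?_
  · push_cast
    nlinarith
  · intro r _ ρ hρ
    have := uniform_step (t + 3 / 2) ‖toC (lam t)‖ (by linarith) hS1 hS2 r ρ hρ
    rw [hre]
    push_cast
    rw [show (2 : ℝ) * (t + 3) - 3 * 1 = 2 * (t + 3 / 2) by ring,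
      show (2 : ℝ) * 1 / (2 * (t + 3 / 2)) = 1 / (t + 3 / 2) by field_simp,
      show (2 : ℝ) * (2 * (t + 3 / 2)) = 4 * (t + 3 / 2) by ring]
    exact this

/-- The hypergeometric method for a general `ξ = x + 3Mω`: no `η` with `‖η‖ ≥ g^N`, `N ≥ 2800`, makes
`ξ η³` nearly real. In this range the content is at least `(8/5)^r`. -/
theorem base_no (ξ η : Eis) (M W : ℤ) (L g β : ℝ) (N : ℕ) (hN : 2800 ≤ N) (hM : 0 < M) (hξ : ξ.im = 3 * M)
    (hs : 0 < 2 * ξ.re - 3 * M) (hW : |(ξ * η ^ 3).im| ≤ 3 * W) (hWb : W ≤ 10 ^ 25) (hL0 : 0 ≤ L)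
    (hL : (nm ξ : ℤ) ≤ L ^ 2) (hg : 2 ≤ g) (ha : 27 * M ^ 2 * g ≤ 2 * (2 * ξ.re - 3 * M) * β)
    (hb : 4 * L ≤ β * g ^ 2) (hM2 : 27 * M ^ 2 ≤ 2 * (2 * ξ.re - 3 * M))
    (hMg : 2 * M * g ≤ 2 * ξ.re - 3 * M) (hβ1 : β ≤ 8 / 5)
    (hβ : (1 + 4004 / 1000 * W) * β ^ N < (8 / 5) ^ N)
    (hstart : g ^ N ≤ ‖toC η‖) : False := by
  have hs' : (0 : ℝ) < 2 * ξ.re - 3 * M := by exact_mod_cast hs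
  have hM' : (0 : ℝ) < M := by exact_mod_cast hM
  have hM2' : 27 * (M : ℝ) ^ 2 ≤ 2 * (2 * ξ.re - 3 * M) := by exact_mod_cast hM2
  have hW0 : (0 : ℝ) ≤ W := by
    have : 0 ≤ 3 * W := (abs_nonneg _).trans hW
    exact_mod_cast (by omega : 0 ≤ W)
  have hg0 : 0 < g := by linarith
  have hη : η ≠ 0 := by
    rintro rfl
    rw [map_zero, norm_zero] at hstart
    exact absurd hstart (not_le.2 (by positivity))
  have hξ0 : ξ ≠ 0 := by
    rintro rfl
    simp at hξ
    omega
  have hΛ1 : 1 ≤ ‖toC ξ‖ := by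
    have h1 : 1 ≤ nm ξ := by
      have := norm_nonneg ξ
      rcases eq_or_ne (nm ξ) 0 with h | h
      · exact absurd (norm_eq_zero h) hξ0
      · omega
    have h2 := toC_norm_sq ξ
    have h3 : (1 : ℝ) ≤ (nm ξ : ℤ) := by exact_mod_cast h1
    nlinarith [_root_.norm_nonneg (toC ξ)]
  have hΛL : ‖toC ξ‖ ≤ L := by
    refine abs_le_of_sq_le_sq' ?_ hL0 |>.2
    rw [toC_norm_sq]
    exact hL
  have hbig : (2 : ℝ) ^ N ≤ ‖toC η‖ := le_trans (by gcongr) hstart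
  have hbig1 : (10 : ℝ) ^ 30 ≤ ‖toC η‖ := by
    refine le_trans ?_ hbig
    calc (10 : ℝ) ^ 30 ≤ 2 ^ 100 := by norm_num
      _ ≤ 2 ^ N := pow_le_pow_right₀ one_le_two (by omega)
  have hWb' : (W : ℝ) ≤ 10 ^ 25 := by exact_mod_cast hWb
  refine chain ξ η M W hM hξ hs hη hW ?_ 1 g one_pos (by linarith) N (by rwa [one_mul]) ?_
  · have h3 : ‖toC η‖ ≤ ‖toC η‖ ^ 3 := le_self_pow₀ (by linarith) (by norm_num)
    have h4 : ‖toC η‖ ^ 3 ≤ ‖toC ξ‖ * ‖toC η‖ ^ 3 := le_mul_of_one_le_left (by positivity) hΛ1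
    linarith
  · intro r hr ρ hρ
    have e1 : 27 * (M : ℝ) ^ 2 / (4 * ((2 * ξ.re - 3 * M) / 2)) * g ≤ β := by
      rw [div_mul_eq_mul_div, div_le_iff₀ (by positivity)]; linarith
    have e2 : 4 * ‖toC ξ‖ / g ^ 2 ≤ β := by
      rw [div_le_iff₀ (by positivity)]; linarith
    have e3 : (M : ℝ) / ((2 * ξ.re - 3 * M) / 2) * g * 1 ≤ 1 := by
      rw [mul_one, div_mul_eq_mul_div, div_le_one (by positivity)]; linarith
    have := chain_geo ‖toC ξ‖ ((2 * ξ.re - 3 * M) / 2) M W 1 g (8 / 5) hM' (by positivity) hW0 hΛ1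
      one_pos (by linarith) (by norm_num) N (by rw [div_le_one (by positivity)]; linarith)
      (e1.trans hβ1) (e2.trans hβ1) ?_ r hr (content_ge_large r (hN.trans hr))
      (content_ge_large (r + 1) (by omega)) ρ hρ
    · have e4 : 2 * (M : ℝ) / (2 * ξ.re - 3 * M) = M / ((2 * ξ.re - 3 * M) / 2) := by field_simp
      have e5 : (2 : ℝ) * (2 * ξ.re - 3 * M) = 4 * ((2 * ξ.re - 3 * M) / 2) := by ring
      rw [e4, e5]
      exact this
    · refine lt_of_le_of_lt ?_ hβ
      have f1 : (27 * (M : ℝ) ^ 2 / (4 * ((2 * ξ.re - 3 * M) / 2)) * g) ^ N ≤ β ^ N := by gcongr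
      have f2 : (4 * ‖toC ξ‖ / g ^ 2) ^ N ≤ β ^ N := by gcongr
      calc _ ≤ 1 * β ^ N + 4004 / 1000 * W / 1 ^ 2 * β ^ N := by gcongr
        _ = _ := by ring

/-! ### Reduction of the Thue equation to cubes -/

/-- `δ = A + λ B`, for the parameter `t`. -/
def dl (t A B : ℤ) : Eis := ⟨A + (t + 3) * B, 3 * B⟩

/-- No cube `A + λ B` with `A² - (t² + 3t + 9) B² = 1` other than those with `B = 0`. -/
def NoCube (t : ℤ) : Prop :=
  ∀ (A B : ℤ) (β : Eis), A ^ 2 - (t ^ 2 + 3 * t + 9) * B ^ 2 = 1 → dl t A B = β ^ 3 → B = 0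

/-- A cube `δ = β³` yields the excellent approximation `η = β̄²`: the coefficient of `ω` in `λ η³` is
only `3`. -/
lemma im_pow (t A B : ℤ) (β : Eis) (h : A ^ 2 - (t ^ 2 + 3 * t + 9) * B ^ 2 = 1)
    (hβ : dl t A B = β ^ 3) : (lam t * (star β ^ 2) ^ 3).im = 3 := by
  have h1 : (star β ^ 2) ^ 3 = star (dl t A B) ^ 2 := by
    rw [hβ, star_pow]; ring
  rw [h1]
  simp only [lam, dl, sq, QuadraticAlgebra.im_mul, QuadraticAlgebra.re_mul, QuadraticAlgebra.re_star, QuadraticAlgebra.im_star]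
  linear_combination 3 * h

lemma nm_star (z : Eis) : nm (star z) = nm z := by
  rw [normDef, normDef]
  simp only [QuadraticAlgebra.re_star, QuadraticAlgebra.im_star]
  ring

lemma nm_dl (t A B : ℤ) : nm (dl t A B) = A ^ 2 + (2 * t + 3) * A * B + (t ^ 2 + 3 * t + 9) * B ^ 2 := by
  rw [normDef]; simp only [dl]; ring

lemma noCube_large (t : ℤ) (ht : 61 ≤ t) : NoCube t := by
  intro A B β h hβ
  by_contra hB
  refine uniform_no t ht (star β ^ 2) (by rw [im_pow t A B β h hβ]; norm_num) ?_
  rw [map_pow, nm_star]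
  have h1 : nm β ^ 3 = A ^ 2 + (2 * t + 3) * A * B + (t ^ 2 + 3 * t + 9) * B ^ 2 := by
    rw [← map_pow, ← hβ, nm_dl]
  have h2 : 2 < nm β := by
    by_contra hc
    have h3 : nm β ^ 3 ≤ 2 ^ 3 := pow_le_pow_left₀ (norm_nonneg β) (by omega) 3
    rw [h1] at h3
    have h5 : B ^ 2 < 2 := by nlinarith [sq_nonneg (2 * A + (2 * t + 3) * B)]
    have h6 : B ^ 2 = 1 := by
      have : 0 < B ^ 2 := by positivity
      omega
    rw [h6] at h
    have h7 : t + 1 < |A| := by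
      refine lt_of_pow_lt_pow_left₀ 2 (abs_nonneg _) ?_
      rw [sq_abs]; nlinarith
    have h8 : |A| < t + 2 := by
      refine lt_of_pow_lt_pow_left₀ 2 (by omega) ?_
      rw [sq_abs]; nlinarith
    omega
  nlinarith

/-- The factorisation `F = A² - D B²` with `A` the simplest cubic form and `B = xy(x + y)`. -/
lemma F6_eq (t x y : ℤ) : F6 t x y =
    (x ^ 3 - t * x ^ 2 * y - (t + 3) * x * y ^ 2 - y ^ 3) ^ 2 -
      (t ^ 2 + 3 * t + 9) * (x * y * (x + y)) ^ 2 := by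
  simp [F6]; ring

lemma even_mul3 (x y : ℤ) : Even (x * y * (x + y)) := by
  rcases Int.even_or_odd x with h | h <;> rcases Int.even_or_odd y with h' | h' <;>
    simp [Int.even_mul, Int.even_add, h, h']
  exact Or.inr (by simp [Int.not_even_iff_odd.2 h, Int.not_even_iff_odd.2 h'])

/-- The symmetry that reduces the problem to `t ≥ -1`. -/
lemma F6_swap (t x y : ℤ) : F6 t x y = F6 (-3 - t) y x := by
  simp [F6]; ring

/-- A solution gives the cube `A + λ B = (x + y + yω)³`; the value `-1` is impossible modulo `4`, since
`B` is even. -/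
lemma F6_forces (t x y : ℤ) (hN : NoCube t) (h : F6 t x y = 1 ∨ F6 t x y = -1) :
    x * y * (x + y) = 0 := by
  rw [F6_eq] at h
  rcases h with h | h
  · refine hN _ _ (⟨x + y, y⟩ : Eis) h ?_
    simp only [dl, pow_succ, pow_zero, one_mul]
    ext
    · simp only [QuadraticAlgebra.im_mul, QuadraticAlgebra.re_mul]; ring
    · simp only [QuadraticAlgebra.im_mul, QuadraticAlgebra.re_mul]; ring
  · exfalso
    obtain ⟨b, hb⟩ := even_mul3 x y
    rw [hb] at h
    generalize x ^ 3 - t * x ^ 2 * y - (t + 3) * x * y ^ 2 - y ^ 3 = a at h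
    have h2 : (a ^ 2) % 4 = 3 := by
      have : a ^ 2 = 4 * ((t ^ 2 + 3 * t + 9) * b ^ 2) - 1 := by linear_combination h
      omega
    rcases Int.emod_two_eq_zero_or_one a with h3 | h3 <;>
      · have := Int.emod_emod_of_dvd a (by norm_num : (2 : ℤ) ∣ 4)
        have h4 : a % 4 = 0 ∨ a % 4 = 1 ∨ a % 4 = 2 ∨ a % 4 = 3 := by omega
        rcases h4 with h4 | h4 | h4 | h4 <;> simp [pow_two, Int.mul_emod, h4] at h2

/-- The theorem follows from `NoCube` for `t ≥ -1`; the excluded parameters are `0`, `5` and their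
images `-3`, `-8` under `t ↦ -3 - t`. -/
lemma reduction (hN : ∀ t : ℤ, -1 ≤ t → t ≠ 0 → t ≠ 5 → NoCube t)
    (t : ℤ) (ht : t ≠ -8 ∧ t ≠ -3 ∧ t ≠ 0 ∧ t ≠ 5) (x y : ℤ) :
    (F6 t x y = 1 ∨ F6 t x y = -1) ↔ ((x, y) = (1, 0) ∨ (x, y) = (-1, 0) ∨ (x, y) = (0, 1) ∨
      (x, y) = (0, -1) ∨ (x, y) = (1, -1) ∨ (x, y) = (-1, 1)) := by
  obtain ⟨h1, h2, h3, h4⟩ := ht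
  constructor
  · intro h
    have hB : x * y * (x + y) = 0 := by
      rcases le_or_gt (-1) t with h5 | h5
      · exact F6_forces t x y (hN t h5 h3 h4) h
      · have := F6_forces (-3 - t) y x (hN _ (by omega) (by omega) (by omega))
          (by rwa [← F6_swap])
        linarith
    have h6 : ∀ z : ℤ, z ^ 6 = 1 ∨ z ^ 6 = -1 → z = 1 ∨ z = -1 := by
      intro z hz
      have : z ^ 6 = 1 := by
        rcases hz with hz | hz
        · exact hz
        · have := (by positivity : 0 ≤ (z ^ 3) ^ 2)
          have h7 : (z ^ 3) ^ 2 = z ^ 6 := by ring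
          omega
      exact (pow_eq_one_iff_of_ne_zero (by norm_num)).1 this |>.imp id (fun h => h.1)
    rcases mul_eq_zero.1 hB with hB | hB
    · rcases mul_eq_zero.1 hB with rfl | rfl
      · have : F6 t 0 y = y ^ 6 := by simp [F6]
        rw [this] at h
        rcases h6 y h with rfl | rfl <;> simp
      · have : F6 t x 0 = x ^ 6 := by simp [F6]
        rw [this] at h
        rcases h6 x h with rfl | rfl <;> simp
    · obtain rfl : y = -x := by linarith
      have : F6 t x (-x) = x ^ 6 := by simp [F6]; ring
      rw [this] at h
      rcases h6 x h with rfl | rfl <;> simp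
  · simp only [Prod.mk.injEq]
    rintro (⟨rfl, rfl⟩ | ⟨rfl, rfl⟩ | ⟨rfl, rfl⟩ | ⟨rfl, rfl⟩ | ⟨rfl, rfl⟩ | ⟨rfl, rfl⟩) <;> left <;>
      simp [F6] <;> ring

/-! ### Residue maps of Eisenstein integers -/

namespace Eis

lemma om_ne_one : om ≠ 1 := by
  intro h; have := congrArg QuadraticAlgebra.im h; simp [om] at this

lemma om_prim : IsPrimitiveRoot om 3 :=
  IsPrimitiveRoot.of_map_of_injective (f := MonoidHom.id Eis) (by
    simpa using (IsPrimitiveRoot.mk_of_lt om (by norm_num) om_cube (by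
      intro l h1 h2 h3
      interval_cases l
      · exact om_ne_one (by simpa using h3)
      · have := congrArg QuadraticAlgebra.im h3; simp [om, sq] at this))) (fun _ _ h => h)

lemma star_om : star om = om ^ 2 := by
  rw [star_eq]; simp [om]

lemma int_frob {q : ℕ} {K : Type*} [Field K] [CharP K q] [Fact q.Prime] (n : ℤ) :
    (n : K) ^ q = n := by
  rw [← frobenius_def, map_intCast]

lemma om_pow_mod (n : ℕ) : om ^ n = om ^ (n % 3) := by
  conv_lhs => rw [← Nat.mod_add_div n 3]
  rw [pow_add, pow_mul, om_cube, one_pow, mul_one]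

/-- The Frobenius of a split prime acts trivially on a residue map. -/
lemma frob_one {q : ℕ} {K : Type*} [Field K] [CharP K q] [hq : Fact q.Prime] (φ : Eis →+* K)
    (h : q % 3 = 1) (z : Eis) : φ z ^ q = φ z := by
  rw [map_eq φ z, add_pow_char, mul_pow, int_frob, int_frob, ← map_pow, om_pow_mod, h, pow_one]

/-- The Frobenius of an inert prime acts on a residue map as conjugation. -/
lemma frob_two {q : ℕ} {K : Type*} [Field K] [CharP K q] [hq : Fact q.Prime] (φ : Eis →+* K)
    (h : q % 3 = 2) (z : Eis) : φ z ^ q = φ (star z) := by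
  rw [map_eq φ z, add_pow_char, mul_pow, int_frob, int_frob, ← map_pow, om_pow_mod, h, star_eq]
  simp

/-- In characteristic different from `3` the cube roots of unity stay distinct. -/
lemma phi_om_ne {q : ℕ} {K : Type*} [Field K] [CharP K q] [hq : Fact q.Prime] (φ : Eis →+* K)
    (h3 : q ≠ 3) : φ om ≠ 1 := by
  intro h
  have h1 := congrArg φ om_sq
  simp only [map_mul, map_sub, map_neg, map_one, h] at h1
  have h2 : ((3 : ℕ) : K) = 0 := by push_cast; linear_combination h1
  rw [CharP.cast_eq_zero_iff K q] at h2
  exact h3 ((Nat.prime_dvd_prime_iff_eq hq.1 Nat.prime_three).1 h2)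

lemma phi_om_cases {q : ℕ} {K : Type*} [Field K] [CharP K q] [hq : Fact q.Prime] (φ : Eis →+* K)
    (h3 : q ≠ 3) {z : Eis} (hz : z ^ 3 = 1) (h : φ z = 1) : z = 1 := by
  obtain ⟨i, hi, rfl⟩ := om_prim.eq_pow_of_pow_eq_one hz
  interval_cases i
  · simp
  · simp only [pow_one] at h; exact absurd h (phi_om_ne φ h3)
  · exfalso; apply phi_om_ne φ h3
    have : φ om ^ 3 = 1 := by rw [← map_pow, om_cube, map_one]
    rw [map_pow] at h
    rw [pow_succ, h, one_mul] at this; exact this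

/-- An Eisenstein integer killed by a residue map and by its conjugate is divisible by `q`. -/
lemma both_kill {q : ℕ} {K : Type*} [Field K] [CharP K q] [hq : Fact q.Prime] (φ : Eis →+* K)
    (h3 : q ≠ 3) {z : Eis} (h1 : φ z = 0) (h2 : φ (star z) = 0) : ((q : ℤ) : Eis) ∣ z := by
  rw [dvd_int_iff]
  rw [map_eq φ z] at h1
  rw [star_eq] at h2
  simp only [map_add, map_mul, map_intCast, map_pow] at h2
  have h4 : φ om ≠ 0 := fun h => by
    have : φ om ^ 3 = 1 := by rw [← map_pow, om_cube, map_one]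
    rw [h] at this; norm_num at this
  have h5 : (z.im : K) = 0 := by
    have : (z.im : K) * (φ om * (φ om - 1)) = 0 := by linear_combination h2 - h1
    exact (mul_eq_zero.1 this).resolve_right (mul_ne_zero h4 (sub_ne_zero.2 (phi_om_ne φ h3)))
  have h6 : (z.re : K) = 0 := by simpa [h5] using h1
  exact ⟨(CharP.intCast_eq_zero_iff K q _).1 h6, (CharP.intCast_eq_zero_iff K q _).1 h5⟩

end Eis

/-! ### Cubic characters and Jacobi sums -/

namespace Eis

/-- A nontrivial cubic character of `ZMod p` with values in the Eisenstein integers. -/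
structure Cubic (p : ℕ) [Fact p.Prime] (χ : MulChar (ZMod p) Eis) : Prop where
  cube : χ ^ 3 = 1
  ne : χ ≠ 1

lemma Cubic.order {p : ℕ} [Fact p.Prime] {χ : MulChar (ZMod p) Eis} (h : Cubic p χ) :
    orderOf χ = 3 := orderOf_eq_prime h.cube h.ne

lemma Cubic.inv {p : ℕ} [Fact p.Prime] {χ : MulChar (ZMod p) Eis} (h : Cubic p χ) :
    Cubic p χ⁻¹ := ⟨by rw [inv_pow, h.cube, inv_one], by simpa using h.ne⟩

lemma Cubic.inv_eq {p : ℕ} [Fact p.Prime] {χ : MulChar (ZMod p) Eis} (h : Cubic p χ) :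
    χ⁻¹ = χ ^ 2 := by
  rw [inv_eq_iff_mul_eq_one, ← pow_succ', h.cube]

lemma Cubic.val {p : ℕ} [Fact p.Prime] {χ : MulChar (ZMod p) Eis} (h : Cubic p χ) {a : ZMod p}
    (ha : a ≠ 0) : χ a ^ 3 = 1 := by
  rw [← MulChar.pow_apply' _ (by norm_num), h.cube, MulChar.one_apply (isUnit_iff_ne_zero.2 ha)]

lemma star_root {z : Eis} (hz : z ^ 3 = 1) : star z = z ^ 2 := by
  obtain ⟨i, hi, rfl⟩ := om_prim.eq_pow_of_pow_eq_one hz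
  rw [star_pow, star_om, ← pow_mul, ← pow_mul, mul_comm]

lemma Cubic.star_comp {p : ℕ} [Fact p.Prime] {χ : MulChar (ZMod p) Eis} (h : Cubic p χ) :
    χ.ringHomComp (starRingEnd Eis) = χ⁻¹ := by
  rw [h.inv_eq]
  apply MulChar.ext
  intro a
  rw [MulChar.ringHomComp_apply, MulChar.pow_apply' _ (by norm_num), starRingEnd_apply,
    star_root (h.val a.ne_zero)]

lemma Cubic.jac_star {p : ℕ} [Fact p.Prime] {χ : MulChar (ZMod p) Eis} (h : Cubic p χ) :
    jacobiSum χ⁻¹ χ⁻¹ = star (jacobiSum χ χ) := by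
  rw [← h.star_comp, jacobiSum_ringHomComp, starRingEnd_apply]

lemma Cubic.comp_ne {p : ℕ} [Fact p.Prime] {χ : MulChar (ZMod p) Eis} (h : Cubic p χ)
    {K : Type*} [Field K] (φ : Eis →+* K) (hφ : φ om ≠ 1) : χ.ringHomComp φ ≠ 1 := by
  intro hc
  apply h.ne
  apply MulChar.ext
  intro a
  have h1 : φ (χ a) = 1 := by
    rw [← MulChar.ringHomComp_apply, hc, MulChar.one_apply_coe]
  rw [MulChar.one_apply_coe]
  obtain ⟨i, hi, h2⟩ := om_prim.eq_pow_of_pow_eq_one (h.val a.ne_zero)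
  have h4 : φ om ^ 3 = 1 := by rw [← map_pow, om_cube, map_one]
  rw [← h2] at h1 ⊢
  interval_cases i
  · simp
  · simp only [pow_one] at h1; exact absurd h1 hφ
  · exfalso; apply hφ
    rw [map_pow] at h1
    rw [pow_succ, h1, one_mul] at h4; exact h4

lemma Cubic.comp_cube {p : ℕ} [Fact p.Prime] {χ : MulChar (ZMod p) Eis} (h : Cubic p χ)
    {K : Type*} [Field K] (φ : Eis →+* K) : (χ.ringHomComp φ) ^ 3 = 1 := by
  apply MulChar.ext
  intro a
  rw [MulChar.pow_apply' _ (by norm_num), MulChar.ringHomComp_apply, ← map_pow, h.val a.ne_zero,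
    map_one, MulChar.one_apply_coe]

lemma Cubic.comp_inv {p : ℕ} [Fact p.Prime] {χ : MulChar (ZMod p) Eis} (h : Cubic p χ)
    {K : Type*} [Field K] (φ : Eis →+* K) : (χ.ringHomComp φ)⁻¹ = χ⁻¹.ringHomComp φ := by
  rw [inv_eq_iff_mul_eq_one]
  apply MulChar.ext
  intro a
  rw [MulChar.mul_apply, MulChar.ringHomComp_apply, MulChar.ringHomComp_apply, ← map_mul,
    ← MulChar.mul_apply, mul_inv_cancel, MulChar.one_apply_coe, map_one, MulChar.one_apply_coe]

lemma toC_om_ne : toC om ≠ 1 := fun h => om_ne_one (toC_injective (by rw [h, map_one]))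

lemma Cubic.norm {p : ℕ} [hp : Fact p.Prime] {χ : MulChar (ZMod p) Eis} (h : Cubic p χ) :
    jacobiSum χ χ * star (jacobiSum χ χ) = (p : Eis) := by
  apply toC_injective
  have h1 : χ.ringHomComp toC ≠ 1 := h.comp_ne toC toC_om_ne
  have h2 : χ.ringHomComp toC * χ.ringHomComp toC ≠ 1 := by
    intro hc
    apply h1
    have := h.comp_cube toC
    rw [pow_succ, sq, hc, one_mul] at this
    exact this
  have h3 := jacobiSum_mul_jacobiSum_inv (F := ZMod p) (F' := ℂ)
    (by rw [ringChar.eq_zero, ZMod.ringChar_zmod_n]; exact hp.1.ne_zero.symm) h1 h1 h2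
  rw [h.comp_inv, jacobiSum_ringHomComp, jacobiSum_ringHomComp, h.jac_star, ZMod.card] at h3
  rw [map_mul, h3, map_natCast]

/-- Jacobi sums are primary: `J(χ, χ) ≡ -1` modulo `3`. -/
lemma Cubic.mod_three {p : ℕ} [hp : Fact p.Prime] {χ : MulChar (ZMod p) Eis} (h : Cubic p χ)
    (hp3 : p % 3 = 1) : (3 : Eis) ∣ jacobiSum χ χ + 1 := by
  obtain ⟨z, -, hz⟩ := exists_jacobiSum_eq_neg_one_add (n := 3) (by norm_num) h.cube h.cube
    (by rw [ZMod.card]; omega) om_prim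
  refine ⟨-(z * om), ?_⟩
  rw [hz]
  linear_combination z * om_sq

lemma Cubic.neg_one {p : ℕ} [hp : Fact p.Prime] {χ : MulChar (ZMod p) Eis} (h : Cubic p χ) :
    χ (-1) = 1 := by
  have h1 : χ (-1) ^ 3 = 1 := h.val (by simp)
  have h2 : χ (-1) ^ 2 = 1 := by rw [← map_pow]; simp
  rw [pow_succ, h2, one_mul] at h1
  exact h1

/-- The cubic character attached to a residue map `ρ` modulo `p`, normalised so that its Jacobi
sum lies in the kernel of `ρ`. -/
lemma exists_cubic (p : ℕ) [hp : Fact p.Prime] (hp3 : p % 3 = 1) (ρ : Eis →+* ZMod p) :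
    ∃ χ : MulChar (ZMod p) Eis, Cubic p χ ∧ ρ (jacobiSum χ χ) = 0 := by
  obtain ⟨χ, hχ⟩ := MulChar.exists_mulChar_orderOf (ZMod p) (n := 3)
    (by rw [ZMod.card]; omega) om_prim
  have hc : Cubic p χ := ⟨by rw [← hχ, pow_orderOf_eq_one], by
    rintro rfl; rw [orderOf_one] at hχ; omega⟩
  have h1 : ρ (jacobiSum χ χ) * ρ (star (jacobiSum χ χ)) = 0 := by
    rw [← map_mul, hc.norm, map_natCast, ZMod.natCast_self]
  rcases mul_eq_zero.1 h1 with h | h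
  · exact ⟨χ, hc, h⟩
  · exact ⟨χ⁻¹, hc.inv, by rw [hc.jac_star, h]⟩

/-- The cubic reciprocity relation between `J = J(χ, χ)` and a rational prime `q`, obtained by
raising a Gauss sum in characteristic `q` to the power `q`. -/
lemma Cubic.recip {p : ℕ} [hp : Fact p.Prime] {χ : MulChar (ZMod p) Eis} (h : Cubic p χ)
    {q : ℕ} [hq : Fact q.Prime] (hqp : q ≠ p) (h3 : q ≠ 3) {K : Type*} [Field K] [CharP K q]
    [IsAlgClosed K] (φ : Eis →+* K) :
    (q % 3 = 1 → φ (jacobiSum χ χ) ^ ((q - 1) / 3) =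
      φ (χ q) * φ (star (jacobiSum χ χ)) ^ ((q - 1) / 3)) ∧
    (q % 3 = 2 → φ (star (jacobiSum χ χ)) ^ ((q + 1) / 3) =
      φ (χ q) * φ (jacobiSum χ χ) ^ ((q + 1) / 3)) := by
  have hpK : (p : K) ≠ 0 := by
    intro hc
    rw [CharP.cast_eq_zero_iff K q] at hc
    exact hqp ((Nat.prime_dvd_prime_iff_eq hq.1 hp.1).1 hc)
  have : NeZero (p : K) := ⟨hpK⟩
  have : NeZero p := ⟨hp.1.ne_zero⟩
  obtain ⟨ζ, hζ⟩ := HasEnoughRootsOfUnity.exists_primitiveRoot K p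
  have hψ := AddChar.zmodChar_primitive_of_primitive_root p hζ
  set ψ := AddChar.zmodChar p ((IsPrimitiveRoot.iff_def ζ p).mp hζ).left
  set X := χ.ringHomComp φ with hX
  set J := jacobiSum χ χ with hJ
  have hX1 : X ≠ 1 := h.comp_ne φ (phi_om_ne φ h3)
  have hXc : X ^ 3 = 1 := h.comp_cube φ
  have hXo : orderOf X = 3 := orderOf_eq_prime hXc hX1
  have hXn : X (-1) = 1 := by rw [hX, MulChar.ringHomComp_apply, h.neg_one, map_one]
  have hXi : X⁻¹ = X ^ 2 := by rw [inv_eq_iff_mul_eq_one, ← pow_succ', hXc]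
  have hJJ : φ J * φ (star J) = p := by rw [← map_mul, h.norm, map_natCast]
  have hJ0 : φ J ≠ 0 := fun hc => hpK (by rw [← hJJ, hc, zero_mul])
  have hJ0' : φ (star J) ≠ 0 := fun hc => hpK (by rw [← hJJ, hc, mul_zero])
  have hg0 : gaussSum X ψ ≠ 0 := gaussSum_ne_zero_of_nontrivial (by rwa [ZMod.card]) hX1 hψ
  -- `g³ = p J = J² J̄`
  have hg3 : gaussSum X ψ ^ 3 = φ J ^ 2 * φ (star J) := by
    have h1 := gaussSum_pow_eq_prod_jacobiSum (χ := X) (ψ := ψ) (by rw [hXo]; norm_num) hψ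
    rw [hXo, hXn, ZMod.card] at h1
    have h2 : ∏ i ∈ Ico 1 (3 - 1), jacobiSum X (X ^ i) = jacobiSum X X := by simp
    rw [h2, hX, jacobiSum_ringHomComp, ← hJ] at h1
    rw [h1, ← hJJ]; ring
  have hqu : IsUnit ((q : ℕ) : ZMod p) := by
    rw [isUnit_iff_ne_zero, Ne, ZMod.natCast_eq_zero_iff]
    intro hc
    exact hqp ((Nat.prime_dvd_prime_iff_eq hp.1 hq.1).1 hc).symm
  have hfr : gaussSum X ψ ^ q = (X ^ q)⁻¹ (q : ZMod p) * gaussSum (X ^ q) ψ := by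
    rw [gaussSum_frob, AddChar.pow_mulShift, ← hqu.unit_spec, gaussSum_mulShift_eq, hqu.unit_spec]
  have hXq : X (q : ZMod p) = φ (χ q) := by rw [hX, MulChar.ringHomComp_apply]
  have hXq3 : φ (χ q) ^ 3 = 1 := by
    rw [← map_pow, h.val (isUnit_iff_ne_zero.1 hqu), map_one]
  constructor
  · intro hq1
    have hXpow : X ^ q = X := by
      conv_lhs => rw [← Nat.mod_add_div q 3, pow_add, pow_mul, hXc, one_pow, mul_one, hq1, pow_one]
    rw [hXpow, hXi, MulChar.pow_apply' _ (by norm_num), hXq] at hfr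
    obtain ⟨e, he⟩ : ∃ e, q = 3 * e + 1 := ⟨q / 3, by omega⟩
    have he' : (q - 1) / 3 = e := by omega
    rw [he']
    have h1 : gaussSum X ψ ^ (3 * e) = φ (χ q) ^ 2 := by
      apply mul_right_cancel₀ hg0
      rw [← hfr, ← pow_succ, ← he]
    rw [pow_mul, hg3, mul_pow, ← pow_mul] at h1
    have h2 : φ J ^ (3 * e) = 1 := by
      apply mul_right_cancel₀ hJ0
      rw [← pow_succ, ← he, one_mul, frob_one φ hq1]
    have h4 : φ J ^ (3 * e) = φ J ^ e * φ J ^ (2 * e) := by rw [← pow_add]; congr 1; ring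
    calc φ J ^ e = φ J ^ e * φ (χ q) ^ 3 := by rw [hXq3, mul_one]
      _ = φ (χ q) * (φ J ^ e * φ (χ q) ^ 2) := by ring
      _ = φ (χ q) * (φ J ^ (3 * e) * φ (star J) ^ e) := by rw [← h1, h4]; ring
      _ = _ := by rw [h2, one_mul]
  · intro hq2
    have hXpow : X ^ q = X⁻¹ := by
      conv_lhs => rw [← Nat.mod_add_div q 3, pow_add, pow_mul, hXc, one_pow, mul_one, hq2]
      rw [hXi]
    have hgg := gaussSum_mul_gaussSum_pow_orderOf_sub_one hX1 hψ
    rw [hXo, hXn, ZMod.card, one_mul, show 3 - 1 = 2 from rfl, ← hXi] at hgg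
    rw [hXpow, inv_inv, hXq] at hfr
    obtain ⟨e, he⟩ : ∃ e, q + 1 = 3 * e := ⟨(q + 1) / 3, by omega⟩
    have he' : (q + 1) / 3 = e := by omega
    rw [he']
    have h1 : gaussSum X ψ ^ (3 * e) = φ (χ q) * (φ J * φ (star J)) := by
      rw [← he, pow_succ, hfr, hJJ, ← hgg]; ring
    rw [pow_mul, hg3, mul_pow, ← pow_mul] at h1
    have h2 : φ J ^ (3 * e) = φ J * φ (star J) := by
      rw [← he, pow_succ, frob_two φ hq2]; ring
    have h4 : φ J ^ (3 * e) = φ J ^ e * φ J ^ (2 * e) := by rw [← pow_add]; congr 1; ring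
    apply mul_left_cancel₀ (pow_ne_zero (2 * e) hJ0)
    rw [h1, ← h2, h4]; ring

end Eis

/-! ### The cubic residue symbol -/

namespace Eis

/-- `X` is the cubic residue symbol `n ↦ (n / δ)₃` on the rational integers: its values are cube roots
of unity, they depend only on the class modulo `δ` up to cubes, and at the primes `q ≠ 3` they are
described by cubic reciprocity, as an Euler criterion for `δ` modulo `q`. -/
structure IsSymbol (δ : Eis) (X : ℤ →* Eis) : Prop where
  cube : ∀ n, IsCoprime n (nm δ) → X n ^ 3 = 1
  congr : ∀ (n m : ℤ) (θ : Eis), δ ∣ (n : Eis) * θ ^ 3 - m → IsCoprime m (nm δ) → X n = X m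
  rel_one : ∀ q : ℕ, q.Prime → q % 3 = 1 → IsCoprime (q : ℤ) (nm δ) →
    ((q : ℤ) : Eis) ∣ δ ^ ((q - 1) / 3) - X q * star δ ^ ((q - 1) / 3)
  rel_two : ∀ q : ℕ, q.Prime → q % 3 = 2 → IsCoprime (q : ℤ) (nm δ) →
    ((q : ℤ) : Eis) ∣ star δ ^ ((q + 1) / 3) - X q * δ ^ ((q + 1) / 3)

lemma exists_hom (q : ℕ) [Fact q.Prime] :
    ∃ _φ : Eis →+* AlgebraicClosure (ZMod q), True := by
  obtain ⟨u, hu⟩ := IsAlgClosed.exists_root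
    (Polynomial.X ^ 2 + Polynomial.X + 1 : Polynomial (AlgebraicClosure (ZMod q))) (by
      rw [show (Polynomial.X ^ 2 + Polynomial.X + 1 : Polynomial (AlgebraicClosure (ZMod q))) =
        Polynomial.C 1 * Polynomial.X ^ 2 + Polynomial.C 1 * Polynomial.X + Polynomial.C 1 by simp,
        Polynomial.degree_quadratic one_ne_zero]
      norm_num)
  refine ⟨hom u ?_, trivial⟩
  simp only [Polynomial.IsRoot.def, Polynomial.eval_add, Polynomial.eval_pow, Polynomial.eval_X,
    Polynomial.eval_one] at hu
  linear_combination hu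

instance charP_closure (q : ℕ) [Fact q.Prime] : CharP (AlgebraicClosure (ZMod q)) q :=
  charP_of_injective_algebraMap (algebraMap (ZMod q) (AlgebraicClosure (ZMod q))).injective q

lemma Cubic.rel_one {p : ℕ} [hp : Fact p.Prime] {χ : MulChar (ZMod p) Eis} (h : Cubic p χ)
    {q : ℕ} (hq : q.Prime) (hqp : q ≠ p) (h1 : q % 3 = 1) :
    ((q : ℤ) : Eis) ∣ jacobiSum χ χ ^ ((q - 1) / 3) -
      χ q * star (jacobiSum χ χ) ^ ((q - 1) / 3) := by
  have : Fact q.Prime := ⟨hq⟩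
  have h3 : q ≠ 3 := by rintro rfl; omega
  obtain ⟨φ, -⟩ := exists_hom q
  have key : ∀ φ : Eis →+* AlgebraicClosure (ZMod q), φ (jacobiSum χ χ ^ ((q - 1) / 3) -
      χ q * star (jacobiSum χ χ) ^ ((q - 1) / 3)) = 0 := by
    intro φ
    rw [map_sub, map_mul, map_pow, map_pow, (h.recip hqp h3 φ).1 h1, sub_self]
  exact both_kill φ h3 (key φ) (key (φ.comp (starRingEnd Eis)))

lemma Cubic.rel_two {p : ℕ} [hp : Fact p.Prime] {χ : MulChar (ZMod p) Eis} (h : Cubic p χ)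
    {q : ℕ} (hq : q.Prime) (hqp : q ≠ p) (h1 : q % 3 = 2) :
    ((q : ℤ) : Eis) ∣ star (jacobiSum χ χ) ^ ((q + 1) / 3) -
      χ q * jacobiSum χ χ ^ ((q + 1) / 3) := by
  have : Fact q.Prime := ⟨hq⟩
  have h3 : q ≠ 3 := by rintro rfl; omega
  obtain ⟨φ, -⟩ := exists_hom q
  have key : ∀ φ : Eis →+* AlgebraicClosure (ZMod q), φ (star (jacobiSum χ χ) ^ ((q + 1) / 3) -
      χ q * jacobiSum χ χ ^ ((q + 1) / 3)) = 0 := by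
    intro φ
    rw [map_sub, map_mul, map_pow, map_pow, (h.recip hqp h3 φ).2 h1, sub_self]
  exact both_kill φ h3 (key φ) (key (φ.comp (starRingEnd Eis)))

lemma dvd_mul_sub {q a b c d x y : Eis} (h1 : q ∣ a - x * b) (h2 : q ∣ c - y * d) :
    q ∣ a * c - (x * y) * (b * d) := by
  have : a * c - (x * y) * (b * d) = (a - x * b) * c + (x * b) * (c - y * d) := by ring
  rw [this]
  exact dvd_add (h1.mul_right _) (h2.mul_left _)

/-- Primary primitive elements of norm one are `±1`. -/
lemma unit_cases {δ : Eis} (h1 : nm δ = 1) (h3 : (3 : ℤ) ∣ δ.im) : δ = 1 ∨ δ = -1 := by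
  rw [normDef] at h1
  obtain ⟨b, hb⟩ := h3
  rw [hb] at h1
  have hb0 : b = 0 := by
    by_contra hc
    have : 0 < b ^ 2 := by positivity
    nlinarith [sq_nonneg (2 * δ.re - 3 * b)]
  rw [hb0] at h1
  have : δ.re = 1 ∨ δ.re = -1 := by
    rw [← sq_eq_one_iff]; linarith
  rcases this with h | h
  · left; ext <;> simp [h, hb, hb0]
  · right; ext <;> simp [h, hb, hb0]

/-- For `p ∣ N(δ)` with `δ` primitive, some residue map modulo `p` kills `δ`. -/
lemma exists_residue {δ : Eis} (hc : IsCoprime δ.re δ.im) (p : ℕ) [hp : Fact p.Prime]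
    (hpd : (p : ℤ) ∣ nm δ) : ∃ ρ : Eis →+* ZMod p, ρ δ = 0 := by
  have h1 : ((nm δ : ℤ) : ZMod p) = 0 := (ZMod.intCast_zmod_eq_zero_iff_dvd _ _).2 hpd
  rw [normDef] at h1
  push_cast at h1
  have hb : ((δ.im : ℤ) : ZMod p) ≠ 0 := by
    intro hb
    rw [hb] at h1
    have ha : ((δ.re : ℤ) : ZMod p) = 0 := by simpa using h1
    rw [ZMod.intCast_zmod_eq_zero_iff_dvd] at ha hb
    have := hc.isUnit_of_dvd' ha hb
    rw [Int.isUnit_iff] at this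
    have := hp.1.two_le
    omega
  refine ⟨hom (-(δ.re : ZMod p) / (δ.im : ZMod p)) ?_, ?_⟩
  · field_simp
    linear_combination h1
  · rw [hom_apply]; field_simp; ring

/-- Existence of the cubic residue symbol for a primitive primary `δ`, by splitting off Jacobi
sums one prime at a time. -/
theorem exists_symbol (δ : Eis) (hc : IsCoprime δ.re δ.im) (h3 : (3 : ℤ) ∣ δ.im) :
    ∃ X : ℤ →* Eis, IsSymbol δ X := by
  induction hn : (nm δ).toNat using Nat.strong_induction_on generalizing δ with
  | _ n ih =>
  by_cases h1 : nm δ = 1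
  · refine ⟨1, ⟨by simp, by simp, ?_, ?_⟩⟩
    · intro q _ _ _
      rcases unit_cases h1 h3 with rfl | rfl <;> simp
    · intro q _ _ _
      rcases unit_cases h1 h3 with rfl | rfl <;> simp
  have hpos : 0 ≤ nm δ := norm_nonneg δ
  obtain ⟨p, hp, hpd⟩ := Nat.exists_prime_and_dvd (n := (nm δ).natAbs) (by omega)
  have hpd' : (p : ℤ) ∣ nm δ := Int.natCast_dvd.2 hpd
  have : Fact p.Prime := ⟨hp⟩
  obtain ⟨ρ, hρ⟩ := exists_residue hc p hpd'
  have hp3 : p ≠ 3 := by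
    rintro rfl
    rw [normDef] at hpd'
    have h4 : (3 : ℤ) ∣ δ.re ^ 2 := by
      have : δ.re ^ 2 = (δ.re ^ 2 - δ.re * δ.im + δ.im ^ 2) + δ.im * (δ.re - δ.im) := by ring
      rw [this]; exact dvd_add (by exact_mod_cast hpd') (h3.mul_right _)
    have := hc.isUnit_of_dvd' (Int.prime_three.dvd_of_dvd_pow h4) h3
    rw [Int.isUnit_iff] at this; omega
  have hpm : p % 3 = 1 := by
    have ho : ρ om ≠ 1 := phi_om_ne ρ hp3
    have ho3 : ρ om ^ 3 = 1 := by rw [← map_pow, om_cube, map_one]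
    have h5 : orderOf (ρ om) = 3 := orderOf_eq_prime ho3 ho
    have h6 : (ρ om) ^ (p - 1) = 1 := ZMod.pow_card_sub_one_eq_one (by
      intro h0; rw [h0] at ho3; norm_num at ho3)
    have h7 := orderOf_dvd_of_pow_eq_one h6
    rw [h5] at h7
    have := hp.two_le
    omega
  obtain ⟨χ, hχ, hχρ⟩ := exists_cubic p hpm ρ
  set J := jacobiSum χ χ with hJ
  have hJJ : J * star J = (p : Eis) := hχ.norm
  have hJn : nm J = p := by
    have := mul_star_self J
    rw [hJJ] at this
    have h8 := congrArg QuadraticAlgebra.re this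
    simpa using h8.symm
  obtain ⟨w, hw⟩ : J ∣ δ := by
    have h8 : ((p : ℤ) : Eis) ∣ δ * star J := by
      refine both_kill ρ hp3 (by rw [map_mul, hρ, zero_mul]) ?_
      rw [star_mul, star_star, map_mul, hχρ, zero_mul]
    obtain ⟨w, hw⟩ := h8
    refine ⟨w, ?_⟩
    have hs : star J ≠ 0 := by
      intro h0
      rw [h0, mul_zero] at hJJ
      exact hp.ne_zero (by exact_mod_cast hJJ.symm)
    apply mul_right_cancel₀ hs
    rw [hw, Int.cast_natCast, ← hJJ]; ring
  have hnw : nm δ = p * nm w := by rw [hw, map_mul, hJn]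
  have hwpos : 0 < nm w := by
    rcases (norm_nonneg w).lt_or_eq with h | h
    · exact h
    · exfalso
      have := norm_eq_zero h.symm
      rw [this, mul_zero] at hw
      rw [hw] at hc
      simp [isCoprime_zero_left] at hc
  have hJ3 := hχ.mod_three hpm
  rw [← hJ] at hJ3
  have hJ3' : (3 : ℤ) ∣ J.re + 1 ∧ (3 : ℤ) ∣ J.im := by
    have := (dvd_int_iff 3 (J + 1)).1 (by exact_mod_cast hJ3)
    simpa using this
  have hre : δ.re = J.re * w.re - J.im * w.im := by
    rw [hw, QuadraticAlgebra.re_mul]; ring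
  have him : δ.im = J.re * w.im + J.im * w.re - J.im * w.im := by
    rw [hw, QuadraticAlgebra.im_mul]; ring
  have hwc : IsCoprime w.re w.im := by
    obtain ⟨a, b, hab⟩ := hc
    rw [hre, him] at hab
    exact ⟨a * J.re + b * J.im, -a * J.im + b * (J.re - J.im), by linear_combination hab⟩
  have hw3 : (3 : ℤ) ∣ w.im := by
    have : w.im = (J.re + 1) * w.im + J.im * (w.re - w.im) - δ.im := by rw [him]; ring
    rw [this]
    exact dvd_sub (dvd_add (hJ3'.1.mul_right _) (hJ3'.2.mul_right _)) h3
  obtain ⟨X, hX⟩ := ih (nm w).toNat (by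
    have : nm w < nm δ := by
      rw [hnw]
      have : (2 : ℤ) ≤ p := by exact_mod_cast hp.two_le
      nlinarith
    omega) w hwc hw3 rfl
  let C : ℤ →* Eis := (χ.toMonoidHom).comp ((Int.castRingHom (ZMod p)) : ℤ →* ZMod p)
  have hC : ∀ n : ℤ, C n = χ (n : ZMod p) := fun n => rfl
  have hcp : ∀ n : ℤ, IsCoprime n (nm δ) → IsCoprime n (nm w) ∧ (n : ZMod p) ≠ 0 := by
    intro n hn
    rw [hnw] at hn
    refine ⟨hn.of_mul_right_right, ?_⟩
    rw [Ne, ZMod.intCast_zmod_eq_zero_iff_dvd]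
    intro hd
    have := hn.of_mul_right_left.isUnit_of_dvd' hd dvd_rfl
    rw [Int.isUnit_iff] at this
    have := hp.two_le
    omega
  refine ⟨C * X, ⟨?_, ?_, ?_, ?_⟩⟩
  · intro n hn
    obtain ⟨h4, h5⟩ := hcp n hn
    rw [MonoidHom.mul_apply, mul_pow, hX.cube n h4, hC, hχ.val h5, one_mul]
  · intro n m θ hd hm
    obtain ⟨h4, h5⟩ := hcp m hm
    rw [MonoidHom.mul_apply, MonoidHom.mul_apply]
    congr 1
    · rw [hC, hC]
      have h6 : ρ ((n : Eis) * θ ^ 3 - m) = 0 := by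
        obtain ⟨z, hz⟩ := hd
        rw [hz, map_mul, hρ, zero_mul]
      rw [map_sub, map_mul, map_pow, map_intCast, map_intCast, sub_eq_zero] at h6
      have h7 : ρ θ ≠ 0 := by
        intro h0; rw [h0] at h6; apply h5; rw [← h6]; simp
      rw [← h6, map_mul, map_pow, hχ.val h7, mul_one]
    · refine hX.congr n m θ (dvd_trans ⟨J, ?_⟩ hd) h4
      rw [hw]; ring
  · intro q hq hq1 hqn
    have h4 := hcp q hqn
    have hqp : q ≠ p := by
      rintro rfl; apply h4.2; simp
    rw [MonoidHom.mul_apply, hC, hw, star_mul, mul_pow, mul_pow, mul_comm (star w ^ _)]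
    exact dvd_mul_sub (by simpa using hχ.rel_one hq hqp hq1) (hX.rel_one q hq hq1 h4.1)
  · intro q hq hq1 hqn
    have h4 := hcp q hqn
    have hqp : q ≠ p := by
      rintro rfl; apply h4.2; simp
    rw [MonoidHom.mul_apply, hC, hw, star_mul, mul_pow, mul_pow, mul_comm (star w ^ _)]
    exact dvd_mul_sub (by simpa using hχ.rel_two hq hqp hq1) (hX.rel_two q hq hq1 h4.1)

end Eis

/-! ### Values of the cubic residue symbol -/

namespace Eis

/-- The exponent in the cubic reciprocity relation at the prime `q`. -/
def ex (q : ℕ) : ℕ := if q % 3 = 1 then (q - 1) / 3 else (q + 1) / 3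

/-- `δ` or its conjugate, depending on whether the prime `q` splits or is inert. -/
def sw (q : ℕ) (δ : Eis) : Eis := if q % 3 = 1 then δ else star δ

lemma mod_three_cases {q : ℕ} (hq : q.Prime) (h3 : q ≠ 3) : q % 3 = 1 ∨ q % 3 = 2 := by
  have : q % 3 ≠ 0 := by
    intro h
    exact h3 ((Nat.prime_dvd_prime_iff_eq Nat.prime_three hq).1 (Nat.dvd_of_mod_eq_zero h)).symm
  omega

lemma IsSymbol.rel {δ : Eis} {X : ℤ →* Eis} (hX : IsSymbol δ X) {q : ℕ} (hq : q.Prime)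
    (h3 : q ≠ 3) (hc : IsCoprime (q : ℤ) (nm δ)) :
    ((q : ℤ) : Eis) ∣ sw q δ ^ ex q - X q * star (sw q δ) ^ ex q := by
  rcases mod_three_cases hq h3 with h | h
  · simpa [sw, ex, h] using hX.rel_one q hq h hc
  · simpa [sw, ex, h] using hX.rel_two q hq h hc

lemma phi_dvd {q : ℕ} {K : Type*} [Field K] [CharP K q] (φ : Eis →+* K) {z : Eis}
    (h : ((q : ℤ) : Eis) ∣ z) : φ z = 0 := by
  obtain ⟨w, rfl⟩ := h
  rw [map_mul, map_intCast, Int.cast_natCast, CharP.cast_eq_zero, zero_mul]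

lemma nm_sw (q : ℕ) (δ : Eis) : nm (sw q δ) = nm δ := by
  unfold sw; split_ifs
  · rfl
  · exact nm_star δ

lemma phi_ne {q : ℕ} {K : Type*} [Field K] [CharP K q] [hq : Fact q.Prime] (φ : Eis →+* K)
    {z : Eis} (h : IsCoprime (q : ℤ) (nm z)) : φ z ≠ 0 ∧ φ (star z) ≠ 0 := by
  have h1 : φ z * φ (star z) = ((nm z : ℤ) : K) := by
    rw [← map_mul, mul_star_self, map_intCast]
  have h2 : ((nm z : ℤ) : K) ≠ 0 := by
    rw [Ne, CharP.intCast_eq_zero_iff K q]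
    intro hd
    have := h.isUnit_of_dvd' dvd_rfl hd
    rw [Int.isUnit_iff] at this
    have := hq.1.two_le
    omega
  rw [← h1] at h2
  exact ⟨left_ne_zero_of_mul h2, right_ne_zero_of_mul h2⟩

lemma root_eq {z w : Eis} {q : ℕ} {K : Type*} [Field K] [CharP K q] [hq : Fact q.Prime]
    (φ : Eis →+* K) (h3 : q ≠ 3) (hz : z ^ 3 = 1) (hw : w ^ 3 = 1) (h : φ z = φ w) : z = w := by
  have h1 : (z * w ^ 2) = 1 := by
    apply phi_om_cases φ h3
    · rw [mul_pow, ← pow_mul, mul_comm 2 3, pow_mul, hz, hw]; simp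
    · rw [map_mul, h, ← map_mul, ← pow_succ', hw, map_one]
  calc z = z * w ^ 2 * w := by rw [mul_assoc, ← pow_succ, hw, mul_one]
    _ = w := by rw [h1, one_mul]

/-- The reciprocity relation determines the value of the symbol at `q`. -/
lemma IsSymbol.val {δ : Eis} {X : ℤ →* Eis} (hX : IsSymbol δ X) {q : ℕ} (hq : q.Prime)
    (h3 : q ≠ 3) (hc : IsCoprime (q : ℤ) (nm δ)) {z : Eis} (hz : z ^ 3 = 1)
    (h : ((q : ℤ) : Eis) ∣ sw q δ ^ ex q - z * star (sw q δ) ^ ex q) : X q = z := by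
  have : Fact q.Prime := ⟨hq⟩
  obtain ⟨φ, -⟩ := exists_hom q
  have h1 := phi_dvd φ h
  have h2 := phi_dvd φ (hX.rel hq h3 hc)
  rw [map_sub, map_mul, map_pow] at h1 h2
  have h4 : φ (star (sw q δ) ^ ex q) ≠ 0 := by
    rw [map_pow]; exact pow_ne_zero _ (phi_ne φ (by rwa [nm_sw])).2
  refine root_eq φ h3 (hX.cube _ hc) hz ?_
  apply mul_right_cancel₀ h4
  linear_combination h1 - h2

lemma cube_phi {q : ℕ} {K : Type*} [Field K] [CharP K q] [hq : Fact q.Prime] (φ : Eis →+* K)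
    (h3 : q ≠ 3) {δ β : Eis} {σ : ℤ} (hc : IsCoprime (q : ℤ) (nm δ)) (hσ : σ = 1 ∨ σ = -1)
    (h : ((q : ℤ) : Eis) ∣ δ - σ * β ^ 3) : φ δ ^ ex q = φ (star δ) ^ ex q := by
  have h1 := phi_dvd φ h
  have h2 := phi_dvd (φ.comp (starRingEnd Eis)) h
  have hss : star (σ : Eis) = σ := by rcases hσ with rfl | rfl <;> simp
  simp only [RingHom.comp_apply, starRingEnd_apply, star_sub, star_mul, star_pow, hss] at h2
  rw [map_sub, map_mul, map_pow, map_intCast, sub_eq_zero] at h1 h2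
  rw [h1, h2]
  have hb : φ β ≠ 0 ∧ φ (star β) ≠ 0 := by
    have := phi_ne φ hc
    constructor
    · intro h0; rw [h0] at h1; apply this.1; rw [h1]; simp
    · intro h0; rw [h0] at h2; apply this.2; rw [h2]; simp
  rw [mul_pow, mul_pow, ← pow_mul, ← pow_mul, mul_comm _ (((σ : ℤ) : K) ^ _)]
  congr 1
  rcases mod_three_cases hq.1 h3 with hm | hm
  · have e1 : 3 * ex q + 1 = q := by simp only [ex, hm, if_true]; have := hq.1.two_le; omega
    have key : ∀ z : Eis, φ z ≠ 0 → φ z ^ (3 * ex q) = 1 := by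
      intro z hz
      apply mul_right_cancel₀ hz
      rw [← pow_succ, e1, one_mul, frob_one φ hm]
    rw [key _ hb.1, key _ hb.2]
  · have e1 : 3 * ex q = q + 1 := by simp only [ex, hm]; norm_num; omega
    rw [e1, pow_succ, pow_succ, frob_two φ hm, frob_two φ hm, star_star, mul_comm]

/-- Cubes modulo `q` (up to sign) satisfy the reciprocity relation with trivial symbol. -/
lemma cube_rel {q : ℕ} (hq : q.Prime) (h3 : q ≠ 3) {δ β : Eis} {σ : ℤ}
    (hc : IsCoprime (q : ℤ) (nm δ)) (hσ : σ = 1 ∨ σ = -1)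
    (h : ((q : ℤ) : Eis) ∣ δ - σ * β ^ 3) :
    ((q : ℤ) : Eis) ∣ δ ^ ex q - star δ ^ ex q := by
  have : Fact q.Prime := ⟨hq⟩
  obtain ⟨φ, -⟩ := exists_hom q
  refine both_kill φ h3 ?_ ?_
  · rw [map_sub, map_pow, map_pow, cube_phi φ h3 hc hσ h, sub_self]
  · rw [star_sub, star_pow, star_pow, star_star, map_sub, map_pow, map_pow,
      cube_phi φ h3 hc hσ h, sub_self]

lemma IsSymbol.val_cube {δ : Eis} {X : ℤ →* Eis} (hX : IsSymbol δ X) {q : ℕ} (hq : q.Prime)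
    (h3 : q ≠ 3) (hc : IsCoprime (q : ℤ) (nm δ)) {β : Eis} {σ : ℤ} (hσ : σ = 1 ∨ σ = -1)
    (h : ((q : ℤ) : Eis) ∣ δ - σ * β ^ 3) : X q = 1 := by
  refine hX.val hq h3 hc (one_pow 3) ?_
  have h1 := cube_rel hq h3 hc hσ h
  unfold sw
  split_ifs
  · simpa using h1
  · rw [star_star, one_mul, ← dvd_neg, neg_sub]; exact h1

lemma IsSymbol.neg_one {δ : Eis} {X : ℤ →* Eis} (hX : IsSymbol δ X) : X (-1) = 1 := by
  have h1 : X (-1) ^ 3 = 1 := hX.cube _ isCoprime_one_left.neg_left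
  have h2 : X (-1) ^ 2 = 1 := by rw [← map_pow]; simp
  rwa [pow_succ, h2, one_mul] at h1

/-- Multiplicative functions on the integers agree at `n` once they agree at its prime factors. -/
lemma hom_eq_of_primes {f g : ℤ →* Eis} (hneg : f (-1) = g (-1)) {n : ℤ} (hn : n ≠ 0)
    (h : ∀ q : ℕ, q.Prime → (q : ℤ) ∣ n → f q = g q) : f n = g n := by
  have key : ∀ m : ℕ, m ≠ 0 → (∀ q : ℕ, q.Prime → q ∣ m → f q = g q) → f m = g m := by
    intro m
    induction m using Nat.recOnMul with
    | zero => intro h; exact absurd rfl h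
    | one => intro _ _; simp
    | prime p hp => intro _ h; exact h p hp dvd_rfl
    | mul a b iha ihb =>
      intro hab h
      rw [Nat.cast_mul, map_mul, map_mul, iha (left_ne_zero_of_mul hab)
        (fun q hq hd => h q hq (hd.mul_right _)), ihb (right_ne_zero_of_mul hab)
        (fun q hq hd => h q hq (hd.mul_left _))]
  have h1 := key n.natAbs (by simpa using hn) (fun q hq hd => h q hq (Int.natCast_dvd.2 hd))
  rcases Int.natAbs_eq n with h2 | h2
  · rw [h2]; exact h1
  · rw [h2, ← neg_one_mul (n.natAbs : ℤ), map_mul, map_mul, hneg, h1]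

lemma IsSymbol.eq_one {δ : Eis} {X : ℤ →* Eis} (hX : IsSymbol δ X) {n : ℤ} (hn : n ≠ 0)
    (h : ∀ q : ℕ, q.Prime → (q : ℤ) ∣ n → X q = 1) : X n = 1 :=
  hom_eq_of_primes (g := 1) (by rw [hX.neg_one]; rfl) hn h

/-- `n ↦ ω ^ ((n² - 1) / 3)` for `n` prime to `3`, and `0` otherwise. -/
def h9 : ℤ →* Eis where
  toFun n := if n % 9 = 1 ∨ n % 9 = 8 then 1 else if n % 9 = 2 ∨ n % 9 = 7 then om else
    if n % 9 = 4 ∨ n % 9 = 5 then om ^ 2 else 0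
  map_one' := by simp
  map_mul' m n := by
    have h4 : om ^ 2 * om ^ 2 = om := by
      rw [← pow_add, om_pow_mod]; simp
    have h5 : om * om ^ 2 = 1 := by rw [← pow_succ', om_cube]
    have h6 : om ^ 2 * om = 1 := by rw [← pow_succ, om_cube]
    rw [Int.mul_emod]
    have hm : m % 9 = 0 ∨ m % 9 = 1 ∨ m % 9 = 2 ∨ m % 9 = 3 ∨ m % 9 = 4 ∨ m % 9 = 5 ∨ m % 9 = 6 ∨
      m % 9 = 7 ∨ m % 9 = 8 := by omega
    have hn : n % 9 = 0 ∨ n % 9 = 1 ∨ n % 9 = 2 ∨ n % 9 = 3 ∨ n % 9 = 4 ∨ n % 9 = 5 ∨ n % 9 = 6 ∨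
      n % 9 = 7 ∨ n % 9 = 8 := by omega
    rcases hm with h | h | h | h | h | h | h | h | h <;>
    rcases hn with h' | h' | h' | h' | h' | h' | h' | h' | h' <;>
      simp [h, h', h4, h5, h6, ← sq]

lemma h9_cube {n : ℤ} (h : ¬ (3 : ℤ) ∣ n) : h9 n ^ 3 = 1 := by
  have : n % 9 = 1 ∨ n % 9 = 8 ∨ n % 9 = 2 ∨ n % 9 = 7 ∨ n % 9 = 4 ∨ n % 9 = 5 := by omega
  have h4 : (om ^ 2) ^ 3 = 1 := by rw [← pow_mul, mul_comm, pow_mul, om_cube, one_pow]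
  rcases this with h | h | h | h | h | h <;> simp [h9, h, om_cube, h4]

lemma h9_prime {r : ℕ} (hr : r.Prime) (h3 : r ≠ 3) :
    h9 r = if r % 3 = 1 then om ^ (2 * ex r) else om ^ ex r := by
  have := hr.two_le
  have h1 : r % 9 = 1 ∨ r % 9 = 4 ∨ r % 9 = 7 ∨ r % 9 = 2 ∨ r % 9 = 5 ∨ r % 9 = 8 := by
    have := mod_three_cases hr h3; omega
  have hc : ((r : ℕ) : ℤ) % 9 = ((r % 9 : ℕ) : ℤ) := by omega
  rcases h1 with h | h | h | h | h | h
  · have h2 : r % 3 = 1 := by omega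
    have h4 : 2 * ((r - 1) / 3) % 3 = 0 := by omega
    simp only [ex, h2, if_true]; rw [om_pow_mod, h4]; simp [h9, hc, h]
  · have h2 : r % 3 = 1 := by omega
    have h4 : 2 * ((r - 1) / 3) % 3 = 2 := by omega
    simp only [ex, h2, if_true]; rw [om_pow_mod, h4]; simp [h9, hc, h]
  · have h2 : r % 3 = 1 := by omega
    have h4 : 2 * ((r - 1) / 3) % 3 = 1 := by omega
    simp only [ex, h2, if_true]; rw [om_pow_mod, h4]; simp [h9, hc, h]
  · have h2 : ¬ r % 3 = 1 := by omega
    have h4 : ((r + 1) / 3) % 3 = 1 := by omega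
    simp only [ex, h2, if_false]; rw [om_pow_mod, h4]; simp [h9, hc, h]
  · have h2 : ¬ r % 3 = 1 := by omega
    have h4 : ((r + 1) / 3) % 3 = 2 := by omega
    simp only [ex, h2, if_false]; rw [om_pow_mod, h4]; simp [h9, hc, h]
  · have h2 : ¬ r % 3 = 1 := by omega
    have h4 : ((r + 1) / 3) % 3 = 0 := by omega
    simp only [ex, h2, if_false]; rw [om_pow_mod, h4]; simp [h9, hc, h]

lemma om_pow_cube (n : ℕ) : (om ^ n) ^ 3 = 1 := by
  rw [← pow_mul, mul_comm, pow_mul, om_cube, one_pow]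

lemma dvd_rel {q a b a' b' z : Eis} {e : ℕ} (h1 : q ∣ a - a') (h2 : q ∣ b - b')
    (h : a' ^ e = z * b' ^ e) : q ∣ a ^ e - z * b ^ e := by
  have : a ^ e - z * b ^ e = (a ^ e - a' ^ e) - z * (b ^ e - b' ^ e) := by rw [h]; ring
  rw [this]
  exact dvd_sub (h1.trans (sub_dvd_pow_sub_pow _ _ _))
    ((h2.trans (sub_dvd_pow_sub_pow _ _ _)).mul_left _)

lemma IsSymbol.val_h9 {δ : Eis} {X : ℤ →* Eis} (hX : IsSymbol δ X) {r : ℕ} (hr : r.Prime)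
    (h3 : r ≠ 3) (hc : IsCoprime (r : ℤ) (nm δ)) {c : Eis}
    (h1 : ((r : ℤ) : Eis) ∣ δ - c * om) (h2 : ((r : ℤ) : Eis) ∣ star δ - c * om ^ 2) :
    X r = h9 r := by
  rw [h9_prime hr h3]
  rcases mod_three_cases hr h3 with hm | hm
  · rw [if_pos hm]
    refine hX.val hr h3 hc (om_pow_cube _) ?_
    simp only [sw, hm, if_true]
    refine dvd_rel h1 h2 ?_
    rw [mul_pow, mul_pow, ← pow_mul, mul_left_comm, ← pow_add, om_pow_mod (2 * ex r + 2 * ex r),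
      om_pow_mod (ex r)]
    congr 2; omega
  · rw [if_neg (by omega)]
    refine hX.val hr h3 hc (om_pow_cube _) ?_
    simp only [sw, show ¬ r % 3 = 1 by omega, if_false, star_star]
    refine dvd_rel h2 h1 ?_
    rw [mul_pow, mul_pow, ← pow_mul, mul_left_comm, ← pow_add]
    congr 2; omega

lemma IsSymbol.val_h9' {δ : Eis} {X : ℤ →* Eis} (hX : IsSymbol δ X) {r : ℕ} (hr : r.Prime)
    (h3 : r ≠ 3) (hc : IsCoprime (r : ℤ) (nm δ)) {c : Eis}
    (h1 : ((r : ℤ) : Eis) ∣ δ - c * om ^ 2) (h2 : ((r : ℤ) : Eis) ∣ star δ - c * om) :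
    X r = h9 r ^ 2 := by
  rw [h9_prime hr h3]
  rcases mod_three_cases hr h3 with hm | hm
  · rw [if_pos hm, ← pow_mul]
    refine hX.val hr h3 hc (om_pow_cube _) ?_
    simp only [sw, hm, if_true]
    refine dvd_rel h1 h2 ?_
    rw [mul_pow, mul_pow, ← pow_mul, mul_left_comm, ← pow_add, om_pow_mod (2 * ex r),
      om_pow_mod (2 * ex r * 2 + _)]
    congr 2; omega
  · rw [if_neg (by omega), ← pow_mul]
    refine hX.val hr h3 hc (om_pow_cube _) ?_
    simp only [sw, show ¬ r % 3 = 1 by omega, if_false, star_star]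
    refine dvd_rel h2 h1 ?_
    rw [mul_pow, mul_pow, ← pow_mul, mul_left_comm, ← pow_add, om_pow_mod (ex r),
      om_pow_mod (ex r * 2 + _)]
    congr 2; omega

lemma coprime_nm_im {δ : Eis} (hc : IsCoprime δ.re δ.im) : IsCoprime δ.im (nm δ) := by
  rw [normDef, show δ.re ^ 2 - δ.re * δ.im + δ.im ^ 2 = δ.re ^ 2 + δ.im * (δ.im - δ.re) by ring]
  exact ((hc.symm).pow_right).add_mul_left_right _

lemma coprime_nm_re {δ : Eis} (hc : IsCoprime δ.re δ.im) : IsCoprime δ.re (nm δ) := by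
  rw [normDef, show δ.re ^ 2 - δ.re * δ.im + δ.im ^ 2 = δ.im ^ 2 + δ.re * (δ.re - δ.im) by ring]
  exact hc.pow_right.add_mul_left_right _

lemma coprime_nm_sub {δ : Eis} (hc : IsCoprime δ.re δ.im) : IsCoprime (δ.re - δ.im) (nm δ) := by
  rw [normDef, show δ.re ^ 2 - δ.re * δ.im + δ.im ^ 2 = δ.im ^ 2 + (δ.re - δ.im) * δ.re by ring]
  have : IsCoprime (δ.re - δ.im) δ.im := by
    obtain ⟨a, b, h⟩ := hc
    exact ⟨a, a + b, by linear_combination h⟩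
  exact this.pow_right.add_mul_left_right _

/-- The supplementary law at `3`, in the case where the coefficient of `ω` is exactly divisible
by `9`. -/
lemma IsSymbol.three {δ : Eis} {X : ℤ →* Eis} (hX : IsSymbol δ X) (hc : IsCoprime δ.re δ.im)
    {b : ℤ} (hb : δ.im = 9 * b) (hb3 : ¬ (3 : ℤ) ∣ b) : X 3 = 1 := by
  have ha3 : ¬ (3 : ℤ) ∣ δ.re := by
    intro h
    have := hc.isUnit_of_dvd' h ⟨3 * b, by rw [hb]; ring⟩
    rw [Int.isUnit_iff] at this; omega
  have hs3 : ¬ (3 : ℤ) ∣ δ.re - δ.im := by omega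
  have hcop : ∀ (r : ℕ) {n : ℤ}, (r : ℤ) ∣ n → IsCoprime n (nm δ) → IsCoprime (r : ℤ) (nm δ) :=
    fun r n hd h => h.of_isCoprime_of_dvd_left hd
  have hne : ∀ {r : ℕ} {n : ℤ}, ¬ (3 : ℤ) ∣ n → (r : ℤ) ∣ n → r ≠ 3 := by
    rintro r n h hd rfl; exact h (by exact_mod_cast hd)
  have hdv : ∀ (r : ℕ) (n : ℤ), (r : ℤ) ∣ n → ((r : ℤ) : Eis) ∣ (n : Eis) :=
    fun r n ⟨k, hk⟩ => ⟨k, by rw [hk]; push_cast; ring⟩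
  have hδ := eq_mk δ
  have hδ' := star_eq δ
  -- primes dividing `b`: here `δ` is congruent to a rational integer
  have h1 : X b = 1 := by
    refine hX.eq_one (by rintro rfl; simp at hb3) ?_
    intro r hr hd
    have hd' : (r : ℤ) ∣ δ.im := by rw [hb]; exact hd.mul_left _
    have h3 := hne hb3 hd
    have hcr := hcop r hd' (coprime_nm_im hc)
    refine hX.val hr h3 hcr (one_pow 3) ?_
    have h4 : ((r : ℤ) : Eis) ∣ δ - δ.re := by
      have : δ - δ.re = δ.im * om := by linear_combination hδ
      rw [this]; exact (hdv _ _ hd').mul_right _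
    have h5 : ((r : ℤ) : Eis) ∣ star δ - δ.re := by
      have : star δ - δ.re = δ.im * om ^ 2 := by linear_combination hδ'
      rw [this]; exact (hdv _ _ hd').mul_right _
    unfold sw; split_ifs
    · exact dvd_rel h4 h5 (by ring)
    · rw [star_star]; exact dvd_rel h5 h4 (by ring)
  have h2 : X δ.re = h9 δ.re := by
    refine hom_eq_of_primes (by rw [hX.neg_one]; simp [h9]) (by rintro h; simp [h] at ha3) ?_
    intro r hr hd
    refine hX.val_h9 hr (hne ha3 hd) (hcop r hd (coprime_nm_re hc)) (c := δ.im) ?_ ?_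
    · rw [show δ - (δ.im : Eis) * om = δ.re by linear_combination hδ]; exact hdv _ _ hd
    · rw [show star δ - (δ.im : Eis) * om ^ 2 = δ.re by linear_combination hδ']; exact hdv _ _ hd
  have h4 : X (δ.re - δ.im) = (h9 * h9) (δ.re - δ.im) := by
    refine hom_eq_of_primes (by rw [hX.neg_one]; simp [h9]) (by rintro h; simp [h] at hs3) ?_
    intro r hr hd
    rw [MonoidHom.mul_apply, ← sq]
    refine hX.val_h9' hr (hne hs3 hd) (hcop r hd (coprime_nm_sub hc)) (c := -δ.im) ?_ ?_
    · rw [show δ - -(δ.im : Eis) * om ^ 2 = ((δ.re - δ.im : ℤ) : Eis) by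
        push_cast; linear_combination hδ + (δ.im : Eis) * om_sq]; exact hdv _ _ hd
    · rw [show star δ - -(δ.im : Eis) * om = ((δ.re - δ.im : ℤ) : Eis) by
        push_cast; linear_combination hδ' + (δ.im : Eis) * om_sq]; exact hdv _ _ hd
  have h5 : h9 (δ.re - δ.im) = h9 δ.re := by
    have : (δ.re - δ.im) % 9 = δ.re % 9 := by omega
    simp [h9, this]
  have h6 : X (δ.re * (δ.re - δ.im)) = X (-(δ.im ^ 2)) := by
    refine hX.congr _ _ 1 ⟨star δ, ?_⟩ ((coprime_nm_im hc).pow_left.neg_left)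
    rw [mul_star_self, normDef]; push_cast; ring
  rw [map_mul, h2, h4, MonoidHom.mul_apply, h5, ← neg_one_mul (δ.im ^ 2), map_mul, hX.neg_one,
    one_mul, map_pow, hb, map_mul, h1, mul_one, ← sq, ← pow_succ', h9_cube ha3,
    show (9 : ℤ) = 3 ^ 2 by norm_num, map_pow] at h6
  have h7 : X 3 ^ 3 = 1 := by
    refine hX.cube 3 ?_
    have : IsCoprime δ.im (nm δ) := coprime_nm_im hc
    exact this.of_isCoprime_of_dvd_left ⟨3 * b, by rw [hb]; ring⟩
  calc X 3 = X 3 ^ 3 * X 3 := by rw [h7, one_mul]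
    _ = (X 3 ^ 2) ^ 2 := by ring
    _ = 1 := h6.symm

end Eis

/-! ### The two-power test -/

/-- The discriminant-like quantity `D = t² + 3t + 9 = λ λ̄`. -/
abbrev Dt (t : ℤ) : ℤ := t ^ 2 + 3 * t + 9

/-- The Eisenstein integer `δ = A + λ B` attached to a solution of the Pell equation. -/
def dS (t : ℤ) (a : Pell.Solution₁ (Dt t)) : Eis := dl t a.x a.y

lemma dS_coprime (t : ℤ) (a : Pell.Solution₁ (Dt t)) : IsCoprime (dS t a).re (dS t a).im := by
  refine ⟨a.x - (t + 3) * a.y, t * a.y, ?_⟩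
  simp only [dS, dl]
  linear_combination a.prop

lemma dS_three (t : ℤ) (a : Pell.Solution₁ (Dt t)) : (3 : ℤ) ∣ (dS t a).im := ⟨a.y, rfl⟩

lemma pow_pm {t : ℤ} (w : Pell.Solution₁ (Dt t)) {n : ℤ} {σ : ℤ} (hσ : σ = 1 ∨ σ = -1)
    (hx : n ∣ w.x - σ) (hy : n ∣ w.y) (u : ℤ) :
    ∃ τ : ℤ, (τ = 1 ∨ τ = -1) ∧ n ∣ (w ^ u).x - τ ∧ n ∣ (w ^ u).y := by
  induction u with
  | zero => exact ⟨1, Or.inl rfl, by simp, by simp⟩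
  | succ i ih =>
    obtain ⟨τ, hτ, h1, h2⟩ := ih
    refine ⟨τ * σ, by rcases hτ with rfl | rfl <;> rcases hσ with rfl | rfl <;> simp, ?_, ?_⟩
    · rw [zpow_add_one, Pell.Solution₁.x_mul]
      have : (w ^ (i : ℤ)).x * w.x + Dt t * ((w ^ (i : ℤ)).y * w.y) - τ * σ =
        ((w ^ (i : ℤ)).x - τ) * w.x + τ * (w.x - σ) + w.y * (Dt t * (w ^ (i : ℤ)).y) := by ring
      rw [this]
      exact dvd_add (dvd_add (h1.mul_right _) (hx.mul_left _)) (hy.mul_right _)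
    · rw [zpow_add_one, Pell.Solution₁.y_mul]
      exact dvd_add (hy.mul_left _) (h2.mul_right _)
  | pred i ih =>
    obtain ⟨τ, hτ, h1, h2⟩ := ih
    refine ⟨τ * σ, by rcases hτ with rfl | rfl <;> rcases hσ with rfl | rfl <;> simp, ?_, ?_⟩
    · rw [zpow_sub_one, Pell.Solution₁.x_mul, Pell.Solution₁.x_inv, Pell.Solution₁.y_inv]
      have : (w ^ (-i : ℤ)).x * w.x + Dt t * ((w ^ (-i : ℤ)).y * -w.y) - τ * σ =
        ((w ^ (-i : ℤ)).x - τ) * w.x + τ * (w.x - σ) + w.y * (-Dt t * (w ^ (-i : ℤ)).y) := by ring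
      rw [this]
      exact dvd_add (dvd_add (h1.mul_right _) (hx.mul_left _)) (hy.mul_right _)
    · rw [zpow_sub_one, Pell.Solution₁.y_mul, Pell.Solution₁.x_inv, Pell.Solution₁.y_inv]
      exact dvd_add ((dvd_neg.2 hy).mul_left _) (h2.mul_right _)

/-- Multiplying by a solution congruent to `±1` changes `δ` by a sign modulo `n`. -/
lemma dS_mul_pm {t : ℤ} (a w : Pell.Solution₁ (Dt t)) {n τ : ℤ} (hτ : τ = 1 ∨ τ = -1)
    (hx : n ∣ w.x - τ) (hy : n ∣ w.y) : (n : Eis) ∣ dS t a - τ * dS t (a * w) := by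
  have hτ2 : τ * τ = 1 := by rcases hτ with rfl | rfl <;> norm_num
  obtain ⟨e, he⟩ := hx
  obtain ⟨f, hf⟩ := hy
  have he' : w.x = τ + n * e := by linear_combination he
  have h1 : n ∣ a.x - τ * (a * w).x := by
    rw [Pell.Solution₁.x_mul, he', hf]
    exact ⟨-τ * a.x * e - τ * Dt t * a.y * f, by linear_combination (-a.x) * hτ2⟩
  have h2 : n ∣ a.y - τ * (a * w).y := by
    rw [Pell.Solution₁.y_mul, he', hf]
    exact ⟨-τ * a.y * e - τ * a.x * f, by linear_combination (-a.y) * hτ2⟩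
  rw [dvd_int_iff]
  constructor
  · have : (dS t a - τ * dS t (a * w)).re = (a.x - τ * (a * w).x) +
      (a.y - τ * (a * w).y) * (t + 3) := by
      simp [dS, dl]; ring
    rw [this]; exact dvd_add h1 (h2.mul_right _)
  · have : (dS t a - τ * dS t (a * w)).im = (a.y - τ * (a * w).y) * 3 := by
      simp [dS, dl]; ring
    rw [this]; exact h2.mul_right _

/-- `M₁ = s` and `M₂ = 2s² + 27` with `s = 2t + 3`. Up to a cube, `M_i` is congruent modulo `δ(a)` to
the first coordinate of the Pell solution `a^(2^i)`. -/
def Mi (t : ℤ) (i : ℕ) : ℤ := if i = 1 then 2 * t + 3 else 2 * (2 * t + 3) ^ 2 + 27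

lemma dvd_one (t : ℤ) (a : Pell.Solution₁ (Dt t)) :
    dS t a ∣ ((a ^ 2).x : Eis) * (-th) ^ 3 - (2 * t + 3 : ℤ) := by
  refine ⟨((-2 : ℤ) : Eis) * (star (lam t) * dl t a.x (-a.y)), ?_⟩
  have h := a.prop
  have h2 : (a ^ 2).x = a.x ^ 2 + Dt t * a.y ^ 2 := by rw [sq, Pell.Solution₁.x_mul]; ring
  have h3 : (-th) ^ 3 = (⟨3, 6⟩ : Eis) := by ext <;> simp [th, pow_succ]
  have h4 : star (lam t) = ⟨t, -3⟩ := by ext <;> simp [lam]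
  rw [h3, h4]
  obtain ⟨S, hS⟩ : ∃ S : ℤ, S = 2 * t + 3 := ⟨_, rfl⟩
  obtain ⟨m, hm⟩ : ∃ m : ℤ, m = -2 := ⟨_, rfl⟩
  generalize (a ^ 2).x = P at *
  rw [← hS, ← hm]
  ext
  · simp only [dS, dl, QuadraticAlgebra.re_mul, QuadraticAlgebra.im_mul, QuadraticAlgebra.re_sub,
      QuadraticAlgebra.re_intCast, QuadraticAlgebra.im_intCast, Int.cast_id]
    rw [hm, hS, h2]
    linear_combination (2 * t + 3) * h
  · simp only [dS, dl, QuadraticAlgebra.re_mul, QuadraticAlgebra.im_mul, QuadraticAlgebra.im_sub,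
      QuadraticAlgebra.re_intCast, QuadraticAlgebra.im_intCast, Int.cast_id]
    rw [hm, h2]
    ring

lemma dvd_two (t : ℤ) (a : Pell.Solution₁ (Dt t)) :
    dS t a ∣ ((a ^ 4).x : Eis) * (th ^ 2) ^ 3 - (2 * (2 * t + 3) ^ 2 + 27 : ℤ) := by
  have h4 : (a ^ 4).x = 2 * (a ^ 2).x ^ 2 - 1 := by
    have h := (a ^ 2).prop
    rw [show a ^ 4 = a ^ 2 * a ^ 2 by rw [← pow_add], Pell.Solution₁.x_mul]
    linear_combination (-1) * h
  have h6 : (th ^ 2) ^ 3 = ((-th) ^ 3) ^ 2 := by ring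
  have h7 : ((-th) ^ 3) ^ 2 = -27 := by rw [← h6, th_sq]; norm_num
  have : ((a ^ 4).x : Eis) * (th ^ 2) ^ 3 - (2 * (2 * t + 3) ^ 2 + 27 : ℤ) =
      (((a ^ 2).x : Eis) * (-th) ^ 3 - (2 * t + 3 : ℤ)) *
        (2 * (((a ^ 2).x : Eis) * (-th) ^ 3 + (2 * t + 3 : ℤ))) := by
    rw [h4, h6]; push_cast; linear_combination (-1) * h7
  rw [this]
  exact (dvd_one t a).mul_right _

/-- The `2`-power test: if `δ` at `a · c^(2u)` is a cube, `c = a^(2^i)`, then the symbol of `M_i`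
modulo `δ(a)` is trivial. Indeed `c² ≡ -1` modulo the first coordinate `x` of `c`, so `δ(a)` is a cube
up to sign modulo each prime factor of `x`; by reciprocity `x`, and with it `M_i`, has trivial
symbol. -/
lemma two_power {t : ℤ} (a : Pell.Solution₁ (Dt t)) (i : ℕ) (hi : i = 1 ∨ i = 2) (u : ℤ) {β : Eis}
    (hβ : dS t (a * (a ^ (2 ^ i)) ^ (2 * u)) = β ^ 3) {X : ℤ →* Eis} (hX : IsSymbol (dS t a) X)
    (hM : IsCoprime (Mi t i) (nm (dS t a))) : X (Mi t i) = 1 := by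
  obtain ⟨d, hd⟩ : ∃ d : Pell.Solution₁ (Dt t), a ^ (2 ^ i) = d ^ 2 :=
    ⟨a ^ (2 ^ (i - 1)), by rw [← pow_mul]; congr 1; rcases hi with rfl | rfl <;> norm_num⟩
  set c := a ^ (2 ^ i) with hc
  have hcx : c.x = 2 * d.x ^ 2 - 1 := by
    have h := d.prop
    rw [hd, sq, Pell.Solution₁.x_mul]
    linear_combination (-1) * h
  obtain ⟨θ, hθ⟩ : ∃ θ : Eis, dS t a ∣ (c.x : Eis) * θ ^ 3 - (Mi t i : ℤ) := by
    rcases hi with rfl | rfl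
    · exact ⟨_, by simpa [Mi, hc] using dvd_one t a⟩
    · exact ⟨_, by simpa [Mi, hc] using dvd_two t a⟩
  rw [← hX.congr _ _ θ hθ hM]
  have h2x : c.x ∣ (c ^ 2).x - (-1) := by
    have h := c.prop
    rw [sq, Pell.Solution₁.x_mul]
    exact ⟨2 * c.x, by linear_combination (-1) * h⟩
  have h2y : c.x ∣ (c ^ 2).y := by
    rw [sq, Pell.Solution₁.y_mul]
    exact ⟨2 * c.y, by ring⟩
  obtain ⟨τ, hτ, h3, h4⟩ := pow_pm (c ^ 2) (Or.inr rfl) h2x h2y u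
  have h5 := dS_mul_pm a ((c ^ 2) ^ u) hτ h3 h4
  have h6 : (c ^ 2) ^ u = c ^ (2 * u) := by rw [zpow_mul]; norm_cast
  rw [h6, hβ] at h5
  refine hX.eq_one (by omega) ?_
  intro q hq hqd
  have : Fact q.Prime := ⟨hq⟩
  have hq3 : q ≠ 3 := by
    rintro rfl
    rw [hcx] at hqd
    push_cast at hqd
    have : d.x % 3 = 0 ∨ d.x % 3 = 1 ∨ d.x % 3 = 2 := by omega
    have h7 : (2 * d.x ^ 2 - 1) % 3 = 0 := Int.emod_eq_zero_of_dvd hqd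
    rcases this with h | h | h <;> simp [sq, Int.sub_emod, Int.mul_emod, h] at h7
  have hcop : IsCoprime (q : ℤ) (nm (dS t a)) := by
    rw [Prime.coprime_iff_not_dvd (Nat.prime_iff_prime_int.1 hq)]
    intro hdv
    obtain ⟨ρ, hρ⟩ := exists_residue (dS_coprime t a) q hdv
    obtain ⟨z, hz⟩ := hθ
    have h7 := congrArg ρ hz
    rw [map_mul, hρ, zero_mul, map_sub, map_mul, map_intCast, map_intCast,
      (ZMod.intCast_zmod_eq_zero_iff_dvd _ _).2 hqd, zero_mul, zero_sub, neg_eq_zero,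
      ZMod.intCast_zmod_eq_zero_iff_dvd] at h7
    have := hM.isUnit_of_dvd' h7 hdv
    rw [Int.isUnit_iff] at this
    have := hq.two_le
    omega
  refine hX.val_cube hq hq3 hcop hτ (dvd_trans ?_ h5)
  obtain ⟨k, hk⟩ := hqd
  exact ⟨k, by rw [hk]; push_cast; ring⟩

/-! ### Modular arithmetic for kernel evaluation -/

/-- `force n k = k n`, but kernel reduction evaluates `n` to a numeral before entering `k`. -/
def force (n : ℕ) (k : ℕ → Bool) : Bool := Nat.rec (k 0) (fun m _ => k (Nat.succ m)) n

@[simp] lemma force_eq (n : ℕ) (k : ℕ → Bool) : force n k = k n := by cases n <;> rfl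

/-- Multiplication of `x + yθ` and `z + wθ` modulo `n`, where `θ² = P + Qθ`, passed on to `k`. -/
def mulK (n P Q x y z w : ℕ) (k : ℕ → ℕ → Bool) : Bool :=
  force ((x * z + P * (y * w)) % n) fun r => force ((x * w + y * z + Q * (y * w)) % n) fun s => k r s

/-- Binary powering for `mulK`: computes `(ax + ay θ) (x + yθ)^e`; the first argument is fuel. -/
def powK (n P Q : ℕ) (k : ℕ → ℕ → Bool) : ℕ → ℕ → ℕ → ℕ → ℕ → ℕ → Bool
  | 0, _, _, _, ax, ay => k ax ay
  | f + 1, e, x, y, ax, ay =>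
    bif Nat.beq e 0 then k ax ay else
    bif Nat.beq (e % 2) 0 then
      mulK n P Q x y x y fun x' y' => force (e / 2) fun e' => powK n P Q k f e' x' y' ax ay
    else mulK n P Q ax ay x y fun ax' ay' => mulK n P Q x y x y fun x' y' =>
      force (e / 2) fun e' => powK n P Q k f e' x' y' ax' ay'

lemma powK_spec {M : Type*} [CommMonoid M] (n P Q : ℕ) (Rp : M → ℕ → ℕ → Prop)
    (hmul : ∀ a b x y z w, Rp a x y → Rp b z w →
      Rp (a * b) ((x * z + P * (y * w)) % n) ((x * w + y * z + Q * (y * w)) % n))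
    (k : ℕ → ℕ → Bool) : ∀ (f e x y ax ay : ℕ) (a A : M), e < 2 ^ f → Rp a x y → Rp A ax ay →
      ∃ r s, powK n P Q k f e x y ax ay = k r s ∧ Rp (A * a ^ e) r s := by
  intro f
  induction f with
  | zero =>
    intro e x y ax ay a A he _ hA
    have : e = 0 := by simpa using he
    subst this
    exact ⟨ax, ay, rfl, by simpa using hA⟩
  | succ f ih =>
    intro e x y ax ay a A he ha hA
    have he2 : e / 2 < 2 ^ f := by rw [pow_succ] at he; omega
    rw [powK]
    by_cases h0 : e = 0
    · subst h0
      exact ⟨ax, ay, rfl, by simpa using hA⟩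
    have h0' : Nat.beq e 0 = false := by simpa [Bool.eq_false_iff] using h0
    rw [h0', cond_false]
    by_cases h1 : e % 2 = 0
    · rw [h1]
      obtain ⟨r, s, h, h'⟩ := ih (e / 2) _ _ ax ay (a * a) A he2 (hmul _ _ _ _ _ _ ha ha) hA
      refine ⟨r, s, ?_, ?_⟩
      · simpa [mulK] using h
      · have : (a * a) ^ (e / 2) = a ^ e := by
          rw [← sq, ← pow_mul]; congr 1; omega
        rwa [this] at h'
    · have h1' : Nat.beq (e % 2) 0 = false := by simpa [Bool.eq_false_iff] using h1
      rw [h1', cond_false]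
      obtain ⟨r, s, h, hh⟩ := ih (e / 2) _ _ _ _ (a * a) (A * a) he2 (hmul _ _ _ _ _ _ ha ha)
        (hmul _ _ _ _ _ _ hA ha)
      refine ⟨r, s, ?_, ?_⟩
      · simpa [mulK] using h
      · have : A * a * (a * a) ^ (e / 2) = A * a ^ e := by
          rw [← sq, ← pow_mul, mul_assoc, ← pow_succ']; congr 2; omega
        rwa [this] at hh

/-- `x, y` represent the Pell solution `a` modulo `n`. -/
def RepS (n : ℕ) {t : ℤ} (a : Pell.Solution₁ (Dt t)) (x y : ℕ) : Prop :=
  (n : ℤ) ∣ a.x - x ∧ (n : ℤ) ∣ a.y - y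

/-- `x, y` represent the Eisenstein integer `z` modulo `n`. -/
def RepE (n : ℕ) (z : Eis) (x y : ℕ) : Prop := (n : ℤ) ∣ z.re - x ∧ (n : ℤ) ∣ z.im - y

lemma dvd_sub_mod {n : ℕ} {z : ℤ} {x : ℕ} (h : (n : ℤ) ∣ z - x) : (n : ℤ) ∣ z - (x % n : ℕ) := by
  have : z - (x % n : ℕ) = z - x + n * (x / n : ℕ) := by
    have := Nat.div_add_mod x n
    have h2 : (x : ℤ) = n * (x / n : ℕ) + (x % n : ℕ) := by exact_mod_cast this.symm
    linear_combination h2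
  rw [this]
  exact dvd_add h (dvd_mul_right _ _)

lemma RepS.mul {n D : ℕ} {t : ℤ} (hD : (D : ℤ) = Dt t) (a b : Pell.Solution₁ (Dt t)) (x y z w : ℕ)
    (ha : RepS n a x y) (hb : RepS n b z w) :
    RepS n (a * b) ((x * z + D * (y * w)) % n) ((x * w + y * z + 0 * (y * w)) % n) := by
  obtain ⟨⟨e, he⟩, f, hf⟩ := ha
  obtain ⟨⟨g, hg⟩, h, hh⟩ := hb
  constructor
  · apply dvd_sub_mod
    rw [Pell.Solution₁.x_mul]
    push_cast
    rw [hD]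
    exact ⟨e * b.x + x * g + Dt t * (f * b.y + y * h),
      by linear_combination b.x * he + x * hg + Dt t * b.y * hf + Dt t * y * hh⟩
  · apply dvd_sub_mod
    rw [Pell.Solution₁.y_mul]
    push_cast
    exact ⟨e * b.y + x * h + f * b.x + y * g,
      by linear_combination b.y * he + x * hh + b.x * hf + y * hg⟩

lemma RepS.neg {n : ℕ} (hn : 0 < n) {t : ℤ} {a : Pell.Solution₁ (Dt t)} {x y : ℕ} (ha : RepS n a x y) :
    RepS n a⁻¹ x ((n - 1) * y) := by
  obtain ⟨ha, f, hf⟩ := ha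
  refine ⟨by simpa using ha, ?_⟩
  rw [Pell.Solution₁.y_inv]; push_cast [Nat.cast_sub hn]
  exact ⟨- y - f, by linear_combination (-1) * hf⟩

lemma RepS.of_dvd {n m : ℕ} (h : m ∣ n) {t : ℤ} {a : Pell.Solution₁ (Dt t)} {x y : ℕ}
    (ha : RepS n a x y) : RepS m a (x % m) (y % m) :=
  ⟨dvd_sub_mod ((Int.natCast_dvd_natCast.2 h).trans ha.1),
    dvd_sub_mod ((Int.natCast_dvd_natCast.2 h).trans ha.2)⟩

lemma RepE.mul {n : ℕ} (hn : 0 < n) (a b : Eis) (x y z w : ℕ) (ha : RepE n a x y)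
    (hb : RepE n b z w) :
    RepE n (a * b) ((x * z + (n - 1) * (y * w)) % n) ((x * w + y * z + (n - 1) * (y * w)) % n) := by
  obtain ⟨⟨e, he⟩, f, hf⟩ := ha
  obtain ⟨⟨g, hg⟩, h, hh⟩ := hb
  constructor
  · apply dvd_sub_mod
    rw [QuadraticAlgebra.re_mul]
    push_cast [Nat.cast_sub hn]
    exact ⟨e * b.re + x * g - (f * b.im + y * h) - y * w,
      by linear_combination b.re * he + x * hg - b.im * hf - y * hh⟩
  · apply dvd_sub_mod
    rw [QuadraticAlgebra.im_mul]
    push_cast [Nat.cast_sub hn]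
    exact ⟨e * b.im + x * h + f * b.re + y * g - (f * b.im + y * h) - y * w,
      by linear_combination b.im * he + x * hh + b.re * hf + y * hg - b.im * hf - y * hh⟩

lemma RepE.conj {n : ℕ} (hn : 0 < n) {a : Eis} {x y : ℕ} (ha : RepE n a x y) :
    RepE n (star a) ((x + (n - 1) * y) % n) (((n - 1) * y) % n) := by
  obtain ⟨⟨e, he⟩, f, hf⟩ := ha
  have h1 : (star a).re = a.re - a.im := by simp; ring
  have h2 : (star a).im = -a.im := by simp
  constructor
  · apply dvd_sub_mod
    rw [h1]
    push_cast [Nat.cast_sub hn]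
    exact ⟨e - f - y, by linear_combination he - hf⟩
  · apply dvd_sub_mod
    rw [h2]
    push_cast [Nat.cast_sub hn]
    exact ⟨- f - y, by linear_combination - hf⟩

lemma RepE.om_mul {n : ℕ} (hn : 0 < n) {a : Eis} {x y : ℕ} (ha : RepE n a x y) :
    RepE n (om * a) (((n - 1) * y) % n) ((x + (n - 1) * y) % n) := by
  obtain ⟨⟨e, he⟩, f, hf⟩ := ha
  have h1 : (om * a).re = -a.im := by simp [om]
  have h2 : (om * a).im = a.re - a.im := by simp [om]; ring
  constructor
  · apply dvd_sub_mod
    rw [h1]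
    push_cast [Nat.cast_sub hn]
    exact ⟨- f - y, by linear_combination - hf⟩
  · apply dvd_sub_mod
    rw [h2]
    push_cast [Nat.cast_sub hn]
    exact ⟨e - f - y, by linear_combination he - hf⟩

lemma RepE.eq {n : ℕ} {a b : Eis} {x y : ℕ} (ha : RepE n a x y) (hb : RepE n b x y) :
    ((n : ℤ) : Eis) ∣ a - b := by
  rw [dvd_int_iff, QuadraticAlgebra.re_sub, QuadraticAlgebra.im_sub]
  constructor
  · have := dvd_sub ha.1 hb.1; simpa using this
  · have := dvd_sub ha.2 hb.2; simpa using this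

/-- Conversely, congruent elements have congruent representatives. -/
lemma RepE.eq_of_dvd {n : ℕ} {a b : Eis} {x y z w : ℕ} (ha : RepE n a x y) (hb : RepE n b z w)
    (h : ((n : ℤ) : Eis) ∣ a - b) : x % n = z % n ∧ y % n = w % n := by
  rw [dvd_int_iff, QuadraticAlgebra.re_sub, QuadraticAlgebra.im_sub] at h
  constructor
  · have : (n : ℤ) ∣ (z : ℤ) - x := by
      have := dvd_sub (dvd_sub ha.1 hb.1) h.1
      have e : a.re - (x : ℤ) - (b.re - z) - (a.re - b.re) = z - x := by ring
      rwa [e] at this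
    exact (Nat.modEq_iff_dvd.2 this)
  · have : (n : ℤ) ∣ (w : ℤ) - y := by
      have := dvd_sub (dvd_sub ha.2 hb.2) h.2
      have e : a.im - (y : ℤ) - (b.im - w) - (a.im - b.im) = w - y := by ring
      rwa [e] at this
    exact (Nat.modEq_iff_dvd.2 this)

lemma RepS.delta {n T : ℕ} {t : ℤ} (hT : (T : ℤ) = t + 3) {a : Pell.Solution₁ (Dt t)} {x y : ℕ}
    (ha : RepS n a x y) : RepE n (dS t a) ((x + T * y) % n) ((3 * y) % n) := by
  obtain ⟨⟨e, he⟩, f, hf⟩ := ha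
  constructor
  · apply dvd_sub_mod
    simp only [dS, dl]
    push_cast
    rw [hT]
    exact ⟨e + (t + 3) * f, by linear_combination he + (t + 3) * hf⟩
  · apply dvd_sub_mod
    simp only [dS, dl]
    push_cast
    exact ⟨3 * f, by linear_combination 3 * hf⟩

lemma RepE.norm_congr {n : ℕ} (hn : 0 < n) {a : Eis} {x y : ℕ} (ha : RepE n a x y) :
    (n : ℤ) ∣ nm a - ((x * x + (n - 1) * (x * y) + y * y : ℕ) : ℤ) := by
  obtain ⟨⟨e, he⟩, f, hf⟩ := ha
  rw [normDef]
  push_cast [Nat.cast_sub hn]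
  exact ⟨e * (a.re + x) - e * a.im - x * f + f * (a.im + y) - x * y,
    by linear_combination (a.re + x) * he - a.im * he - x * hf + (a.im + y) * hf⟩

/-! ### Pell generators and the sieve on exponents -/

/-- Trial division: `q` has no divisor `m ≥ d` with `m² ≤ q`, where `d` is the last argument; the
second argument is fuel. -/
def trial (q : ℕ) : ℕ → ℕ → Bool
  | 0, _ => false
  | f + 1, d => bif Nat.blt q (d * d) then true else
      bif Nat.beq (q % d) 0 then false else force (d + 1) fun d' => trial q f d'

lemma trial_spec (q : ℕ) : ∀ f d, trial q f d = true → ∀ m, d ≤ m → m * m ≤ q → ¬ m ∣ q := by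
  intro f
  induction f with
  | zero => intro d h; simp [trial] at h
  | succ f ih =>
    intro d h m hm hq hd
    rw [trial] at h
    by_cases h1 : q < d * d
    · exact absurd (Nat.mul_le_mul hm hm) (by omega)
    have h1' : Nat.blt q (d * d) = false := by
      simpa [Nat.blt, Bool.eq_false_iff, Nat.succ_le_iff] using h1
    rw [h1', cond_false] at h
    by_cases h2 : q % d = 0
    · rw [h2] at h; simp at h
    have h2' : Nat.beq (q % d) 0 = false := by simpa [Bool.eq_false_iff] using h2
    rw [h2', cond_false, force_eq] at h
    rcases Nat.eq_or_lt_of_le hm with rfl | hm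
    · exact h2 (Nat.mod_eq_zero_of_dvd hd)
    · exact ih _ h m hm hq hd

/-- Boolean primality by trial division (complete for `q < 200²`). -/
def isPr (q : ℕ) : Bool := Nat.blt 1 q && trial q 200 2

lemma isPr_spec {q : ℕ} (h : isPr q = true) : q.Prime := by
  simp only [isPr, Bool.and_eq_true] at h
  have h1 : 1 < q := by simpa [Nat.blt, Nat.succ_le_iff] using h.1
  by_contra hp
  have h2 := Nat.minFac_sq_le_self (by omega) hp
  have h3 := (Nat.minFac_prime (by omega : q ≠ 1)).two_le
  exact trial_spec q _ _ h.2 _ h3 (by nlinarith) (Nat.minFac_dvd q)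

lemma RepS.one (n : ℕ) {t : ℤ} : RepS n (1 : Pell.Solution₁ (Dt t)) 1 0 := by simp [RepS]

lemma RepS.pow {n D : ℕ} {t : ℤ} (hD : (D : ℤ) = Dt t) {a : Pell.Solution₁ (Dt t)} {x y : ℕ}
    (ha : RepS n a x y) (e : ℕ) (k : ℕ → ℕ → Bool) :
    ∃ r s, powK n D 0 k e e x y 1 0 = k r s ∧ RepS n (a ^ e) r s := by
  have := powK_spec n D 0 (RepS n (t := t)) (RepS.mul hD) k e e x y 1 0 a 1
    Nat.lt_two_pow_self ha (RepS.one n)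
  simpa using this

lemma RepE.pow {n : ℕ} (hn : 0 < n) {a : Eis} {x y : ℕ}
    (ha : RepE n a x y) (e : ℕ) (k : ℕ → ℕ → Bool) :
    ∃ r s, powK n (n - 1) (n - 1) k e e x y 1 0 = k r s ∧ RepE n (a ^ e) r s := by
  have := powK_spec n (n - 1) (n - 1) (RepE n) (RepE.mul hn) k e e x y 1 0 a 1
    Nat.lt_two_pow_self ha (by simp [RepE])
  simpa using this

/-- `x` modulo `p` of the `n`-th power of a Pell solution, by the Chebyshev recursion, starting from
two consecutive values `a`, `b`. -/
def chebK (p x : ℕ) (k : ℕ → Bool) : ℕ → ℕ → ℕ → Bool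
  | 0, a, _ => k a
  | n + 1, a, b => force ((2 * x * b + (p - 1) * a) % p) fun b' => chebK p x k n b b'

lemma chebK_spec {p x : ℕ} (hp : 0 < p) {t : ℤ} {c : Pell.Solution₁ (Dt t)}
    (hx : (p : ℤ) ∣ c.x - x) (k : ℕ → Bool) : ∀ n a b i, (p : ℤ) ∣ (c ^ i).x - (a : ℕ) →
    (p : ℤ) ∣ (c ^ (i + 1)).x - (b : ℕ) →
    ∃ v : ℕ, chebK p x k n a b = k v ∧ (p : ℤ) ∣ (c ^ (i + n)).x - v := by
  intro n
  induction n with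
  | zero => intro a b i ha _; exact ⟨a, rfl, ha⟩
  | succ n ih =>
    intro a b i ha hb
    rw [chebK, force_eq]
    obtain ⟨v, hv, hv'⟩ := ih b ((2 * x * b + (p - 1) * a) % p) (i + 1) hb (by
      apply dvd_sub_mod
      have h1 : (c ^ (i + 1 + 1)).x = 2 * c.x * (c ^ (i + 1)).x - (c ^ i).x := by
        have h := c.prop
        rw [pow_succ, pow_succ, Pell.Solution₁.x_mul, Pell.Solution₁.x_mul, Pell.Solution₁.y_mul]
        linear_combination (-(c ^ i).x) * h
      obtain ⟨e, he⟩ := ha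
      obtain ⟨f, hf⟩ := hb
      obtain ⟨g, hg⟩ := hx
      rw [h1]
      push_cast [Nat.cast_sub hp]
      exact ⟨2 * (g * (c ^ (i + 1)).x + x * f) - e - a,
        by linear_combination 2 * (c ^ (i + 1)).x * hg + 2 * x * hf - he⟩)
    exact ⟨v, hv, by rw [show i + (n + 1) = i + 1 + n by ring]; exact hv'⟩

/-- No Pell solution for `D` has `q`-th power with first coordinate `u`, as seen modulo `p`. -/
def noRoot (D u q p : ℕ) : Bool :=
  Nat.blt 0 p && (List.range p).all fun x =>
    chebK p x (fun v => !Nat.beq (v % p) (u % p)) q 1 x ||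
      (List.range p).all fun y => !Nat.beq ((x * x) % p) ((1 + D * (y * y)) % p)

lemma noRoot_spec {D u q p : ℕ} (h : noRoot D u q p = true) {t : ℤ} (hD : (D : ℤ) = Dt t)
    (c : Pell.Solution₁ (Dt t)) : (c ^ q).x ≠ u := by
  simp only [noRoot, Bool.and_eq_true, List.all_eq_true, List.mem_range, Bool.or_eq_true] at h
  have hp : 0 < p := by simpa [Nat.blt, Nat.succ_le_iff] using h.1
  intro hu
  have hx0 := Int.emod_nonneg c.x (b := p) (by omega)
  have hx1 := Int.emod_lt_of_pos c.x (b := p) (by omega)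
  have hy0 := Int.emod_nonneg c.y (b := p) (by omega)
  have hy1 := Int.emod_lt_of_pos c.y (b := p) (by omega)
  obtain ⟨x, hx⟩ := Int.eq_ofNat_of_zero_le hx0
  obtain ⟨y, hy⟩ := Int.eq_ofNat_of_zero_le hy0
  have hd : (p : ℤ) ∣ c.x - x := by rw [← hx]; exact Int.dvd_self_sub_emod
  have hd' : (p : ℤ) ∣ c.y - y := by rw [← hy]; exact Int.dvd_self_sub_emod
  rcases h.2 x (by omega) with h2 | h2
  · obtain ⟨v, hv, hv'⟩ := chebK_spec hp hd (fun v => !Nat.beq (v % p) (u % p)) q 1 x 0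
      (by simp) (by simpa using hd)
    rw [hv] at h2
    rw [zero_add, hu] at hv'
    have h3 : v ≡ u [MOD p] := Nat.modEq_iff_dvd.2 hv'
    have h4 : v % p = u % p := h3
    rw [h4] at h2
    simp at h2
  · have h3 := h2 y (by omega)
    have h5 := c.prop
    have h4 : x * x ≡ 1 + D * (y * y) [MOD p] := by
      rw [Nat.modEq_iff_dvd]
      obtain ⟨e, he⟩ := hd
      obtain ⟨f, hf⟩ := hd'
      push_cast
      exact ⟨e * (c.x + x) - D * f * (c.y + y),
        by linear_combination -h5 + c.y ^ 2 * hD + (c.x + x) * he - D * (c.y + y) * hf⟩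
    have h4 : (x * x) % p = (1 + D * (y * y)) % p := h4
    rw [h4] at h3
    simp at h3

/-- No Pell solution for `D` has third power with first coordinate `u`: the root of `4X³ - 3X = u`
lies in `[p, p + 1)`, and either it is not `p` or `D ∤ p² - 1`. This is used when `u` comes from the
cube of a unit of a larger order, in which case there may be no obstruction modulo primes. -/
def noRoot3 (D u q p : ℕ) : Bool :=
  Nat.beq q 3 && Nat.blt 0 p && Nat.ble (4 * p ^ 3) (u + 3 * p) &&
    Nat.blt (u + 3 * (p + 1)) (4 * (p + 1) ^ 3) &&
    (Nat.blt (4 * p ^ 3) (u + 3 * p) || !Nat.beq ((p * p - 1) % D) 0)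

lemma noRoot3_spec {D u q p : ℕ} (h : noRoot3 D u q p = true) {t : ℤ} (hD : (D : ℤ) = Dt t)
    {c : Pell.Solution₁ (Dt t)} (hc : 0 < c.x) : (c ^ q).x ≠ u := by
  simp only [noRoot3, Bool.and_eq_true, Nat.beq_eq, Bool.or_eq_true] at h
  obtain ⟨⟨⟨⟨rfl, h0⟩, h1⟩, h2⟩, h6⟩ := h
  have h0 : 0 < p := by simpa [Nat.blt, Nat.succ_le_iff] using h0
  have h1 : 4 * p ^ 3 ≤ u + 3 * p := by simpa using h1
  have h2 : u + 3 * (p + 1) < 4 * (p + 1) ^ 3 := by simpa [Nat.blt, Nat.succ_le_iff] using h2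
  have hpr := c.prop
  have h3 : (c ^ 3).x = 4 * c.x ^ 3 - 3 * c.x := by
    rw [pow_succ, pow_succ, pow_one, Pell.Solution₁.x_mul, Pell.Solution₁.x_mul,
      Pell.Solution₁.y_mul]
    linear_combination (-3 * c.x) * hpr
  rw [h3]
  intro hu
  have mono : ∀ a b : ℤ, 0 < a → a < b → 4 * a ^ 3 - 3 * a < 4 * b ^ 3 - 3 * b := by
    intro a b ha hab
    have e : 4 * b ^ 3 - 3 * b - (4 * a ^ 3 - 3 * a) =
      (b - a) * (4 * (b * b) + 4 * (a * b) + 4 * (a * a) - 3) := by ring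
    have h5 : 0 < (b - a) * (4 * (b * b) + 4 * (a * b) + 4 * (a * a) - 3) :=
      mul_pos (by linarith) (by nlinarith)
    linarith
  have h7 : (4 * (p : ℤ) ^ 3) ≤ u + 3 * p := by exact_mod_cast h1
  have h8 : ((u : ℤ) + 3 * (p + 1)) < 4 * (p + 1) ^ 3 := by exact_mod_cast h2
  rw [← hu] at h7 h8
  rcases lt_trichotomy c.x p with h | h | h
  · linarith [mono c.x p hc h]
  · rcases h6 with h6 | h6
    · have h6 : 4 * p ^ 3 < u + 3 * p := by simpa [Nat.blt, Nat.succ_le_iff] using h6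
      zify at h6
      rw [← hu, h] at h6
      linarith
    · have h9 : (D : ℤ) ∣ ((p * p - 1 : ℕ) : ℤ) := by
        rw [Nat.cast_sub (by nlinarith)]
        refine ⟨c.y ^ 2, ?_⟩
        push_cast
        rw [hD, ← h]
        linear_combination hpr
      have h9 := Nat.mod_eq_zero_of_dvd (Int.natCast_dvd_natCast.1 h9)
      rw [h9] at h6
      simp at h6
  · rcases eq_or_lt_of_le (show (p : ℤ) + 1 ≤ c.x from h) with h | h
    · rw [← h] at h8; linarith
    · linarith [mono (p + 1) c.x (by positivity) h]

/-- Certificate that no proper power of a Pell solution has first coordinate `u`: exponents `≥ L`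
are too large, every other exponent has a factor `q` excluded by `noRoot` or `noRoot3`. -/
def genK (D u L : ℕ) (ls : List (ℕ × ℕ)) : Bool :=
  Nat.blt (u ^ 2) ((D + 1) ^ L) && (ls.all fun l => noRoot3 D u l.1 l.2 || noRoot D u l.1 l.2) &&
    (List.range L).all fun n => Nat.blt n 2 || ls.any fun l => Nat.beq (n % l.1) 0

lemma x_pow_ge {t : ℤ} {c : Pell.Solution₁ (Dt t)} (hx : 0 < c.x) (hy : 0 ≤ c.y) (hD : 0 ≤ Dt t)
    (n : ℕ) : c.x ^ n ≤ (c ^ n).x ∧ 0 ≤ (c ^ n).y := by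
  induction n with
  | zero => simp
  | succ n ih =>
    have h0 := Pell.Solution₁.x_pow_pos hx n
    rw [pow_succ, pow_succ, Pell.Solution₁.x_mul, Pell.Solution₁.y_mul]
    constructor
    · have := mul_nonneg hD (mul_nonneg ih.2 hy)
      nlinarith [ih.1]
    · have := ih.2; positivity

/-- A solution that is not a proper power generates all solutions up to sign. -/
lemma genK_spec {D u L : ℕ} {ls : List (ℕ × ℕ)} (h : genK D u L ls = true) {t : ℤ}
    (hD : (D : ℤ) = Dt t) (b : Pell.Solution₁ (Dt t)) (hb : b.x = u) (hu : 1 < u) (hy : 0 < b.y)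
    (a : Pell.Solution₁ (Dt t)) : ∃ k : ℤ, a = b ^ k ∨ a = -b ^ k := by
  simp only [genK, Bool.and_eq_true, List.all_eq_true, List.mem_range] at h
  obtain ⟨⟨h1, h2⟩, h3⟩ := h
  have h1 : u ^ 2 < (D + 1) ^ L := by simpa [Nat.blt, Nat.succ_le_iff] using h1
  have hb1 : 1 < b.x := by rw [hb]; exact_mod_cast hu
  have hD0 := Pell.Solution₁.d_pos_of_one_lt_x hb1
  obtain ⟨f, hf⟩ := Pell.IsFundamental.exists_of_not_isSquare hD0
    (Pell.Solution₁.d_nonsquare_of_one_lt_x hb1)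
  obtain ⟨n, hn⟩ := hf.eq_pow_of_nonneg (by omega) hy.le
  have hfx : 1 < f.x := hf.1
  have hfy : 0 < f.y := hf.2.1
  have hnL : n < L := by
    by_contra hL
    push Not at hL
    have h4 : ((D : ℤ) + 1) ≤ f.x ^ 2 := by
      rw [hD]
      have h5 := f.prop
      have h6 : 1 ≤ f.y ^ 2 := by nlinarith
      generalize Dt t = E at *
      nlinarith
    have h5 : ((D : ℤ) + 1) ^ L ≤ (u : ℤ) ^ 2 := by
      calc ((D : ℤ) + 1) ^ L ≤ ((D : ℤ) + 1) ^ n := pow_le_pow_right₀ (by linarith) hL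
        _ ≤ (f.x ^ 2) ^ n := by gcongr
        _ = (f.x ^ n) ^ 2 := by rw [← pow_mul, ← pow_mul, mul_comm]
        _ ≤ (f ^ n).x ^ 2 := by
          have := (x_pow_ge (by omega) hfy.le hD0.le n : f.x ^ n ≤ (f ^ n).x ∧ _).1
          gcongr
        _ = (u : ℤ) ^ 2 := by rw [← hn, hb]
    have h6 : (D + 1) ^ L ≤ u ^ 2 := by exact_mod_cast h5
    omega
  have h4 := h3 n hnL
  have hn1 : n = 1 := by
    by_contra hn1
    have hn0 : n ≠ 0 := by
      rintro rfl
      rw [hn] at hb1; simp at hb1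
    have h5 : Nat.blt n 2 = false := by
      rw [Bool.eq_false_iff]; simp [Nat.blt]; omega
    rw [h5, Bool.false_or, List.any_eq_true] at h4
    obtain ⟨l, hl, hl2⟩ := h4
    have hl3 : l.1 ∣ n := by
      rw [Nat.beq_eq] at hl2; exact Nat.dvd_of_mod_eq_zero hl2
    obtain ⟨m, hm⟩ := hl3
    have h6 : ((f ^ m) ^ l.1).x ≠ u := by
      rcases Bool.or_eq_true_iff.1 (h2 l hl) with h7 | h7
      · exact noRoot3_spec h7 hD (Pell.Solution₁.x_pow_pos (by omega) m)
      · exact noRoot_spec h7 hD (f ^ m)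
    apply h6
    rw [← pow_mul, mul_comm, ← hm, ← hn, hb]
  rw [hn1, pow_one] at hn
  rw [hn]
  exact hf.eq_zpow_or_neg_zpow a

/-- `δ` at the `k`-th power of the Pell solution `b` is a cube. -/
def Cu (t : ℤ) (b : Pell.Solution₁ (Dt t)) (k : ℤ) : Prop := ∃ β : Eis, dS t (b ^ k) = β ^ 3

lemma noCube_of {t : ℤ} {b : Pell.Solution₁ (Dt t)}
    (hb : ∀ a : Pell.Solution₁ (Dt t), ∃ k : ℤ, a = b ^ k ∨ a = -b ^ k)
    (h : ∀ k, Cu t b k → k = 0) : NoCube t := by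
  intro A B β hAB hβ
  obtain ⟨k, hk⟩ := hb (Pell.Solution₁.mk A B hAB)
  have key : Cu t b k := by
    rcases hk with hk | hk
    · exact ⟨β, by rw [← hk, ← hβ]; rfl⟩
    · refine ⟨-β, ?_⟩
      have : b ^ k = -Pell.Solution₁.mk A B hAB := by rw [hk, neg_neg]
      rw [this, Odd.neg_pow (by decide), ← hβ]
      ext
      · simp [dS, dl]; ring
      · simp [dS, dl]
  have h0 := h k key
  subst h0
  rcases hk with hk | hk <;>
  · have := congrArg Pell.Solution₁.y hk
    simpa using this

/-- `δ` at the Pell solution `x, y` is seen not to be (up to sign) a cube modulo `q`. -/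
def cubeNo (T q x y : ℕ) : Bool :=
  force ((x + T * y) % q) fun r => force ((3 * y) % q) fun s =>
  bif Nat.beq ((r * r + (q - 1) * (r * s) + s * s) % q) 0 then false else
  force (ex q) fun e => powK q (q - 1) (q - 1) (fun a b =>
    !(Nat.beq (a % q) ((a + (q - 1) * b) % q) && Nat.beq (b % q) (((q - 1) * b) % q))) e e r s 1 0

lemma coprime_of_norm {q : ℕ} (hq : q.Prime) {δ : Eis} {x y : ℕ} (h : RepE q δ x y)
    (h0 : (x * x + (q - 1) * (x * y) + y * y) % q ≠ 0) : IsCoprime (q : ℤ) (nm δ) := by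
  rw [Prime.coprime_iff_not_dvd (Nat.prime_iff_prime_int.1 hq)]
  intro hd
  have h1 := dvd_sub hd (h.norm_congr hq.pos)
  rw [sub_sub_cancel] at h1
  exact h0 (Nat.mod_eq_zero_of_dvd (Int.natCast_dvd_natCast.1 h1))

lemma cubeNo_spec {T q x y : ℕ} (h : cubeNo T q x y = true) (hq : q.Prime) (h3 : q ≠ 3) {t : ℤ}
    (hT : (T : ℤ) = t + 3) {a : Pell.Solution₁ (Dt t)} (ha : RepS q a x y) {σ : ℤ}
    (hσ : σ = 1 ∨ σ = -1) (β : Eis) : ¬ ((q : ℤ) : Eis) ∣ dS t a - σ * β ^ 3 := by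
  intro hd
  simp only [cubeNo, force_eq] at h
  have hδ := ha.delta hT
  set r := (x + T * y) % q
  set s := (3 * y) % q
  by_cases h0 : (r * r + (q - 1) * (r * s) + s * s) % q = 0
  · rw [h0] at h; simp at h
  have h0' : Nat.beq ((r * r + (q - 1) * (r * s) + s * s) % q) 0 = false := by
    simpa [Bool.eq_false_iff] using h0
  rw [h0', cond_false] at h
  obtain ⟨a', b', h1, h2⟩ := hδ.pow hq.pos (ex q) (fun a b =>
    !(Nat.beq (a % q) ((a + (q - 1) * b) % q) && Nat.beq (b % q) (((q - 1) * b) % q)))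
  rw [h1] at h
  have h4 := cube_rel hq h3 (coprime_of_norm hq hδ h0) hσ hd
  rw [← star_pow] at h4
  obtain ⟨h5, h6⟩ := h2.eq_of_dvd (h2.conj hq.pos) h4
  rw [Nat.mod_mod] at h5 h6
  rw [← h5, ← h6] at h
  simp at h

/-- One sieve step: given `K ∣ k`, each nonzero class of `k / K` modulo `l` is excluded by a prime
of `ps` for which `b ^ (K l) ≡ ± 1`. -/
def stepK (T D bx by' K l : ℕ) (ps : List ℕ) : Bool :=
  (ps.all fun p => isPr p && !Nat.beq p 3) && Nat.blt 0 l &&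
  (List.range l).all fun j => Nat.beq j 0 || ps.any fun p =>
    powK p D 0 (fun gx gy =>
      powK p D 0 (fun r s => Nat.beq (s % p) 0 && (Nat.beq (r % p) 1 || Nat.beq (r % p) (p - 1)))
        l l gx gy 1 0 &&
      powK p D 0 (fun r s => cubeNo T p r s) j j gx gy 1 0) K K (bx % p) (by' % p) 1 0

lemma stepK_spec {T D bx by' K l : ℕ} {ps : List ℕ} (h : stepK T D bx by' K l ps = true) {t : ℤ}
    (hT : (T : ℤ) = t + 3) (hD : (D : ℤ) = Dt t) {b : Pell.Solution₁ (Dt t)} (hbx : b.x = bx)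
    (hby : b.y = by') (hK : ∀ k, Cu t b k → (K : ℤ) ∣ k) :
    ∀ k, Cu t b k → ((K * l : ℕ) : ℤ) ∣ k := by
  intro k hk
  obtain ⟨m, rfl⟩ := hK k hk
  simp only [stepK, Bool.and_eq_true, List.all_eq_true, List.mem_range] at h
  obtain ⟨⟨hps, hl⟩, h⟩ := h
  have hl : 0 < l := by simpa [Nat.blt, Nat.succ_le_iff] using hl
  have hj0 := Int.emod_nonneg m (b := l) (by omega)
  have hj1 := Int.emod_lt_of_pos m (b := l) (by omega)
  have hjm := Int.mul_ediv_add_emod m l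
  obtain ⟨j, hj⟩ := Int.eq_ofNat_of_zero_le hj0
  rw [hj] at hjm hj1
  have h1 := h j (by omega)
  rw [Bool.or_eq_true] at h1
  rcases h1 with h1 | h1
  · rw [Nat.beq_eq] at h1
    subst h1
    rw [← hjm]
    push_cast
    exact ⟨m / l, by ring⟩
  exfalso
  rw [List.any_eq_true] at h1
  obtain ⟨p, hp, h1⟩ := h1
  have hp' := hps p hp
  have hpr := isPr_spec hp'.1
  have hp3 : p ≠ 3 := by
    rintro rfl
    exact absurd hp'.2 (by simp)
  have hb : RepS p b (bx % p) (by' % p) :=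
    ⟨dvd_sub_mod (by rw [hbx, sub_self]; exact dvd_zero _),
      dvd_sub_mod (by rw [hby, sub_self]; exact dvd_zero _)⟩
  obtain ⟨gx, gy, e1, hg⟩ := hb.pow hD K _
  rw [e1, Bool.and_eq_true] at h1
  obtain ⟨h1, h2⟩ := h1
  obtain ⟨r, s, e2, hr⟩ := hg.pow hD l _
  rw [e2, Bool.and_eq_true, Bool.or_eq_true, Nat.beq_eq, Nat.beq_eq, Nat.beq_eq] at h1
  obtain ⟨x, y, e3, hx⟩ := hg.pow hD j (fun r s => cubeNo T p r s)
  rw [e3] at h2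
  have hwy : (p : ℤ) ∣ ((b ^ K) ^ l).y := by
    have := dvd_sub_mod hr.2
    rw [h1.1] at this
    simpa using this
  have hwx : ∃ σ : ℤ, (σ = 1 ∨ σ = -1) ∧ (p : ℤ) ∣ ((b ^ K) ^ l).x - σ := by
    have h5 := dvd_sub_mod hr.1
    rcases h1.2 with h6 | h6
    · exact ⟨1, Or.inl rfl, by rw [h6] at h5; simpa using h5⟩
    · refine ⟨-1, Or.inr rfl, ?_⟩
      rw [h6] at h5
      obtain ⟨e, he⟩ := h5
      push_cast [Nat.cast_sub hpr.pos] at he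
      exact ⟨e + 1, by linear_combination he⟩
  obtain ⟨σ, hσ, hwx⟩ := hwx
  obtain ⟨τ, hτ, h5, h6⟩ := pow_pm _ hσ hwx hwy (m / l)
  have h7 := dS_mul_pm ((b ^ K) ^ j) _ hτ h5 h6
  obtain ⟨β, hβ⟩ := hk
  have h8 : (b ^ K) ^ j * ((b ^ K) ^ l) ^ (m / (l : ℤ)) = b ^ ((K : ℤ) * m) := by
    rw [← zpow_natCast, ← zpow_natCast, ← zpow_natCast, ← zpow_mul, ← zpow_mul, ← zpow_mul,
      ← zpow_add]
    congr 1
    linear_combination (K : ℤ) * hjm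
  rw [h8, hβ] at h7
  exact cubeNo_spec h2 hpr hp3 hT hx hτ β h7

/-- A chain of sieve steps. -/
def sieveK (T D bx by' : ℕ) : ℕ → List (ℕ × List ℕ) → Bool
  | _, [] => true
  | K, (l, ps) :: L => stepK T D bx by' K l ps && sieveK T D bx by' (K * l) L

lemma sieveK_spec {T D bx by' : ℕ} {t : ℤ} (hT : (T : ℤ) = t + 3) (hD : (D : ℤ) = Dt t)
    {b : Pell.Solution₁ (Dt t)} (hbx : b.x = bx) (hby : b.y = by') :
    ∀ (L : List (ℕ × List ℕ)) (K : ℕ), sieveK T D bx by' K L = true →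
      (∀ k, Cu t b k → (K : ℤ) ∣ k) →
      ∀ k, Cu t b k → ((K * (L.map Prod.fst).prod : ℕ) : ℤ) ∣ k := by
  intro L
  induction L with
  | nil => intro K _ hK; simpa using hK
  | cons q L ih =>
    intro K h hK
    rw [sieveK, Bool.and_eq_true] at h
    have := ih (K * q.1) h.2 (stepK_spec h.1 hT hD hbx hby hK)
    simpa [mul_assoc] using this

/-! ### Covering of the exponents by cubic symbols -/

/-- Determines `j` with `w = ω^j w̄` modulo `q`, where `w = (r + sω) ^ ex q`, and passes it on. -/
def symP (q r s : ℕ) (k : ℕ → Bool) : Bool :=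
  force (ex q) fun e => powK q (q - 1) (q - 1) (fun a b =>
    force ((a + (q - 1) * b) % q) fun c => force (((q - 1) * b) % q) fun d =>
    bif Nat.beq a c && Nat.beq b d then k 0 else
    force (((q - 1) * d) % q) fun c1 => force ((c + (q - 1) * d) % q) fun d1 =>
    bif Nat.beq a c1 && Nat.beq b d1 then k 1 else
    force (((q - 1) * d1) % q) fun c2 => force ((c1 + (q - 1) * d1) % q) fun d2 =>
    bif Nat.beq a c2 && Nat.beq b d2 then k 2 else false) e e r s 1 0

lemma symP_spec {q r s : ℕ} (hq : 0 < q) {k : ℕ → Bool} (h : symP q r s k = true) {w : Eis}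
    (hw : RepE q w r s) :
    ∃ j, k j = true ∧ ((q : ℤ) : Eis) ∣ w ^ ex q - om ^ j * star w ^ ex q := by
  simp only [symP, force_eq] at h
  obtain ⟨a, b, e1, h1⟩ := hw.pow hq (ex q) (fun a b =>
    bif Nat.beq a ((a + (q - 1) * b) % q) && Nat.beq b (((q - 1) * b) % q) then k 0 else
    bif Nat.beq a (((q - 1) * (((q - 1) * b) % q)) % q) &&
      Nat.beq b ((((a + (q - 1) * b) % q) + (q - 1) * (((q - 1) * b) % q)) % q) then k 1 else
    bif Nat.beq a (((q - 1) * ((((a + (q - 1) * b) % q) + (q - 1) * (((q - 1) * b) % q)) % q)) % q) &&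
      Nat.beq b (((((q - 1) * (((q - 1) * b) % q)) % q) +
        (q - 1) * ((((a + (q - 1) * b) % q) + (q - 1) * (((q - 1) * b) % q)) % q)) % q)
      then k 2 else false)
  rw [e1] at h
  have g0 := h1.conj hq
  have g1 := g0.om_mul hq
  have g2 := g1.om_mul hq
  simp only [Bool.cond_eq_ite, Bool.and_eq_true, Nat.beq_eq] at h
  rw [← star_pow]
  split_ifs at h with h2 h3 h4
  · refine ⟨0, h, ?_⟩
    rw [← h2.1, ← h2.2] at g0
    simpa using h1.eq g0
  · refine ⟨1, h, ?_⟩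
    rw [← h3.1, ← h3.2] at g1
    simpa using h1.eq g1
  · refine ⟨2, h, ?_⟩
    rw [← h4.1, ← h4.2] at g2
    have := h1.eq g2
    rwa [← mul_assoc, ← sq] at this

/-- The exponent `j` of the cubic symbol `ω^j` of `q` modulo `δ`, where `δ` belongs to the Pell
solution `x, y` modulo `q`; fails when `q` divides the norm of `δ`. -/
def symK (T q x y : ℕ) (k : ℕ → Bool) : Bool :=
  force ((x + T * y) % q) fun r => force ((3 * y) % q) fun s =>
  bif Nat.beq ((r * r + (q - 1) * (r * s) + s * s) % q) 0 then false else
  bif Nat.beq (q % 3) 1 then symP q r s k else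
  force ((r + (q - 1) * s) % q) fun r' => force (((q - 1) * s) % q) fun s' => symP q r' s' k

lemma symK_spec {T q x y : ℕ} {k : ℕ → Bool} (h : symK T q x y k = true) (hq : q.Prime)
    (h3 : q ≠ 3) {t : ℤ} (hT : (T : ℤ) = t + 3) {a : Pell.Solution₁ (Dt t)} (ha : RepS q a x y) :
    ∃ j, k j = true ∧ IsCoprime (q : ℤ) (nm (dS t a)) ∧
      ∀ X, IsSymbol (dS t a) X → X q = om ^ j := by
  simp only [symK, force_eq] at h
  have hδ := ha.delta hT
  set r := (x + T * y) % q
  set s := (3 * y) % q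
  by_cases h0 : (r * r + (q - 1) * (r * s) + s * s) % q = 0
  · rw [h0] at h; simp at h
  have h0' : Nat.beq ((r * r + (q - 1) * (r * s) + s * s) % q) 0 = false := by
    simpa [Bool.eq_false_iff] using h0
  rw [h0', cond_false] at h
  have hc := coprime_of_norm hq hδ h0
  by_cases h1 : q % 3 = 1
  · have h1' : Nat.beq (q % 3) 1 = true := by rw [Nat.beq_eq]; exact h1
    rw [h1', cond_true] at h
    obtain ⟨j, hj, hj'⟩ := symP_spec hq.pos h hδ
    refine ⟨j, hj, hc, fun X hX => hX.val hq h3 hc (om_pow_cube j) ?_⟩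
    rw [sw, if_pos h1]
    exact hj'
  · have h1' : Nat.beq (q % 3) 1 = false := by simpa [Bool.eq_false_iff] using h1
    rw [h1', cond_false] at h
    obtain ⟨j, hj, hj'⟩ := symP_spec hq.pos h (hδ.conj hq.pos)
    refine ⟨j, hj, hc, fun X hX => hX.val hq h3 hc (om_pow_cube j) ?_⟩
    rw [sw, if_neg h1]
    exact hj'

/-- Modulus needed to see the symbol of the prime `q`. -/
def md (q : ℕ) : ℕ := bif Nat.beq q 3 then 9 else q

/-- Tests that the symbol of `∏ q ^ e` over the list is nontrivial modulo `δ` at `(x, ± y) ^ c`. -/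
def symFs (T D c : ℕ) (sg : Bool) (x y : ℕ) : List (ℕ × ℕ) → ℕ → Bool
  | [], acc => !Nat.beq (acc % 3) 0
  | p :: fs, acc =>
    force (md p.1) fun n => force (x % n) fun x' =>
    force ((bif sg then y else (n - 1) * y) % n) fun y' =>
    powK n D 0 (fun r s =>
      bif Nat.beq p.1 3 then
        (Nat.beq (s % 9) 3 || Nat.beq (s % 9) 6) && symFs T D c sg x y fs acc
      else symK T p.1 r s fun j => force (acc + p.2 * j) fun acc' => symFs T D c sg x y fs acc')
      c c x' y' 1 0

/-- `a` or its inverse. -/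
def sgn {t : ℤ} (sg : Bool) (a : Pell.Solution₁ (Dt t)) : Pell.Solution₁ (Dt t) :=
  bif sg then a else a⁻¹

lemma om_ne_one_of {n : ℕ} (h : n % 3 ≠ 0) : om ^ n ≠ 1 := by
  rw [← Nat.div_add_mod n 3, pow_add, pow_mul, om_cube, one_pow, one_mul]
  have : n % 3 = 1 ∨ n % 3 = 2 := by omega
  rcases this with h | h <;> rw [h] <;> intro h' <;>
    simp [om, pow_succ, QuadraticAlgebra.ext_iff] at h'

lemma symFs_spec {T D c R : ℕ} {sg : Bool} {x y : ℕ} {t : ℤ} (hT : (T : ℤ) = t + 3)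
    (hD : (D : ℤ) = Dt t) {a : Pell.Solution₁ (Dt t)} (ha : RepS R a x y) :
    ∀ (fs : List (ℕ × ℕ)) (acc : ℕ), (∀ p ∈ fs, p.1.Prime ∧ md p.1 ∣ R) →
      symFs T D c sg x y fs acc = true →
      IsCoprime (((fs.map fun p => p.1 ^ p.2).prod : ℕ) : ℤ) (nm (dS t (sgn sg a ^ c))) ∧
      ∀ X, IsSymbol (dS t (sgn sg a ^ c)) X →
        X ((fs.map fun p => p.1 ^ p.2).prod : ℕ) * om ^ acc ≠ 1 := by
  intro fs
  induction fs with
  | nil =>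
    intro acc _ h
    refine ⟨by simpa using isCoprime_one_left, fun X _ => ?_⟩
    have : acc % 3 ≠ 0 := by
      intro h0
      simp [symFs, h0] at h
    simpa using om_ne_one_of this
  | cons p fs ih =>
    intro acc hp h
    obtain ⟨hpr, hdv⟩ := hp p (List.mem_cons_self ..)
    have ih' := fun acc => ih acc (fun p' h' => hp p' (List.mem_cons_of_mem _ h'))
    simp only [symFs, force_eq] at h
    have hn : 0 < md p.1 := by
      rw [md]; cases Nat.beq p.1 3
      · exact hpr.pos
      · norm_num
    have hrep : RepS (md p.1) (sgn sg a) (x % md p.1)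
        ((bif sg then y else (md p.1 - 1) * y) % md p.1) := by
      cases sg
      · have := (ha.of_dvd hdv).neg hn
        refine ⟨this.1, dvd_sub_mod ?_⟩
        have h1 : RepS (md p.1) a x y := ⟨(Int.natCast_dvd_natCast.2 hdv).trans ha.1,
          (Int.natCast_dvd_natCast.2 hdv).trans ha.2⟩
        exact (h1.neg hn).2
      · exact ha.of_dvd hdv
    obtain ⟨r, s, e1, h1⟩ := hrep.pow hD c (fun r s =>
      bif Nat.beq p.1 3 then
        (Nat.beq (s % 9) 3 || Nat.beq (s % 9) 6) && symFs T D c sg x y fs acc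
      else symK T p.1 r s fun j => symFs T D c sg x y fs (acc + p.2 * j))
    rw [e1] at h
    simp only [List.map_cons, List.prod_cons]
    rw [Nat.cast_mul, Nat.cast_pow]
    by_cases h3 : p.1 = 3
    · have h3' : Nat.beq p.1 3 = true := by rw [Nat.beq_eq]; exact h3
      rw [h3', cond_true, Bool.and_eq_true, Bool.or_eq_true, Nat.beq_eq, Nat.beq_eq] at h
      obtain ⟨hs, h⟩ := h
      obtain ⟨i1, i2⟩ := ih' acc h
      have hm : md p.1 = 9 := by rw [md, h3']; rfl
      rw [hm] at h1
      have h5 := h1.2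
      set δ := dS t (sgn sg a ^ c) with hδ
      have hy : ∃ b : ℤ, δ.im = 9 * b ∧ ¬ (3 : ℤ) ∣ b := by
        obtain ⟨e, he⟩ := h5
        refine ⟨3 * e + (s / 3 : ℕ), ?_, ?_⟩
        · simp only [hδ, dS, dl]
          omega
        · omega
      obtain ⟨b, hb, hb3⟩ := hy
      have hco := dS_coprime t (sgn sg a ^ c)
      rw [← hδ] at hco
      have h3n : IsCoprime (3 : ℤ) (nm δ) := by
        rw [Prime.coprime_iff_not_dvd Int.prime_three]
        intro hd
        rw [normDef, hb] at hd
        have h6 : (3 : ℤ) ∣ δ.re ^ 2 := by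
          have := dvd_add hd (Dvd.intro (3 * b * δ.re - 27 * b ^ 2) rfl : (3 : ℤ) ∣ _)
          have e : δ.re ^ 2 - δ.re * (9 * b) + (9 * b) ^ 2 + 3 * (3 * b * δ.re - 27 * b ^ 2) =
            δ.re ^ 2 := by ring
          rwa [e] at this
        have h7 := hco.isUnit_of_dvd' (Int.prime_three.dvd_of_dvd_pow h6)
          ⟨3 * b, by rw [hb]; ring⟩
        rw [Int.isUnit_iff] at h7
        omega
      rw [h3]
      refine ⟨IsCoprime.mul_left (by simpa using h3n.pow_left) i1, fun X hX => ?_⟩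
      have := hX.three hco hb hb3
      rw [map_mul, map_pow]
      rw [Nat.cast_ofNat, this, one_pow, one_mul]
      exact i2 X hX
    · have h3' : Nat.beq p.1 3 = false := by simpa [Bool.eq_false_iff] using h3
      have hm : md p.1 = p.1 := by rw [md, h3']; rfl
      rw [h3', cond_false] at h
      rw [hm] at h1
      obtain ⟨j, hj, hc, hX⟩ := symK_spec h hpr h3 hT h1
      obtain ⟨i1, i2⟩ := ih' _ hj
      refine ⟨IsCoprime.mul_left hc.pow_left i1, fun X hXs => ?_⟩
      rw [map_mul, map_pow, hX X hXs, ← pow_mul]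
      have := i2 X hXs
      rw [pow_add] at this
      intro h'
      apply this
      rw [← h']; ring

/-- One entry of the covering: `(c, sign, i)` stands for the test with `± c` and `M_i`; it applies when
`r ≡ ± c` modulo `2^(i+1)`. -/
def entry (T D : ℕ) (fs1 fs2 : List (ℕ × ℕ)) (x y r : ℕ) (e : ℕ × Bool × ℕ) : Bool :=
  force (2 ^ (e.2.2 + 1)) fun w =>
  (bif e.2.1 then Nat.beq (e.1 % w) (r % w) else Nat.beq ((e.1 + r) % w) 0) &&
    symFs T D e.1 e.2.1 x y (bif Nat.beq e.2.2 1 then fs1 else fs2) 0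

/-- Every class in `cl` of the odd part of `k` is excluded, for the `2`-part given by the state
`x, y`. -/
def cover (T D : ℕ) (fs1 fs2 : List (ℕ × ℕ)) (es : List (ℕ × Bool × ℕ)) (cl : List ℕ) (x y : ℕ) :
    Bool := cl.all fun r => es.any fun e => entry T D fs1 fs2 x y r e

/-- The periodic part of the loop over the `2`-part. -/
def loopB (R D x0 y0 : ℕ) (cov : ℕ → ℕ → Bool) : ℕ → ℕ → ℕ → Bool
  | 0, x, y => Nat.beq x x0 && Nat.beq y y0
  | n + 1, x, y => cov x y && mulK R D 0 x y x y fun xx yy => loopB R D x0 y0 cov n xx yy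

/-- The preperiodic part, followed by the periodic part. -/
def loopA (R D per : ℕ) (cov : ℕ → ℕ → Bool) : ℕ → ℕ → ℕ → Bool
  | 0, x, y => loopB R D x y cov per x y
  | n + 1, x, y => cov x y && mulK R D 0 x y x y fun xx yy => loopA R D per cov n xx yy

/-- Squaring of states. -/
def sqS (R D : ℕ) (p : ℕ × ℕ) : ℕ × ℕ :=
  ((p.1 * p.1 + D * (p.2 * p.2)) % R, (p.1 * p.2 + p.2 * p.1 + 0 * (p.2 * p.2)) % R)

lemma loopB_spec {R D x0 y0 : ℕ} {cov : ℕ → ℕ → Bool} : ∀ n x y,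
    loopB R D x0 y0 cov n x y = true →
    (∀ j < n, cov ((sqS R D)^[j] (x, y)).1 ((sqS R D)^[j] (x, y)).2 = true) ∧
      (sqS R D)^[n] (x, y) = (x0, y0) := by
  intro n
  induction n with
  | zero =>
    intro x y h
    simp only [loopB, Bool.and_eq_true, Nat.beq_eq] at h
    exact ⟨fun j hj => absurd hj (by omega), by rw [h.1, h.2]; rfl⟩
  | succ n ih =>
    intro x y h
    simp only [loopB, Bool.and_eq_true, mulK, force_eq] at h
    obtain ⟨h1, h2⟩ := ih _ _ h.2
    refine ⟨fun j hj => ?_, h2⟩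
    rcases j with _ | j
    · exact h.1
    · exact h1 j (by omega)

lemma loopA_spec {R D per : ℕ} (hper : 0 < per) {cov : ℕ → ℕ → Bool} : ∀ n x y,
    loopA R D per cov n x y = true →
    ∀ j, cov ((sqS R D)^[j] (x, y)).1 ((sqS R D)^[j] (x, y)).2 = true := by
  intro n
  induction n with
  | zero =>
    intro x y h j
    obtain ⟨h1, h2⟩ := loopB_spec _ _ _ h
    have h3 : Function.IsPeriodicPt (sqS R D) per (x, y) := h2
    rw [← h3.iterate_mod_apply j]
    exact h1 _ (Nat.mod_lt _ hper)
  | succ n ih =>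
    intro x y h j
    simp only [loopA, Bool.and_eq_true, mulK, force_eq] at h
    rcases j with _ | j
    · exact h.1
    · exact ih _ _ h.2 j

lemma RepS.iterate {R D : ℕ} {t : ℤ} (hD : (D : ℤ) = Dt t) : ∀ (j : ℕ) {a : Pell.Solution₁ (Dt t)}
    {x y : ℕ}, RepS R a x y →
    RepS R (a ^ 2 ^ j) ((sqS R D)^[j] (x, y)).1 ((sqS R D)^[j] (x, y)).2 := by
  intro j
  induction j with
  | zero => intro a x y h; simpa using h
  | succ j ih =>
    intro a x y h
    have := ih (RepS.mul hD a a x y x y h h)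
    rw [← sq, ← pow_mul, ← pow_succ'] at this
    exact this

/-- The complete covering check. For a nonzero exponent `k = 2^a m` with `m` odd, the state modulo `R`
of `b^(2^a)` runs through an eventually periodic sequence as `a` grows, and for each state every odd
class of `m` modulo `W` is excluded by an entry of `es`. -/
def twoK (T D bx by' R K a1 n per : ℕ) (fs1 fs2 : List (ℕ × ℕ)) (es : List (ℕ × Bool × ℕ))
    (W : ℕ) : Bool :=
  Nat.blt 0 per && Nat.beq (K % 2 ^ a1) 0 &&
  (fs1.all fun p => isPr p.1 && Nat.beq (R % md p.1) 0) &&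
  (fs2.all fun p => isPr p.1 && Nat.beq (R % md p.1) 0) &&
  (es.all fun e => Nat.beq (e.1 % 2) 1 && Nat.beq (K % e.1) 0 &&
    (Nat.beq e.2.2 1 || Nat.beq e.2.2 2) && Nat.beq (W % 2 ^ (e.2.2 + 1)) 0) &&
  Nat.beq (W % 2) 0 && Nat.blt 0 W &&
  powK R D 0 (fun x y => loopA R D per
    (cover T D fs1 fs2 es ((List.range W).filter fun r => Nat.beq (r % 2) 1)) n x y)
    (2 ^ a1) (2 ^ a1) (bx % R) (by' % R) 1 0

/-- For `m = c m'` with `m' ≡ ± 1` modulo `2^(i+1)`, `two_power` applies to `b^(± 2^a c)`, and the computed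
symbol of `M_i` is nontrivial. -/
lemma twoK_spec {T D bx by' R K a1 n per : ℕ} {fs1 fs2 : List (ℕ × ℕ)}
    {es : List (ℕ × Bool × ℕ)} {W : ℕ}
    (h : twoK T D bx by' R K a1 n per fs1 fs2 es W = true) {t : ℤ}
    (hT : (T : ℤ) = t + 3) (hD : (D : ℤ) = Dt t) {b : Pell.Solution₁ (Dt t)} (hbx : b.x = bx)
    (hby : b.y = by') (hK : ∀ k, Cu t b k → (K : ℤ) ∣ k)
    (hf1 : (((fs1.map fun p => p.1 ^ p.2).prod : ℕ) : ℤ) = Mi t 1)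
    (hf2 : (∀ e ∈ es, e.2.2 = 1) ∨ (((fs2.map fun p => p.1 ^ p.2).prod : ℕ) : ℤ) = Mi t 2) :
    ∀ k, Cu t b k → k = 0 := by
  intro k hk
  by_contra hk0
  simp only [twoK, Bool.and_eq_true, List.all_eq_true, Nat.beq_eq, Bool.or_eq_true] at h
  obtain ⟨⟨⟨⟨⟨⟨⟨hper, hKa⟩, hp1⟩, hp2⟩, hes⟩, hW2⟩, hW0⟩, h⟩ := h
  have hper : 0 < per := by simpa [Nat.blt, Nat.succ_le_iff] using hper
  have hW0 : 0 < W := by simpa [Nat.blt, Nat.succ_le_iff] using hW0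
  have hb : RepS R b (bx % R) (by' % R) :=
    ⟨dvd_sub_mod (by rw [hbx, sub_self]; exact dvd_zero _),
      dvd_sub_mod (by rw [hby, sub_self]; exact dvd_zero _)⟩
  obtain ⟨x, y, e1, h1⟩ := hb.pow hD (2 ^ a1) _
  rw [e1] at h
  have hcov := loopA_spec hper _ _ _ h
  have hKk := hK k hk
  -- split `k = 2 ^ a * m` with `m` odd
  obtain ⟨a, m, hm, rfl⟩ : ∃ (a : ℕ) (m : ℤ), ¬ (2 : ℤ) ∣ m ∧ k = 2 ^ a * m := by
    have hfin : FiniteMultiplicity (2 : ℤ) k := Int.finiteMultiplicity_iff.2 ⟨by norm_num, hk0⟩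
    obtain ⟨m, h1, h2⟩ := hfin.exists_eq_pow_mul_and_not_dvd
    exact ⟨_, m, h2, h1⟩
  have ha : a1 ≤ a := by
    have h2 : ((2 ^ a1 : ℕ) : ℤ) ∣ 2 ^ a * m :=
      (Int.natCast_dvd_natCast.2 (Nat.dvd_of_mod_eq_zero hKa)).trans hKk
    by_contra hlt
    push Not at hlt
    have h3 : (2 : ℤ) ^ (a + 1) ∣ 2 ^ a * m := by
      refine dvd_trans ?_ h2
      push_cast
      exact pow_dvd_pow _ hlt
    rw [pow_succ] at h3
    exact hm ((mul_dvd_mul_iff_left (by positivity)).1 h3)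
  obtain ⟨j, rfl⟩ := Nat.exists_eq_add_of_le ha
  have hst := RepS.iterate hD j h1
  rw [← pow_mul, ← pow_add] at hst
  have hc := hcov j
  set X0 := ((sqS R D)^[j] (x, y)).1
  set Y0 := ((sqS R D)^[j] (x, y)).2
  have hr0 := Int.emod_nonneg m (b := W) (by omega)
  have hr1 := Int.emod_lt_of_pos m (b := W) (by omega)
  obtain ⟨r, hr⟩ := Int.eq_ofNat_of_zero_le hr0
  have hrm : (W : ℤ) ∣ m - r := by rw [← hr]; exact Int.dvd_self_sub_emod
  rw [cover, List.all_eq_true] at hc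
  have hc := hc r (by
    have h2W : (2 : ℤ) ∣ W := by exact_mod_cast Nat.dvd_of_mod_eq_zero hW2
    have := h2W.trans hrm
    simp only [List.mem_filter, List.mem_range, Nat.beq_eq]
    omega)
  rw [List.any_eq_true] at hc
  obtain ⟨⟨c, sg, i⟩, he, hc⟩ := hc
  obtain ⟨⟨⟨hc2, hcK⟩, hi⟩, hWi⟩ := hes _ he
  simp only [entry, force_eq, Bool.and_eq_true] at hc
  simp only at hc2 hcK hi hWi
  obtain ⟨hcl, hsym⟩ := hc
  -- the signed `c`
  obtain ⟨z, hz, hzc⟩ : ∃ z : ℤ, ((2 : ℤ) ^ (i + 1) ∣ m - z) ∧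
      ((sg = true ∧ z = c) ∨ (sg = false ∧ z = -c)) := by
    have hw : (2 : ℤ) ^ (i + 1) ∣ m - r :=
      dvd_trans (by exact_mod_cast Nat.dvd_of_mod_eq_zero hWi) hrm
    cases sg
    · refine ⟨-c, ?_, Or.inr ⟨rfl, rfl⟩⟩
      rw [cond_false, Nat.beq_eq] at hcl
      have h2 : (2 : ℤ) ^ (i + 1) ∣ (c + r : ℤ) := by
        exact_mod_cast Nat.dvd_of_mod_eq_zero hcl
      have := dvd_add hw h2
      have e : m - r + (c + r) = m - -(c : ℤ) := by ring
      rwa [e] at this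
    · refine ⟨c, ?_, Or.inl ⟨rfl, rfl⟩⟩
      rw [cond_true, Nat.beq_eq] at hcl
      have h2 : ((2 ^ (i + 1) : ℕ) : ℤ) ∣ (r : ℤ) - c := Nat.modEq_iff_dvd.1 hcl
      push_cast at h2
      have := dvd_add hw h2
      have e : m - r + (r - c) = m - (c : ℤ) := by ring
      rwa [e] at this
  have hzm : z ∣ m := by
    have h2 : (c : ℤ) ∣ 2 ^ (a1 + j) * m :=
      (Int.natCast_dvd_natCast.2 (Nat.dvd_of_mod_eq_zero hcK)).trans hKk
    have h3 : IsCoprime (c : ℤ) (2 ^ (a1 + j)) := by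
      apply IsCoprime.pow_right
      exact ⟨1, -(c / 2 : ℕ), by omega⟩
    have h4 := h3.dvd_of_dvd_mul_left h2
    rcases hzc with ⟨-, rfl⟩ | ⟨-, rfl⟩
    · exact h4
    · exact (neg_dvd).2 h4
  obtain ⟨m', rfl⟩ := hzm
  have hm' : (2 : ℤ) ^ (i + 1) ∣ m' - 1 := by
    have h3 : IsCoprime ((2 : ℤ) ^ (i + 1)) z := by
      apply IsCoprime.pow_left
      have : z % 2 = 1 := by rcases hzc with ⟨-, rfl⟩ | ⟨-, rfl⟩ <;> omega
      exact ⟨-(z / 2), 1, by omega⟩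
    refine h3.dvd_of_dvd_mul_left (?_ : _ ∣ z * (m' - 1))
    rwa [mul_sub, mul_one]
  obtain ⟨u, hu⟩ := hm'
  set A := sgn sg (b ^ 2 ^ (a1 + j)) ^ c with hA
  have hA' : A = b ^ ((2 : ℤ) ^ (a1 + j) * z) := by
    rcases hzc with ⟨rfl, rfl⟩ | ⟨rfl, rfl⟩
    · rw [hA, sgn, cond_true, ← pow_mul, ← zpow_natCast]; push_cast; rfl
    · rw [hA, sgn, cond_false, inv_pow, ← pow_mul, ← zpow_natCast, ← zpow_neg]; push_cast
      congr 1; ring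
  have hkA : A * (A ^ 2 ^ i) ^ (2 * u) = b ^ ((2 : ℤ) ^ (a1 + j) * (z * m')) := by
    rw [hA', ← zpow_natCast, ← zpow_mul, ← zpow_mul, ← zpow_add]
    congr 1
    push_cast
    rw [pow_succ] at hu
    linear_combination (-(2 : ℤ) ^ (a1 + j) * z) * hu
  obtain ⟨β, hβ⟩ := hk
  rw [← hkA] at hβ
  obtain ⟨X, hX⟩ := exists_symbol (dS t A) (dS_coprime t A) (dS_three t A)
  rcases hi with rfl | rfl
  · obtain ⟨s1, s2⟩ := symFs_spec hT hD hst fs1 0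
      (fun p hp => ⟨isPr_spec (hp1 p hp).1, Nat.dvd_of_mod_eq_zero (hp1 p hp).2⟩) hsym
    have s3 := s2 X hX
    rw [hf1] at s1 s3
    rw [pow_zero, mul_one] at s3
    exact s3 (two_power A 1 (Or.inl rfl) u hβ hX s1)
  · have hf2 := hf2.resolve_left (fun h' => absurd (h' _ he) (by simp))
    obtain ⟨s1, s2⟩ := symFs_spec hT hD hst fs2 0
      (fun p hp => ⟨isPr_spec (hp2 p hp).1, Nat.dvd_of_mod_eq_zero (hp2 p hp).2⟩) hsym
    have s3 := s2 X hX
    rw [hf2] at s1 s3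
    rw [pow_zero, mul_one] at s3
    exact s3 (two_power A 2 (Or.inr rfl) u hβ hX s1)

/-! ### Certificates -/

/-- The Pell data of a small parameter: `u, v` is the fundamental solution, and the sieve `sv`
bounds the exponents of cubes to multiples of the product of its moduli. -/
def baseK (T D u v L : ℕ) (ls : List (ℕ × ℕ)) (sv : List (ℕ × List ℕ)) : Bool :=
  Nat.beq (u * u) (D * (v * v) + 1) && Nat.blt 1 u && Nat.blt 0 v && genK D u L ls &&
    sieveK T D u v 1 sv

lemma baseK_spec {T D u v L : ℕ} {ls : List (ℕ × ℕ)} {sv : List (ℕ × List ℕ)}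
    (h : baseK T D u v L ls sv = true) {t : ℤ} (hT : (T : ℤ) = t + 3) (hD : (D : ℤ) = Dt t) :
    ∃ b : Pell.Solution₁ (Dt t), b.x = u ∧ b.y = v ∧ 1 < u ∧ 0 < v ∧
      (∀ a : Pell.Solution₁ (Dt t), ∃ k : ℤ, a = b ^ k ∨ a = -b ^ k) ∧
      ∀ k, Cu t b k → (((sv.map Prod.fst).prod : ℕ) : ℤ) ∣ k := by
  simp only [baseK, Bool.and_eq_true, Nat.beq_eq] at h
  obtain ⟨⟨⟨⟨h1, h2⟩, h3⟩, h4⟩, h5⟩ := h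
  have h2 : 1 < u := by simpa [Nat.blt, Nat.succ_le_iff] using h2
  have h3 : 0 < v := by simpa [Nat.blt, Nat.succ_le_iff] using h3
  have h1' : (u : ℤ) ^ 2 - Dt t * (v : ℤ) ^ 2 = 1 := by
    rw [← hD]
    have : (u * u : ℤ) = D * (v * v) + 1 := by exact_mod_cast h1
    linear_combination this
  refine ⟨Pell.Solution₁.mk u v h1', Pell.Solution₁.x_mk .., Pell.Solution₁.y_mk .., h2, h3,
    fun a => ?_, ?_⟩
  · exact genK_spec h4 hD _ (Pell.Solution₁.x_mk ..) h2
      (by rw [Pell.Solution₁.y_mk]; exact_mod_cast h3) a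
  · have := sieveK_spec hT hD (Pell.Solution₁.x_mk u v h1') (Pell.Solution₁.y_mk u v h1') sv 1 h5
      (fun k _ => by simp)
    simpa using this

/-- Product of a factorisation. -/
def prK : List (ℕ × ℕ) → ℕ → ℕ
  | [], a => a
  | p :: l, a => prK l (a * p.1 ^ p.2)

lemma prK_spec : ∀ (l : List (ℕ × ℕ)) (a : ℕ),
    prK l a = a * (l.map fun p => p.1 ^ p.2).prod := by
  intro l
  induction l with
  | nil => intro a; simp [prK]
  | cons p l ih => intro a; rw [prK, ih, List.map_cons, List.prod_cons, mul_assoc]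

/-- Full certificate for one parameter `t` by the covering with cubic symbols. -/
def certK (t u v L : ℕ) (ls : List (ℕ × ℕ)) (sv : List (ℕ × List ℕ)) (R a1 n per : ℕ)
    (fs1 fs2 : List (ℕ × ℕ)) (es : List (ℕ × Bool × ℕ)) (W : ℕ) : Bool :=
  baseK (t + 3) (t * t + 3 * t + 9) u v L ls sv &&
  Nat.beq (prK fs1 1) (2 * t + 3) &&
  ((es.all fun e => Nat.beq e.2.2 1) || Nat.beq (prK fs2 1) (2 * (2 * t + 3) ^ 2 + 27)) &&
  twoK (t + 3) (t * t + 3 * t + 9) u v R (sv.map Prod.fst).prod a1 n per fs1 fs2 es W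

lemma certK_spec {t u v L : ℕ} {ls : List (ℕ × ℕ)} {sv : List (ℕ × List ℕ)} {R a1 n per : ℕ}
    {fs1 fs2 : List (ℕ × ℕ)} {es : List (ℕ × Bool × ℕ)} {W : ℕ}
    (h : certK t u v L ls sv R a1 n per fs1 fs2 es W = true) : NoCube (t : ℤ) := by
  simp only [certK, Bool.and_eq_true, Nat.beq_eq, Bool.or_eq_true, List.all_eq_true] at h
  obtain ⟨⟨⟨h1, h2⟩, h3⟩, h4⟩ := h
  have hT : ((t + 3 : ℕ) : ℤ) = (t : ℤ) + 3 := by push_cast; ring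
  have hD : ((t * t + 3 * t + 9 : ℕ) : ℤ) = Dt t := by push_cast; ring
  obtain ⟨b, hx, hy, -, -, hg, hK⟩ := baseK_spec h1 hT hD
  refine noCube_of hg (twoK_spec h4 hT hD hx hy hK ?_ ?_)
  · rw [prK_spec, one_mul] at h2
    rw [h2, Mi, if_pos rfl]; push_cast; ring
  · rcases h3 with h3 | h3
    · exact Or.inl h3
    · right
      rw [prK_spec, one_mul] at h3
      rw [h3, Mi, if_neg (by decide)]; push_cast; ring

/-! ### Small parameters settled by cubic symbols -/

lemma noCube_4 : NoCube 4 :=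
  certK_spec (t := 4) (u := 73) (v := 12) (L := 3) (ls := [(2, 5)]) (sv := []) (R := 11) (a1 := 0)
    (n := 0) (per := 4) (fs1 := [(11, 1)]) (fs2 := []) (es := [(1, true, 1), (1, false, 1)]) (W :=
    4)
    (by decide +kernel)

lemma noCube_6 : NoCube 6 :=
  certK_spec (t := 6) (u := 8) (v := 1) (L := 2) (ls := []) (sv := [(3, [5]), (5, [31]), (7, [41,
    13])]) (R := 2385) (a1 := 0) (n := 2) (per := 12) (fs1 := [(3, 1), (5, 1)]) (fs2 := [(3, 2),
    (53, 1)]) (es := [(3, true, 2), (3, false, 2), (15, true, 2), (15, false, 2), (105, true, 2),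
    (105, false, 2), (21, true, 2), (21, false, 2)]) (W := 8)
    (by decide +kernel)

lemma noCube_7 : NoCube 7 :=
  certK_spec (t := 7) (u := 80) (v := 9) (L := 3) (ls := [(2, 2)]) (sv := [(3, [53])]) (R := 17)
    (a1 := 0) (n := 0) (per := 6) (fs1 := [(17, 1)]) (fs2 := []) (es := [(3, true, 1), (3, false,
    1)]) (W := 4)
    (by decide +kernel)

lemma noCube_8 : NoCube 8 :=
  certK_spec (t := 8) (u := 62809633) (v := 6377352) (L := 8) (ls := [(2, 5), (3, 5), (5, 11), (7,
    13)]) (sv := [(3, [5])]) (R := 19) (a1 := 0) (n := 2) (per := 4) (fs1 := [(19, 1)]) (fs2 :=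
    []) (es := [(1, true, 1), (1, false, 1), (3, true, 1), (3, false, 1)]) (W := 4)
    (by decide +kernel)

lemma noCube_9 : NoCube 9 :=
  certK_spec (t := 9) (u := 649) (v := 60) (L := 3) (ls := [(2, 5)]) (sv := [(7, [43]), (11, [23,
    461])]) (R := 6363) (a1 := 0) (n := 3) (per := 20) (fs1 := [(3, 1), (7, 1)]) (fs2 := [(3, 2),
    (101, 1)]) (es := [(1, true, 2), (1, false, 2), (11, true, 2), (11, false, 2), (7, true, 2),
    (7, false, 2), (77, true, 2), (77, false, 2)]) (W := 8)
    (by decide +kernel)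

lemma noCube_10 : NoCube 10 :=
  certK_spec (t := 10) (u := 77563250) (v := 6578829) (L := 8) (ls := [(2, 2), (3, 11), (5, 41),
    (7, 29)]) (sv := [(3, [11, 43])]) (R := 23) (a1 := 0) (n := 0) (per := 10) (fs1 := [(23, 1)])
    (fs2 := []) (es := [(1, true, 1), (1, false, 1), (3, true, 1), (3, false, 1)]) (W := 4)
    (by decide +kernel)

lemma noCube_11 : NoCube 11 :=
  certK_spec (t := 11) (u := 64080026) (v := 5019135) (L := 8) (ls := [(2, 2), (3, 7), (5, 29),
    (7, 13)]) (sv := [(3, [83, 3929]), (3, [17]), (5, [31, 89]), (11, [23, 67])]) (R := 6385) (a1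
    := 0) (n := 2) (per := 140) (fs1 := [(5, 2)]) (fs2 := [(1277, 1)]) (es := [(1, false, 2), (1,
    true, 2), (11, false, 2), (3, true, 2), (11, true, 2), (9, true, 2), (33, false, 2), (99,
    false, 2), (55, false, 2), (9, false, 2), (5, false, 2), (33, true, 2), (15, true, 2), (15,
    false, 2), (99, true, 2)]) (W := 8)
    (by decide +kernel)

lemma noCube_13 : NoCube 13 :=
  certK_spec (t := 13) (u := 3844063) (v := 260952) (L := 6) (ls := [(2, 5), (3, 5), (5, 19)]) (sv
    := [(3, [5])]) (R := 29) (a1 := 0) (n := 0) (per := 4) (fs1 := [(29, 1)]) (fs2 := []) (es :=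
    [(1, true, 1), (1, false, 1), (3, true, 1), (3, false, 1)]) (W := 4)
    (by decide +kernel)

lemma noCube_14 : NoCube 14 :=
  certK_spec (t := 14) (u := 85292) (v := 5427) (L := 5) (ls := [(2, 2), (3, 5)]) (sv := [(3,
    [5]), (3, [37]), (5, [11, 59]), (7, [421])]) (R := 60419) (a1 := 0) (n := 5) (per := 243) (fs1
    := [(31, 1)]) (fs2 := [(1949, 1)]) (es := [(1, false, 2), (1, true, 2), (3, true, 2), (3,
    false, 2), (7, false, 2), (7, true, 2), (21, true, 2), (5, false, 2), (21, false, 2), (5,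
    true, 2), (15, false, 2), (9, false, 2), (35, false, 2), (45, false, 2), (63, false, 2), (15,
    true, 2), (105, true, 2)]) (W := 8)
    (by decide +kernel)

lemma noCube_15 : NoCube 15 :=
  certK_spec (t := 15) (u := 1520) (v := 91) (L := 3) (ls := [(2, 2)]) (sv := [(3, [3041])]) (R :=
    99) (a1 := 0) (n := 1) (per := 12) (fs1 := [(3, 1), (11, 1)]) (fs2 := []) (es := [(3, true,
    1), (3, false, 1)]) (W := 4)
    (by decide +kernel)

lemma noCube_17 : NoCube 17 :=
  certK_spec (t := 17) (u := 169648201) (v := 9081060) (L := 7) (ls := [(2, 7), (3, 11), (5, 31)])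
    (sv := []) (R := 37) (a1 := 0) (n := 1) (per := 2) (fs1 := [(37, 1)]) (fs2 := []) (es := [(1,
    true, 1), (1, false, 1)]) (W := 4)
    (by decide +kernel)

lemma noCube_18 : NoCube 18 :=
  certK_spec (t := 18) (u := 3482) (v := 177) (L := 3) (ls := [(2, 2)]) (sv := []) (R := 117) (a1
    := 0) (n := 2) (per := 2) (fs1 := [(3, 1), (13, 1)]) (fs2 := []) (es := [(1, true, 1), (1,
    false, 1)]) (W := 4)
    (by decide +kernel)

lemma noCube_19 : NoCube 19 :=
  certK_spec (t := 19) (u := 62) (v := 3) (L := 2) (ls := []) (sv := [(3, [5]), (3, [19]), (3,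
    [15013]), (5, [11, 101]), (7, [7, 71])]) (R := 138949) (a1 := 0) (n := 2) (per := 330) (fs1 :=
    [(41, 1)]) (fs2 := [(3389, 1)]) (es := [(1, true, 2), (1, false, 2), (3, false, 2), (5, false,
    2), (9, false, 2), (7, false, 2), (3, true, 2), (21, true, 2), (35, true, 2), (7, true, 2),
    (9, true, 2), (27, false, 2), (15, false, 2), (27, true, 2), (5, true, 2), (63, true, 2), (45,
    true, 2), (63, false, 2), (15, true, 2)]) (W := 8)
    (by decide +kernel)

lemma noCube_20 : NoCube 20 :=
  certK_spec (t := 20) (u := 137215) (v := 6336) (L := 4) (ls := [(2, 5), (3, 32)]) (sv := [(2,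
    [5]), (5, [1741])]) (R := 43) (a1 := 0) (n := 0) (per := 10) (fs1 := [(43, 1)]) (fs2 := [])
    (es := [(1, true, 1), (1, false, 1), (5, true, 1), (5, false, 1)]) (W := 4)
    (by decide +kernel)

lemma noCube_22 : NoCube 22 :=
  certK_spec (t := 22) (u := 506568295) (v := 21425556) (L := 7) (ls := [(2, 5), (3, 23), (5,
    11)]) (sv := [(3, [23, 1613])]) (R := 47) (a1 := 0) (n := 1) (per := 11) (fs1 := [(47, 1)])
    (fs2 := []) (es := [(1, true, 1), (1, false, 1), (3, true, 1), (3, false, 1)]) (W := 4)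
    (by decide +kernel)

lemma noCube_23 : NoCube 23 :=
  certK_spec (t := 23) (u := 164076033968) (v := 6659640783) (L := 9) (ls := [(2, 2), (3, 5), (5,
    19), (7, 127)]) (sv := [(3, [5]), (5, [691]), (7, [167, 127])]) (R := 33803) (a1 := 0) (n :=
    2) (per := 20) (fs1 := [(7, 2)]) (fs2 := [(11, 1), (439, 1)]) (es := [(1, false, 2), (3, true,
    2), (1, true, 2), (21, true, 2), (7, false, 2), (3, false, 2), (35, true, 2), (15, true, 2),
    (5, false, 2), (5, true, 2), (15, false, 2), (105, false, 2)]) (W := 8)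
    (by decide +kernel)

lemma noCube_24 : NoCube 24 :=
  certK_spec (t := 24) (u := 2281249) (v := 89000) (L := 5) (ls := [(2, 5), (3, 11)]) (sv := [(11,
    [463, 14389]), (2, [43]), (2, [7]), (2, [751]), (3, [11]), (3, [17]), (2, [3167]), (5, [29]),
    (7, [71, 13]), (13, [79, 103, 467])]) (R := 153) (a1 := 0) (n := 1) (per := 6) (fs1 := [(3,
    1), (17, 1)]) (fs2 := []) (es := [(3, true, 1), (3, false, 1)]) (W := 4)
    (by decide +kernel)

lemma noCube_25 : NoCube 25 :=
  certK_spec (t := 25) (u := 665782673992201) (v := 25003993164540) (L := 11) (ls := [(2, 13), (3,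
    7), (5, 11), (7, 29)]) (sv := [(5, [11, 109])]) (R := 53) (a1 := 0) (n := 1) (per := 6) (fs1
    := [(53, 1)]) (fs2 := []) (es := [(1, true, 1), (1, false, 1), (5, true, 1), (5, false, 1)])
    (W := 4)
    (by decide +kernel)

lemma noCube_26 : NoCube 26 :=
  certK_spec (t := 26) (u := 719724601) (v := 26055780) (L := 7) (ls := [(2, 11), (3, 13), (5,
    11)]) (sv := []) (R := 55) (a1 := 0) (n := 1) (per := 4) (fs1 := [(5, 1), (11, 1)]) (fs2 :=
    []) (es := [(1, true, 1), (1, false, 1)]) (W := 4)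
    (by decide +kernel)

lemma noCube_27 : NoCube 27 :=
  certK_spec (t := 27) (u := 1574) (v := 55) (L := 3) (ls := [(2, 2)]) (sv := [(3, [47, 67]), (7,
    [167, 7])]) (R := 171) (a1 := 0) (n := 2) (per := 12) (fs1 := [(3, 1), (19, 1)]) (fs2 := [])
    (es := [(3, true, 1), (3, false, 1), (21, true, 1), (21, false, 1)]) (W := 4)
    (by decide +kernel)

lemma noCube_28 : NoCube 28 :=
  certK_spec (t := 28) (u := 116476476553) (v := 3933131148) (L := 8) (ls := [(2, 5), (3, 5), (5,
    19), (7, 13)]) (sv := [(3, [5]), (5, [31, 6521])]) (R := 59) (a1 := 0) (n := 0) (per := 28)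
    (fs1 := [(59, 1)]) (fs2 := []) (es := [(1, true, 1), (1, false, 1), (3, true, 1), (3, false,
    1), (5, true, 1), (5, false, 1)]) (W := 4)
    (by decide +kernel)

lemma noCube_29 : NoCube 29 :=
  certK_spec (t := 29) (u := 480644425002415999597113107233) (v := 15701968936415353889062192632)
    (L := 20) (ls := [(2, 5), (3, 5), (5, 31), (7, 29), (11, 43), (13, 131), (17, 67), (19, 113)])
    (sv := []) (R := 61) (a1 := 0) (n := 0) (per := 4) (fs1 := [(61, 1)]) (fs2 := []) (es := [(1,
    true, 1), (1, false, 1)]) (W := 4)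
    (by decide +kernel)

lemma noCube_31 : NoCube 31 :=
  certK_spec (t := 31) (u := 1745324831097224) (v := 53531527412685) (L := 11) (ls := [(2, 2), (3,
    11), (5, 31), (7, 43)]) (sv := [(2, [2]), (3, [41]), (3, [73]), (5, [139]), (7, [43])]) (R :=
    78715) (a1 := 0) (n := 2) (per := 14) (fs1 := [(5, 1), (13, 1)]) (fs2 := [(7, 2), (173, 1)])
    (es := [(3, true, 2), (1, false, 2), (3, false, 2), (1, true, 2), (63, true, 2), (63, false,
    2), (5, true, 2), (5, false, 2), (9, true, 2)]) (W := 8)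
    (by decide +kernel)

lemma noCube_32 : NoCube 32 :=
  certK_spec (t := 32) (u := 56449) (v := 1680) (L := 4) (ls := [(2, 11), (3, 11)]) (sv := [(3,
    [17])]) (R := 67) (a1 := 0) (n := 2) (per := 8) (fs1 := [(67, 1)]) (fs2 := []) (es := [(3,
    true, 1), (3, false, 1)]) (W := 4)
    (by decide +kernel)

lemma noCube_33 : NoCube 33 :=
  certK_spec (t := 33) (u := 2588599) (v := 74820) (L := 5) (ls := [(2, 5), (3, 86)]) (sv := [(5,
    [11, 31])]) (R := 207) (a1 := 0) (n := 1) (per := 10) (fs1 := [(3, 1), (23, 1)]) (fs2 := [])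
    (es := [(1, true, 1), (1, false, 1), (5, true, 1), (5, false, 1)]) (W := 4)
    (by decide +kernel)

lemma noCube_34 : NoCube 34 :=
  certK_spec (t := 34) (u := 625514462) (v := 17573127) (L := 6) (ls := [(2, 2), (3, 5), (5, 19)])
    (sv := [(3, [5]), (5, [61])]) (R := 71) (a1 := 0) (n := 1) (per := 12) (fs1 := [(71, 1)]) (fs2
    := []) (es := [(1, true, 1), (1, false, 1), (3, true, 1), (3, false, 1), (5, true, 1), (5,
    false, 1)]) (W := 4)
    (by decide +kernel)

lemma noCube_35 : NoCube 35 :=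
  certK_spec (t := 35) (u := 150175) (v := 4104) (L := 4) (ls := [(2, 5), (3, 7)]) (sv := [(2,
    [5])]) (R := 73) (a1 := 1) (n := 2) (per := 2) (fs1 := [(73, 1)]) (fs2 := []) (es := [(1,
    true, 1), (1, false, 1)]) (W := 4)
    (by decide +kernel)

lemma noCube_36 : NoCube 36 :=
  certK_spec (t := 36) (u := 46698728731849) (v := 1242321430740) (L := 9) (ls := [(2, 5), (3,
    22685), (5, 11), (7, 41)]) (sv := [(2, [59]), (5, [101]), (11, [67, 89])]) (R := 56385) (a1 :=
    1) (n := 2) (per := 4) (fs1 := [(3, 1), (5, 2)]) (fs2 := [(3, 2), (7, 1), (179, 1)]) (es :=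
    [(1, false, 2), (5, true, 2), (5, false, 2), (1, true, 2), (55, false, 2)]) (W := 8)
    (by decide +kernel)

lemma noCube_37 : NoCube 37 :=
  certK_spec (t := 37) (u := 19794264626972449) (v := 512970066248280) (L := 11) (ls := [(2, 7),
    (3, 17), (5, 11), (7, 13)]) (sv := [(3, [4957]), (3, [17]), (2, [251]), (2, [263]), (5, [11]),
    (7, [13, 41])]) (R := 77) (a1 := 1) (n := 2) (per := 4) (fs1 := [(7, 1), (11, 1)]) (fs2 := [])
    (es := [(1, true, 1), (1, false, 1)]) (W := 4)
    (by decide +kernel)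

lemma noCube_38 : NoCube 38 :=
  certK_spec (t := 38) (u := 2634128) (v := 66543) (L := 5) (ls := [(2, 2), (3, 5)]) (sv := []) (R
    := 79) (a1 := 0) (n := 2) (per := 4) (fs1 := [(79, 1)]) (fs2 := []) (es := [(1, true, 1), (1,
    false, 1)]) (W := 4)
    (by decide +kernel)

lemma noCube_40 : NoCube 40 :=
  certK_spec (t := 40) (u := 44611924489705) (v := 1072885712316) (L := 9) (ls := [(2, 5), (3,
    17), (5, 29), (7, 41)]) (sv := [(5, [151]), (3, [29])]) (R := 83) (a1 := 0) (n := 1) (per :=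
    20) (fs1 := [(83, 1)]) (fs2 := []) (es := [(1, true, 1), (1, false, 1), (3, true, 1), (3,
    false, 1)]) (W := 4)
    (by decide +kernel)

lemma noCube_41 : NoCube 41 :=
  certK_spec (t := 41) (u := 1555849) (v := 36540) (L := 4) (ls := [(2, 5), (3, 73)]) (sv := [])
    (R := 85) (a1 := 0) (n := 1) (per := 2) (fs1 := [(5, 1), (17, 1)]) (fs2 := []) (es := [(1,
    true, 1), (1, false, 1)]) (W := 4)
    (by decide +kernel)

lemma noCube_42 : NoCube 42 :=
  certK_spec (t := 42) (u := 278354373650) (v := 6387568451) (L := 7) (ls := [(2, 2), (3, 7), (5,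
    19)]) (sv := [(7, [41, 83]), (3, [337])]) (R := 261) (a1 := 0) (n := 1) (per := 12) (fs1 :=
    [(3, 1), (29, 1)]) (fs2 := []) (es := [(3, true, 1), (3, false, 1), (21, true, 1), (21, false,
    1)]) (W := 4)
    (by decide +kernel)

lemma noCube_43 : NoCube 43 :=
  certK_spec (t := 43) (u := 2163842) (v := 48543) (L := 4) (ls := [(2, 2), (3, 5)]) (sv := [(3,
    [5])]) (R := 89) (a1 := 0) (n := 1) (per := 12) (fs1 := [(89, 1)]) (fs2 := []) (es := [(3,
    true, 1), (3, false, 1)]) (W := 4)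
    (by decide +kernel)

lemma noCube_44 : NoCube 44 :=
  certK_spec (t := 44) (u := 109506943) (v := 2402832) (L := 5) (ls := [(2, 5), (3, 5)]) (sv :=
    [(3, [5]), (3, [233]), (5, [11, 89]), (7, [41, 43])]) (R := 1509599) (a1 := 0) (n := 3) (per
    := 12) (fs1 := [(7, 1), (13, 1)]) (fs2 := [(53, 1), (313, 1)]) (es := [(1, true, 2), (7, true,
    2), (3, true, 2), (5, true, 2), (9, true, 2), (3, false, 2), (35, true, 2), (1, false, 2),
    (35, false, 2), (63, true, 2), (5, false, 2), (15, false, 2), (9, false, 2), (21, true, 2),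
    (21, false, 2), (63, false, 2)]) (W := 8)
    (by decide +kernel)

lemma noCube_46 : NoCube 46 :=
  certK_spec (t := 46) (u := 110888) (v := 2331) (L := 4) (ls := [(2, 2), (3, 5)]) (sv := [(5,
    [41, 239])]) (R := 95) (a1 := 0) (n := 2) (per := 4) (fs1 := [(5, 1), (19, 1)]) (fs2 := [])
    (es := [(5, true, 1), (5, false, 1)]) (W := 4)
    (by decide +kernel)

lemma noCube_47 : NoCube 47 :=
  certK_spec (t := 47) (u := 8127739376) (v := 167342325) (L := 6) (ls := [(2, 2), (3, 37), (5,
    11)]) (sv := [(5, [19]), (3, [61]), (7, [41, 13])]) (R := 1827965) (a1 := 0) (n := 5) (per :=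
    52) (fs1 := [(97, 1)]) (fs2 := [(5, 1), (3769, 1)]) (es := [(1, true, 2), (1, false, 2), (3,
    true, 2), (3, false, 2), (35, false, 2), (15, true, 2), (15, false, 2), (35, true, 2), (5,
    true, 2), (5, false, 2), (7, true, 2), (7, false, 2), (21, true, 2), (21, false, 2)]) (W := 8)
    (by decide +kernel)

lemma noCube_49 : NoCube 49 :=
  certK_spec (t := 49) (u := 3776076546774119988466249) (v := 74675033397151470164700) (L := 15)
    (ls := [(2, 5), (3, 98098025), (5, 11), (7, 41), (11, 43), (13, 53)]) (sv := []) (R := 101)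
    (a1 := 0) (n := 1) (per := 8) (fs1 := [(101, 1)]) (fs2 := []) (es := [(1, true, 1), (1, false,
    1)]) (W := 4)
    (by decide +kernel)

lemma noCube_50 : NoCube 50 :=
  certK_spec (t := 50) (u := 3258468890) (v := 63190881) (L := 6) (ls := [(2, 2), (3, 11), (5,
    19)]) (sv := [(3, [11])]) (R := 103) (a1 := 0) (n := 3) (per := 12) (fs1 := [(103, 1)]) (fs2
    := []) (es := [(1, true, 1), (1, false, 1), (3, true, 1), (3, false, 1)]) (W := 4)
    (by decide +kernel)

lemma noCube_52 : NoCube 52 :=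
  certK_spec (t := 52) (u := 191619922383199) (v := 3577464936120) (L := 9) (ls := [(2, 7), (3,
    13), (5, 11), (7, 43)]) (sv := [(5, [11, 1789]), (3, [29])]) (R := 107) (a1 := 0) (n := 0)
    (per := 52) (fs1 := [(107, 1)]) (fs2 := []) (es := [(1, true, 1), (1, false, 1), (3, true, 1),
    (3, false, 1), (5, true, 1), (5, false, 1)]) (W := 4)
    (by decide +kernel)

lemma noCube_53 : NoCube 53 :=
  certK_spec (t := 53) (u := 7612693410902648186499768709633) (v :=
    139524001217788678984104604512) (L := 18) (ls := [(2, 5), (3, 5), (5, 19), (7, 83), (11, 67),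
    (13, 53), (17, 101)]) (sv := []) (R := 109) (a1 := 0) (n := 0) (per := 6) (fs1 := [(109, 1)])
    (fs2 := []) (es := [(1, true, 1), (1, false, 1)]) (W := 4)
    (by decide +kernel)

lemma noCube_54 : NoCube 54 :=
  certK_spec (t := 54) (u := 130576328) (v := 2350153) (L := 5) (ls := [(2, 2), (3, 5)]) (sv :=
    [(3, [5])]) (R := 333) (a1 := 0) (n := 2) (per := 6) (fs1 := [(3, 1), (37, 1)]) (fs2 := [])
    (es := [(3, true, 1), (3, false, 1)]) (W := 4)
    (by decide +kernel)

lemma noCube_55 : NoCube 55 :=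
  certK_spec (t := 55) (u := 14583769822945) (v := 257847355224) (L := 8) (ls := [(2, 5), (3, 13),
    (5, 11), (7, 29)]) (sv := [(5, [4799])]) (R := 113) (a1 := 0) (n := 1) (per := 18) (fs1 :=
    [(113, 1)]) (fs2 := []) (es := [(1, true, 1), (1, false, 1), (5, true, 1), (5, false, 1)]) (W
    := 4)
    (by decide +kernel)

lemma noCube_56 : NoCube 56 :=
  certK_spec (t := 56) (u := 3685675113245512376543102238770368200726192730064006996280001822849)
    (v := 64033366076938119044927701134973013709865177455727990600085692560) (L := 38) (ls := [(2,
    5), (3, 7), (5, 41), (7, 13), (11, 23), (13, 131), (17, 67), (19, 37), (23, 139), (29, 59),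
    (31, 433), (37, 73)]) (sv := [(3, [733])]) (R := 115) (a1 := 0) (n := 1) (per := 10) (fs1 :=
    [(5, 1), (23, 1)]) (fs2 := []) (es := [(1, true, 1), (1, false, 1), (3, true, 1), (3, false,
    1)]) (W := 4)
    (by decide +kernel)

lemma noCube_58 : NoCube 58 :=
  certK_spec (t := 58) (u := 11564162672696455361227802) (v := 194170656064482167068443) (L := 15)
    (ls := [(2, 2), (3, 5), (5, 11), (7, 13), (11, 109), (13, 53)]) (sv := [(2, [2])]) (R := 119)
    (a1 := 1) (n := 2) (per := 2) (fs1 := [(7, 1), (17, 1)]) (fs2 := []) (es := [(1, true, 1), (1,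
    false, 1)]) (W := 4)
    (by decide +kernel)

lemma noCube_59 : NoCube 59 :=
  certK_spec (t := 59) (u := 297026) (v := 4905) (L := 4) (ls := [(2, 2), (3, 13)]) (sv := []) (R
    := 11) (a1 := 0) (n := 1) (per := 4) (fs1 := [(11, 2)]) (fs2 := []) (es := [(1, true, 1), (1,
    false, 1)]) (W := 4)
    (by decide +kernel)

/-! ### The hypergeometric method after a sieve -/

/-- The factor `W`, the loss from the twist, is absorbed by the `N`-th power of the margin below `8/5`. -/
lemma decay_small (N : ℕ) (hN : 2800 ≤ N) (β W : ℝ) (h0 : 0 ≤ β) (hβ : β ≤ 1584 / 1000)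
    (hW0 : 0 ≤ W) (hW : W ≤ 10 ^ 11) : (1 + 4004 / 1000 * W) * β ^ N < (8 / 5) ^ N := by
  have h1 : β ^ N ≤ (99 / 100) ^ N * (8 / 5) ^ N := by
    rw [← mul_pow]; exact pow_le_pow_left₀ h0 (by linarith) N
  have h2 : ((99 : ℝ) / 100) ^ N ≤ (1 / 2) ^ 40 := by
    obtain ⟨r, rfl⟩ := Nat.exists_eq_add_of_le (show 70 * 40 ≤ N by omega)
    rw [pow_add, pow_mul]
    have h3 : ((99 : ℝ) / 100) ^ r ≤ 1 := pow_le_one₀ (by norm_num) (by norm_num)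
    have h4 : ((99 : ℝ) / 100) ^ 70 ≤ 1 / 2 := by norm_num
    calc (((99 : ℝ) / 100) ^ 70) ^ 40 * (99 / 100) ^ r ≤ (((99 : ℝ) / 100) ^ 70) ^ 40 * 1 := by
          gcongr
      _ ≤ (1 / 2) ^ 40 := by rw [mul_one]; gcongr
  have hp : (0 : ℝ) < (8 / 5) ^ N := by positivity
  calc (1 + 4004 / 1000 * W) * β ^ N
      ≤ (1 + 4004 / 1000 * 10 ^ 11) * ((1 / 2) ^ 40 * (8 / 5) ^ N) := by
        gcongr
        exact h1.trans (by gcongr)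
    _ = ((1 + 4004 / 1000 * 10 ^ 11) * (1 / 2) ^ 40) * (8 / 5) ^ N := by ring
    _ < 1 * (8 / 5) ^ N := by
        apply mul_lt_mul_of_pos_right _ hp
        norm_num
    _ = _ := one_mul _

lemma decay_big (N : ℕ) (hN : 2800 ≤ N) (β W : ℝ) (h0 : 0 ≤ β) (hβ : β ≤ 1550 / 1000)
    (hW0 : 0 ≤ W) (hW : W ≤ 10 ^ 25) : (1 + 4004 / 1000 * W) * β ^ N < (8 / 5) ^ N := by
  have h1 : β ^ N ≤ (31 / 32) ^ N * (8 / 5) ^ N := by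
    rw [← mul_pow]; exact pow_le_pow_left₀ h0 (by linarith) N
  have h2 : ((31 : ℝ) / 32) ^ N ≤ (1 / 2) ^ 100 := by
    obtain ⟨r, rfl⟩ := Nat.exists_eq_add_of_le (show 22 * 100 ≤ N by omega)
    rw [pow_add, pow_mul]
    have h3 : ((31 : ℝ) / 32) ^ r ≤ 1 := pow_le_one₀ (by norm_num) (by norm_num)
    have h4 : ((31 : ℝ) / 32) ^ 22 ≤ 1 / 2 := by norm_num
    calc (((31 : ℝ) / 32) ^ 22) ^ 100 * (31 / 32) ^ r ≤ (((31 : ℝ) / 32) ^ 22) ^ 100 * 1 := by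
          gcongr
      _ ≤ (1 / 2) ^ 100 := by rw [mul_one]; gcongr
  have hp : (0 : ℝ) < (8 / 5) ^ N := by positivity
  calc (1 + 4004 / 1000 * W) * β ^ N
      ≤ (1 + 4004 / 1000 * 10 ^ 25) * ((1 / 2) ^ 100 * (8 / 5) ^ N) := by
        gcongr
        exact h1.trans (by gcongr)
    _ = ((1 + 4004 / 1000 * 10 ^ 25) * (1 / 2) ^ 100) * (8 / 5) ^ N := by ring
    _ < 1 * (8 / 5) ^ N := by
        apply mul_lt_mul_of_pos_right _ hp
        norm_num
    _ = _ := one_mul _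

/-- A cube `δ(b ^ k) = β ^ 3` with `K ∣ k ≠ 0` has `β` of large norm: `27 u ^ (2K) ≤ 4 D N(β) ^ 3`. -/
lemma norm_large {t : ℤ} {b : Pell.Solution₁ (Dt t)} {u K : ℕ} (hbx : b.x = u) (hu : 1 < u)
    (hy : 0 < b.y) (hD : 0 < Dt t) {k : ℤ} (hk : (K : ℤ) ∣ k) (hk0 : k ≠ 0) {β : Eis}
    (hβ : dS t (b ^ k) = β ^ 3) : 27 * (u : ℤ) ^ (2 * K) ≤ 4 * Dt t * nm β ^ 3 := by
  have hx0 : 0 < b.x := by rw [hbx]; exact_mod_cast (by omega : 0 < u)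
  have hA : (u : ℤ) ^ K ≤ (b ^ k).x := by
    have hK : K ≤ k.natAbs :=
      Nat.le_of_dvd (by omega) (by simpa using Int.natAbs_dvd_natAbs.2 hk)
    have h1 := (x_pow_ge hx0 hy.le hD.le k.natAbs).1
    have h2 : (b ^ k).x = (b ^ k.natAbs).x := by
      rcases Int.natAbs_eq k with h | h
      · conv_lhs => rw [h, zpow_natCast]
      · conv_lhs => rw [h, zpow_neg, zpow_natCast, Pell.Solution₁.x_inv]
    rw [h2]
    refine le_trans ?_ h1
    rw [hbx]
    exact pow_le_pow_right₀ (by exact_mod_cast hu.le) hK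
  have h3 : nm β ^ 3 = nm (dl t (b ^ k).x (b ^ k).y) := by rw [← map_pow, ← hβ]; rfl
  rw [h3, nm_dl]
  have h4 : ((u : ℤ) ^ K) ^ 2 ≤ (b ^ k).x ^ 2 := pow_le_pow_left₀ (by positivity) hA 2
  rw [mul_comm 2 K, pow_mul]
  generalize (b ^ k).x = A at *
  generalize (b ^ k).y = B at *
  have h5 : 4 * (t ^ 2 + 3 * t + 9) * (A ^ 2 + (2 * t + 3) * A * B + (t ^ 2 + 3 * t + 9) * B ^ 2) =
    27 * A ^ 2 + (2 * (t ^ 2 + 3 * t + 9) * B + (2 * t + 3) * A) ^ 2 := by ring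
  have h6 := sq_nonneg (2 * (t ^ 2 + 3 * t + 9) * B + (2 * t + 3) * A)
  show _ ≤ 4 * (t ^ 2 + 3 * t + 9) * _
  linarith

/-- Numerical conditions for the hypergeometric method with `ξ = x + 3 M ω`, starting size
`g ^ N`, `g = G / 1000`, `N = p n`, and quality `β = B / 1000`. -/
def archOK (D u : ℕ) (x M w : ℤ) (n p q L G B : ℕ) : Prop :=
  0 < M ∧ 0 < 2 * x - 3 * M ∧ x ^ 2 - x * (3 * M) + (3 * M) ^ 2 ≤ (L : ℤ) ^ 2 ∧ 2000 ≤ G ∧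
  27 * M ^ 2 * G ≤ 2 * (2 * x - 3 * M) * B ∧ 4 * 10 ^ 9 * L ≤ B * G ^ 2 ∧
  27 * M ^ 2 ≤ 2 * (2 * x - 3 * M) ∧ 2 * M * G ≤ 1000 * (2 * x - 3 * M) ∧
  ((B ≤ 1584 ∧ |w| ≤ 10 ^ 11) ∨ (B ≤ 1550 ∧ |w| ≤ 10 ^ 25)) ∧ 2800 ≤ p * n ∧
  2 * G ^ (3 * p) ≤ 1000 ^ (3 * p) * u ^ (2 * q) ∧ 4 * D ≤ 27 * 2 ^ n

instance (D u : ℕ) (x M w : ℤ) (n p q L G B : ℕ) : Decidable (archOK D u x M w n p q L G B) := by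
  unfold archOK; infer_instance

/-- A cube `δ(b^k) = β³` gives the approximation `η = σ β̄²` (or `σ β²`) to the cube root attached to `ξ`,
a twist of `λ` or `λ̄` by the cube of `σ`. If `k ≠ 0` is divisible by the large number `q n`, then `η`
is beyond the range that `base_no` allows. -/
theorem arch {t : ℤ} {b : Pell.Solution₁ (Dt t)} {u D n q : ℕ} (hbx : b.x = u) (hu : 1 < u)
    (hy : 0 < b.y) (hD : (D : ℤ) = Dt t) (hD0 : 0 < D)
    (hK : ∀ k, Cu t b k → ((q * n : ℕ) : ℤ) ∣ k)
    {x M w : ℤ} {σ : Eis} {p L G B : ℕ} (hσ : σ ≠ 0)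
    (hξ : (⟨x, 3 * M⟩ : Eis) * σ ^ 3 = (w : Eis) * lam t ∨
      (⟨x, 3 * M⟩ : Eis) * σ ^ 3 = (w : Eis) * star (lam t))
    (h : archOK D u x M w n p q L G B) : ∀ k, Cu t b k → k = 0 := by
  intro k hk
  by_contra hk0
  have hKk := hK k hk
  obtain ⟨β, hβ⟩ := hk
  obtain ⟨hM, hs, hL, hG, ha, hb, hM2, hMg, hBw, hN, hst, hn⟩ := h
  have hDt : 0 < Dt t := by rw [← hD]; exact_mod_cast hD0
  have hlarge := norm_large hbx hu hy hDt hKk hk0 hβ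
  rw [← hD] at hlarge
  have him := im_pow t (b ^ k).x (b ^ k).y β (b ^ k).prop hβ
  set γ : Eis := star β ^ 2 with hγ
  -- the approximation, with its norm
  obtain ⟨η, hη, hηn⟩ : ∃ η : Eis, |((⟨x, 3 * M⟩ : Eis) * η ^ 3).im| ≤ 3 * |w| ∧
      nm η = nm σ * nm β ^ 2 := by
    have him2 : ∀ z : Eis, ((w : Eis) * z).im = w * z.im := by
      intro z; simp [QuadraticAlgebra.im_mul]
    rcases hξ with hξ | hξ
    · refine ⟨σ * γ, ?_, by rw [map_mul, hγ, map_pow, nm_star]⟩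
      rw [mul_pow, ← mul_assoc, hξ, mul_assoc, him2, him, abs_mul]
      norm_num; linarith
    · refine ⟨σ * star γ, ?_, by rw [map_mul, nm_star, hγ, map_pow, nm_star]⟩
      rw [mul_pow, ← mul_assoc, hξ, mul_assoc, him2, ← star_pow, ← star_mul', 
        QuadraticAlgebra.im_star, him, abs_mul]
      norm_num; linarith
  have hσ1 : 1 ≤ nm σ := by
    have := norm_nonneg σ
    rcases eq_or_lt_of_le this with h | h
    · exact absurd (norm_eq_zero h.symm) hσ
    · omega
  set N := p * n with hNdef
  have hGr : (2 : ℝ) ≤ G / 1000 := by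
    have : (2000 : ℝ) ≤ G := by exact_mod_cast hG
    linarith
  have hstart : ((G : ℝ) / 1000) ^ N ≤ ‖toC η‖ := by
    have h1 : ((G : ℝ) / 1000) ^ N ≤ nm β := by
      refine le_of_pow_le_pow_left₀ (n := 3) (by norm_num)
        (by exact_mod_cast norm_nonneg β) ?_
      have h2 : (2 * ((G : ℝ) / 1000) ^ (3 * p)) ≤ (u : ℝ) ^ (2 * q) := by
        have : (2 * (G : ℝ) ^ (3 * p)) ≤ 1000 ^ (3 * p) * (u : ℝ) ^ (2 * q) := by
          exact_mod_cast hst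
        rw [div_pow, mul_div_assoc', div_le_iff₀ (by positivity)]
        linarith
      have h3 := pow_le_pow_left₀ (by positivity) h2 n
      rw [mul_pow, ← pow_mul, ← pow_mul] at h3
      have h4 : (27 * (u : ℝ) ^ (2 * (q * n))) ≤ 4 * D * (nm β : ℝ) ^ 3 := by
        exact_mod_cast hlarge
      have h5 : (4 * (D : ℝ)) ≤ 27 * 2 ^ n := by exact_mod_cast hn
      rw [← pow_mul, show N * 3 = 3 * p * n by rw [hNdef]; ring]
      rw [show 2 * (q * n) = 2 * q * n by ring] at h4
      have hD0' : (0 : ℝ) < 4 * D := by positivity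
      have h6 : (4 * (D : ℝ)) * ((G : ℝ) / 1000) ^ (3 * p * n) ≤ 4 * D * (nm β : ℝ) ^ 3 := by
        calc (4 * (D : ℝ)) * ((G : ℝ) / 1000) ^ (3 * p * n)
            ≤ 27 * 2 ^ n * ((G : ℝ) / 1000) ^ (3 * p * n) := by gcongr
          _ = 27 * (2 ^ n * ((G : ℝ) / 1000) ^ (3 * p * n)) := by ring
          _ ≤ 27 * (u : ℝ) ^ (2 * q * n) := by gcongr
          _ ≤ _ := h4
      exact le_of_mul_le_mul_left h6 hD0'
    refine h1.trans ?_
    refine le_of_pow_le_pow_left₀ (n := 2) (by norm_num) (_root_.norm_nonneg _) ?_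
    rw [← Complex.normSq_eq_norm_sq, toC_normSq, hηn]
    have : nm β ^ 2 ≤ nm σ * nm β ^ 2 := le_mul_of_one_le_left (sq_nonneg _) hσ1
    exact_mod_cast this
  have hw0 : (0 : ℝ) ≤ ((|w| : ℤ) : ℝ) := by exact_mod_cast abs_nonneg w
  refine base_no ⟨x, 3 * M⟩ η M |w| L (G / 1000) (B / 1000) N hN hM rfl hs hη ?_ (by positivity) ?_
    hGr ?_ ?_ hM2 ?_ ?_ ?_ hstart
  · rcases hBw with h | h
    · exact h.2.trans (by norm_num)
    · exact h.2
  · rw [normDef]; exact_mod_cast hL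
  · have : (27 * (M : ℝ) ^ 2 * G) ≤ 2 * (2 * x - 3 * M) * B := by exact_mod_cast ha
    show 27 * (M : ℝ) ^ 2 * (G / 1000) ≤ 2 * (2 * x - 3 * M) * (B / 1000)
    linarith
  · have : (4 * 10 ^ 9 * (L : ℝ)) ≤ B * G ^ 2 := by exact_mod_cast hb
    have e : (B : ℝ) / 1000 * (G / 1000) ^ 2 = B * G ^ 2 / 10 ^ 9 := by ring
    rw [e, le_div_iff₀ (by norm_num)]
    linarith
  · have : (2 * (M : ℝ) * G) ≤ 1000 * (2 * x - 3 * M) := by exact_mod_cast hMg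
    show 2 * (M : ℝ) * (G / 1000) ≤ 2 * x - 3 * M
    linarith
  · have : (B : ℝ) ≤ 1600 := by
      have : B ≤ 1600 := by omega
      exact_mod_cast this
    linarith
  · rcases hBw with h | h
    · refine decay_small N hN _ _ (by positivity) ?_ hw0 (by exact_mod_cast h.2)
      have : (B : ℝ) ≤ 1584 := by exact_mod_cast h.1
      linarith
    · refine decay_big N hN _ _ (by positivity) ?_ hw0 (by exact_mod_cast h.2)
      have : (B : ℝ) ≤ 1550 := by exact_mod_cast h.1
      linarith

/-! ### Small parameters settled by the hypergeometric method -/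

/-- The identity `ξ σ³ = w λ`, or `ξ σ³ = w λ̄` if `cj` holds, in coordinates
(`ξ = x + 3 M ω`, `σ = a + c ω`). -/
def twistOK (t x M w a c : ℤ) (cj : Bool) : Prop :=
  x * (a ^ 3 - 3 * a * c ^ 2 + c ^ 3) - 3 * M * (3 * a ^ 2 * c - 3 * a * c ^ 2) =
      (bif cj then w * t else w * (t + 3)) ∧
  x * (3 * a ^ 2 * c - 3 * a * c ^ 2) + 3 * M * (a ^ 3 - 3 * a * c ^ 2 + c ^ 3) -
      3 * M * (3 * a ^ 2 * c - 3 * a * c ^ 2) = (bif cj then - (w * 3) else w * 3)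

instance (t x M w a c : ℤ) (cj : Bool) : Decidable (twistOK t x M w a c cj) := by
  unfold twistOK; infer_instance

lemma twistOK_spec {t x M w a c : ℤ} {cj : Bool} (h : twistOK t x M w a c cj) :
    (⟨x, 3 * M⟩ : Eis) * (⟨a, c⟩ : Eis) ^ 3 = (w : Eis) * lam t ∨
      (⟨x, 3 * M⟩ : Eis) * (⟨a, c⟩ : Eis) ^ 3 = (w : Eis) * star (lam t) := by
  obtain ⟨h1, h2⟩ := h
  cases cj
  · left
    rw [cond_false] at h1 h2
    ext
    · simp [lam, pow_succ]
      linear_combination h1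
    · simp [lam, pow_succ]
      linear_combination h2
  · right
    rw [cond_true] at h1 h2
    ext
    · simp [lam, pow_succ]
      linear_combination h1
    · simp [lam, pow_succ]
      linear_combination h2

/-- Full certificate for one parameter `t` by the hypergeometric method. -/
lemma noCube_arch {t : ℤ} (T D u v L : ℕ) (ls : List (ℕ × ℕ)) (sv : List (ℕ × List ℕ))
    (x M w a c : ℤ) (cj : Bool) (n p q Λ G B : ℕ)
    (h : (T : ℤ) = t + 3 ∧ (D : ℤ) = Dt t ∧ 0 < D ∧ baseK T D u v L ls sv = true ∧
      (sv.map Prod.fst).prod = q * n ∧ a ≠ 0 ∧ twistOK t x M w a c cj ∧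
      archOK D u x M w n p q Λ G B) : NoCube t := by
  obtain ⟨hT, hD, hD0, hb, hK, ha, htw, har⟩ := h
  obtain ⟨b, hx, hy, hu, hv, hg, hk⟩ := baseK_spec hb hT hD
  rw [hK] at hk
  refine noCube_of hg (arch hx hu (by rw [hy]; exact_mod_cast hv) hD hD0 hk (σ := ⟨a, c⟩) ?_
    (twistOK_spec htw) har)
  intro h0
  exact ha (congrArg QuadraticAlgebra.re h0)

lemma noCube_neg_one : NoCube (-1) :=
  noCube_arch 2 7 8 3 3 [(2, 2)] [(2, [2]), (3, [5]), (3, [37]), (5, [31, 89]), (2, [79]), (2,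
    [863]), (7, [7, 13]), (11, [43, 199])] 1262 1 (-226981) (-9) (-4) false 2772 2 10 1261 56430
    1584
    (by decide +kernel)

lemma noCube_1 : NoCube 1 :=
  noCube_arch 4 13 649 180 5 [(2, 5), (3, 5)] [(2, [11]), (2, [7]), (2, [673]), (3, [71, 1297]),
    (3, [3457]), (5, [61, 89]), (7, [41, 43]), (11, [23, 197])] 769634 5 (-592324949671) (-157)
    (-43) false 2772 2 10 769627 1409303 1550
    (by decide +kernel)

lemma noCube_2 : NoCube 2 :=
  noCube_arch 5 19 170 39 4 [(2, 2), (3, 11)] [(2, [2]), (2, [23]), (3, [11]), (2, [47]), (3,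
    [397]), (5, [29]), (7, [71]), (11, [43, 67])] 2392 1 (-300763) (-7) 2 true 2772 2 10 2391
    77704 1584
    (by decide +kernel)

lemma noCube_3 : NoCube 3 :=
  noCube_arch 6 27 26 5 2 [] [(2, [2]), (2, [7]), (2, [97]), (3, [17]), (3, [109]), (5, [11, 19]),
    (7, [139, 41]), (11, [43, 197])] 57 1 1029 4 (-1) true 2772 2 10 56 11892 1584
    (by decide +kernel)

lemma noCube_12 : NoCube 12 :=
  noCube_arch 15 189 55 4 2 [] [(2, [5]), (2, [23]), (2, [17]), (3, [37]), (3, [53]), (5, [41,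
    179]), (7, [7, 127]), (11, [89, 67, 197])] 1262 1 (-226981) (-13) 1 true 2772 2 10 1261 56430
    1584
    (by decide +kernel)

lemma noCube_16 : NoCube 16 :=
  noCube_arch 19 313 32188120829134849 1819380158564160 14 [(2, 5), (3, 13), (5, 11), (7, 41),
    (11, 43), (13, 79)] [(2, [137]), (3, [131]), (3, [19]), (2, [647]), (2, [47]), (5, [11, 89]),
    (7, [41, 113])] 8265140332 95 (-218250934032230533) (-753) 44 true 2520 2 1 8265140190
    146045863 1550
    (by decide +kernel)

lemma noCube_21 : NoCube 21 :=
  noCube_arch 24 513 13771351 608020 6 [(2, 7), (3, 151), (5, 41)] [(2, [11]), (2, [23]), (2,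
    [127]), (3, [73]), (3, [271, 1297]), (5, [41]), (7, [29, 71])] 28737 5 (-14480427) 23 22 true
    1260 3 2 28730 269353 1584
    (by decide +kernel)

lemma noCube_30 : NoCube 30 :=
  noCube_arch 33 999 102688615 3248924 6 [(2, 5), (3, 295), (5, 11)] [(2, [5]), (2, [23]), (2,
    [17]), (3, [73]), (3, [53]), (5, [11, 179]), (7, [41, 113]), (11, [109])] 316552704816 61
    (-902753287102671032847) (-4411) 142 true 2772 2 10 316552704725 903830851 1550
    (by decide +kernel)

lemma noCube_39 : NoCube 39 :=
  noCube_arch 42 1647 487 12 2 [] [(3, [5]), (3, [73]), (7, [3499, 43]), (2, [29]), (2, [71]), (2,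
    [17]), (5, [59, 269]), (11, [67, 89])] 99923 3 (-163667323) (-40) 1 true 2772 2 10 99919
    502316 1584
    (by decide +kernel)

lemma noCube_45 : NoCube 45 :=
  noCube_arch 48 2169 10085143557001249 216547068348200 10 [(2, 7), (3, 17), (5, 19), (7, 13)]
    [(2, [11]), (2, [7]), (3, [97]), (5, [19]), (7, [337, 13])] 48 1 1 1 0 false 420 7 1 47 10895
    1584
    (by decide +kernel)

lemma noCube_48 : NoCube 48 :=
  noCube_arch 51 2457 1536960151 31007020 6 [(2, 7), (3, 727), (5, 29)] [(2, [727]), (2, [23]),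
    (3, [19, 73]), (3, [53]), (5, [31, 29]), (7, [7, 71]), (2, [673])] 51 1 1 1 0 false 2520 2 1
    50 11237 1584
    (by decide +kernel)

lemma noCube_51 : NoCube 51 :=
  noCube_arch 54 2763 88529282 1684211 5 [(2, 2), (3, 5)] [(2, [2]), (2, [167]), (3, [5]), (3,
    [937]), (2, [2017]), (5, [29]), (7, [83, 13])] 54 1 1 1 0 false 2520 2 1 53 11569 1584
    (by decide +kernel)

lemma noCube_57 : NoCube 57 :=
  noCube_arch 60 3429 4182710455 71428916 6 [(2, 5), (3, 1015), (5, 31)] [(2, [5]), (3, [19]), (2,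
    [71]), (2, [47]), (3, [10369]), (5, [31, 61]), (7, [41, 139])] 60 1 1 1 0 false 2520 2 1 59
    12207 1584
    (by decide +kernel)

lemma noCube_60 : NoCube 60 :=
  noCube_arch 63 3789 3879474045914926879468217167061449 63024665317279673626833260235420 19 [(2,
    13), (3, 98985356861), (5, 19), (7, 13), (11, 43), (13, 79), (17, 103)] [(2, [59]), (2, [17]),
    (3, [53]), (5, [29]), (7, [41])] 63 1 1 1 0 false 420 7 1 62 12513 1584
    (by decide +kernel)

/-! ### All parameters -/

theorem noCube_all (t : ℤ) (ht : -1 ≤ t) (h0 : t ≠ 0) (h5 : t ≠ 5) : NoCube t := by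
  rcases le_or_gt 61 t with h | h
  · exact noCube_large t h
  interval_cases t
  · exact noCube_neg_one
  · exact absurd rfl h0
  · exact noCube_1
  · exact noCube_2
  · exact noCube_3
  · exact noCube_4
  · exact absurd rfl h5
  · exact noCube_6
  · exact noCube_7
  · exact noCube_8
  · exact noCube_9
  · exact noCube_10
  · exact noCube_11
  · exact noCube_12
  · exact noCube_13
  · exact noCube_14
  · exact noCube_15
  · exact noCube_16
  · exact noCube_17
  · exact noCube_18
  · exact noCube_19
  · exact noCube_20
  · exact noCube_21
  · exact noCube_22
  · exact noCube_23
  · exact noCube_24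
  · exact noCube_25
  · exact noCube_26
  · exact noCube_27
  · exact noCube_28
  · exact noCube_29
  · exact noCube_30
  · exact noCube_31
  · exact noCube_32
  · exact noCube_33
  · exact noCube_34
  · exact noCube_35
  · exact noCube_36
  · exact noCube_37
  · exact noCube_38
  · exact noCube_39
  · exact noCube_40
  · exact noCube_41
  · exact noCube_42
  · exact noCube_43
  · exact noCube_44
  · exact noCube_45
  · exact noCube_46
  · exact noCube_47
  · exact noCube_48
  · exact noCube_49
  · exact noCube_50
  · exact noCube_51
  · exact noCube_52
  · exact noCube_53
  · exact noCube_54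
  · exact noCube_55
  · exact noCube_56
  · exact noCube_57
  · exact noCube_58
  · exact noCube_59
  · exact noCube_60

end

/-- All integer solutions of the simplest sextic Thue equation `F_t^{(6)}(x,y) = ±1`
for `t ∉ {-8, -3, 0, 5}` (Lettl–Pethő–Voutier, Hoshi). -/
theorem simplest_sextic_thue_integers (t : ℤ) (ht : t ≠ -8 ∧ t ≠ -3 ∧ t ≠ 0 ∧ t ≠ 5)
    (x y : ℤ) :
    (F6 t x y = 1 ∨ F6 t x y = -1) ↔
      ((x, y) = (1, 0) ∨ (x, y) = (-1, 0) ∨ (x, y) = (0, 1) ∨ (x, y) = (0, -1) ∨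
        (x, y) = (1, -1) ∨ (x, y) = (-1, 1)) := by
  exact reduction noCube_all t ht x y
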